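/- Case D: Let l be a prime with l ≡ 3 (mod 4) and l > 3, let r ≥ 1, and let N = 2 l^r (so p is odd). Assume f = φ(N)/2, and set h = h(Q(√-l)). If l ≡ 7 (mod 8) then G(χ) = (-1)^{r(p-1)/2} · √p* · p^{(f-1)/2}. If l ≡ 3 (mod 8) then there exist integers a, b with 4p^h = a² + l b² and a ≡ -2 p^{(l-1+2h)/4} (mod l) such that G(χ) = (-1)^{(r+1)(p-1)/2} · √p* · p^{(f-1)/2 - h} · ((a + b √-l)/2)². -/

import Mathlib

open Complex Polynomial IntermediateField

/-- The complex primitive `p`-th root of unity `exp(2πi/p)`. -/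
noncomputable def zetaP (p : ℕ) : ℂ := Complex.exp (2 * Real.pi * Complex.I / p)

/-- The Gauss sum `G(χ^λ) = ∑_{x ∈ F, x ≠ 0} χ^λ(x) ζ_p^{T(x)}`, where
`T` is the trace map from `F` down to `ZMod p`. -/
noncomputable def gaussSumN (p : ℕ) {F : Type} [Field F] [Fintype F] [Algebra (ZMod p) F]
    (χ : MulChar F ℂ) (lam : ℕ) : ℂ :=
  letI : DecidableEq F := Classical.decEq F
  ∑ x ∈ Finset.univ.filter (fun x : F => x ≠ 0),
    (χ ^ lam) x * zetaP p ^ (Algebra.trace (ZMod p) F x).val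

/-- `√-m = i√m ∈ ℂ`. -/
noncomputable def sqrtNeg (m : ℕ) : ℂ := Real.sqrt m * Complex.I

theorem sqrtNeg_sq (m : ℕ) : sqrtNeg m ^ 2 = -(m : ℂ) := by
  have h : ((Real.sqrt m : ℝ) : ℂ) ^ 2 = ((m : ℝ) : ℂ) := by
    rw [← Complex.ofReal_pow, Real.sq_sqrt (by positivity)]
  simp only [sqrtNeg, mul_pow, Complex.I_sq, h]
  push_cast
  ring

theorem isIntegral_sqrtNeg (m : ℕ) : IsIntegral ℚ (sqrtNeg m) := by
  refine ⟨X ^ 2 + C (m : ℚ), monic_X_pow_add_C _ (by norm_num), ?_⟩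
  simp [sqrtNeg_sq]

/-- The class number `h(ℚ(√-m))` of the quadratic field `ℚ(√-m) ⊆ ℂ`. -/
noncomputable def classNumSqrtNeg (m : ℕ) : ℕ :=
  haveI : FiniteDimensional ℚ ℚ⟮sqrtNeg m⟯ :=
    IntermediateField.adjoin.finiteDimensional (isIntegral_sqrtNeg m)
  haveI : CharZero ℚ⟮sqrtNeg m⟯ :=
    charZero_of_injective_algebraMap (algebraMap ℚ ℚ⟮sqrtNeg m⟯).injective
  haveI : NumberField ℚ⟮sqrtNeg m⟯ := ⟨⟩
  NumberField.classNumber ℚ⟮sqrtNeg m⟯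

/-- `√p* = √p` if `p ≡ 1 (mod 4)` and `i√p` if `p ≡ 3 (mod 4)`. -/
noncomputable def sqrtPStar (p : ℕ) : ℂ :=
  if p % 4 = 1 then (Real.sqrt p : ℂ) else (Real.sqrt p : ℂ) * Complex.I

/-!
Write `χ = ψη` with `η` the quadratic character of `F` and `ψ` of order `l ^ r`. Since `p - 1` is
prime to `l`, `ψ` is trivial on the prime field, so the duplication formula reads
`G(χ) G(ψ) = G(η) G(ψ²)`; and `G(η) = √p* ^ f` because `F` has odd degree over its prime field.
The powers of `p` have index two in the units modulo `l ^ r` and are exactly the squares, so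
`G(ψ ^ c)` is `G(ψ)` or its complex conjugate according to the Legendre symbol of `c` modulo `l`.
For `c = 2` this gives `G(χ) = √p* ^ f` when `l ≡ 7 (mod 8)`, and
`G(χ) = √p* ^ f · conj G(ψ) / G(ψ)` when `l ≡ 3 (mod 8)`.

In the second case `G(ψ)` lies in `ℚ(√-l)` and has absolute value squared `p ^ f`. At a valuation
above `p` with Teichmüller character `ω`, the sum `G(ω⁻¹)` is as divisible as `1 - ζ_p`, and because
Jacobi sums are integral it follows that `G(ω⁻ᵃ)` is at most as divisible as `(1 - ζ_p) ^ s(a)` for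
`s(a)` the `p`-adic digit sum of `a`. This is half of Stickelberger's theorem, and it suffices: as
`G(ψ) G(ψ⁻¹)` is `p ^ f` up to sign, it bounds the divisibility of `G(ψ)` from below. The digit sums
reduce to sums over the squares and the nonsquares modulo `l`, which Dirichlet's formula
`h l = |∑ (a / l) a|` evaluates, so `p ^ ((f - h) / 2)` divides `G(ψ)`. The quotient is an integer
`(a + b √-l) / 2` of norm `p ^ h`; the congruence holds for `a` or for `-a`, and changing the signs
of both `a` and `b` does not affect the square.
-/

section TraceCharacter

variable {p : ℕ} [Fact p.Prime]

theorem isPrimitiveRoot_zetaP (n : ℕ) [NeZero n] : IsPrimitiveRoot (zetaP n) n :=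
  Complex.isPrimitiveRoot_exp n (NeZero.ne n)

variable (p) in
/-- The canonical additive character `x ↦ ζ_p ^ Tr(x)` of a field of characteristic `p`. -/
noncomputable def traceAddChar (F : Type*) [Field F] [Algebra (ZMod p) F] : AddChar F ℂ :=
  (AddChar.zmodChar p (isPrimitiveRoot_zetaP p).pow_eq_one).compAddMonoidHom
    (Algebra.trace (ZMod p) F).toAddMonoidHom

theorem traceAddChar_apply {F : Type*} [Field F] [Algebra (ZMod p) F] (x : F) :
    traceAddChar p F x = zetaP p ^ (Algebra.trace (ZMod p) F x).val := by
  simp [traceAddChar, AddChar.zmodChar_apply]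

theorem gaussSumN_one {F : Type} [Field F] [Algebra (ZMod p) F] [Fintype F] (χ : MulChar F ℂ) :
    gaussSumN p χ 1 = gaussSum χ (traceAddChar p F) := by
  unfold gaussSumN gaussSum
  rw [Finset.sum_filter]
  refine Finset.sum_congr rfl fun x _ => ?_
  rw [traceAddChar_apply, pow_one]
  split_ifs with h
  · rfl
  · rw [not_not.1 h, MulChar.map_zero, zero_mul]

variable {F : Type*} [Field F] [Algebra (ZMod p) F] [Finite F]

theorem traceAddChar_ne_one : traceAddChar p F ≠ 1 := by
  intro h
  obtain ⟨x, hx⟩ := Algebra.trace_surjective (ZMod p) F 1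
  have hp := (Fact.out : p.Prime).one_lt
  have : Fact (1 < p) := ⟨hp⟩
  have h1 := traceAddChar_apply (p := p) x
  rw [h, hx, ZMod.val_one, AddChar.one_apply, pow_one] at h1
  exact (isPrimitiveRoot_zetaP p).ne_one hp h1.symm

theorem isPrimitive_traceAddChar : (traceAddChar p F).IsPrimitive :=
  AddChar.IsPrimitive.of_ne_one traceAddChar_ne_one

theorem traceAddChar_pow_p (x : F) : traceAddChar p F (x ^ p) = traceAddChar p F x := by
  have hx := Algebra.trace_eq_of_algEquiv (FiniteField.frobeniusAlgEquivOfAlgebraic (ZMod p) F) x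
  simp only [traceAddChar_apply]
  congr 2
  simpa [ZMod.card] using hx

theorem gaussSum_traceAddChar_pow_p {F : Type*} [Field F] [Algebra (ZMod p) F] [Fintype F]
    (χ : MulChar F ℂ) (k : ℕ) :
    gaussSum (χ ^ p ^ k) (traceAddChar p F) = gaussSum χ (traceAddChar p F) := by
  have : CharP F p := charP_of_injective_algebraMap (algebraMap (ZMod p) F).injective p
  induction k generalizing χ with
  | zero => rw [pow_zero, pow_one]
  | succ k ih =>
    rw [pow_succ', pow_mul, ih, gaussSum, gaussSum, ← (frobeniusEquiv F p).toEquiv.sum_comp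
      fun x => χ x * traceAddChar p F x]
    refine Finset.sum_congr rfl fun x _ => ?_
    have hx : (frobeniusEquiv F p).toEquiv x = x ^ p := frobeniusEquiv_apply F p x
    rw [hx, map_pow, traceAddChar_pow_p, MulChar.pow_apply' _ (NeZero.ne p)]

end TraceCharacter

section ValuationSubrings

open IsLocalRing

variable {K : Type*} [Field K]

theorem isIntegral_int_of_forall_mem_valuationSubring {x : K}
    (h : ∀ V : ValuationSubring K, x ∈ V) : IsIntegral ℤ x := by
  have hx : x ∈ (integralClosure (Subring.closure (∅ : Set K)) K).toSubring := by
    rw [← iInf_valuationSubring_superset, Subring.mem_iInf]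
    exact fun V => h V.1
  have hintegral : Algebra.IsIntegral ℤ (Subring.closure (∅ : Set K)) := by
    refine ⟨fun ⟨y, hy⟩ => ?_⟩
    obtain ⟨n, rfl⟩ := Subring.mem_bot.1 (Subring.closure_empty (R := K) ▸ hy)
    exact isIntegral_algebraMap (x := n)
  exact isIntegral_trans x hx

theorem mem_valuationSubring_of_pow_eq_one (V : ValuationSubring K) {z : K} {n : ℕ} (hn : 0 < n)
    (hz : z ^ n = 1) : z ∈ V := by
  have hintegral : IsIntegral V z := IsIntegral.of_pow hn (hz ▸ isIntegral_one)
  obtain ⟨y, rfl⟩ := IsIntegrallyClosed.isIntegral_iff.1 hintegral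
  exact y.2

theorem mulChar_apply_mem_valuationSubring {F : Type*} [Field F] [Finite F]
    (V : ValuationSubring K) (χ : MulChar F K) (x : F) : χ x ∈ V := by
  have := Fintype.ofFinite F
  rcases eq_or_ne x 0 with rfl | hx
  · rw [MulChar.map_zero]
    exact V.zero_mem
  · refine mem_valuationSubring_of_pow_eq_one V (n := Fintype.card F - 1)
      (Nat.sub_pos_of_lt Fintype.one_lt_card) ?_
    rw [← map_pow, FiniteField.pow_card_sub_one_eq_one x hx, map_one]

theorem residue_natCast_eq_zero {V : ValuationSubring K} {n : ℕ}
    (hV : V.valuation (n : K) < 1) : (n : ResidueField V) = 0 := by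
  rw [← map_natCast (residue V), residue_eq_zero_iff, ValuationSubring.valuation_lt_one_iff]
  exact hV

variable [IsAlgClosed K]

instance isAlgClosed_residueField_valuationSubring (V : ValuationSubring K) :
    IsAlgClosed (ResidueField V) := by
  refine IsAlgClosed.of_exists_root _ fun P hP hirr => ?_
  have hlift : P ∈ Polynomial.lifts (residue V) :=
    (Polynomial.lifts_iff_coeff_lifts _).2 fun n => residue_surjective _
  obtain ⟨Q, rfl, hdeg, hQ⟩ := Polynomial.lifts_and_degree_eq_and_monic hlift hP
  have hroot : (Q.map (algebraMap V K)).degree ≠ 0 := by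
    rw [hQ.degree_map, hdeg]
    exact (Polynomial.degree_pos_of_irreducible hirr).ne'
  obtain ⟨z, hz⟩ := IsAlgClosed.exists_root _ hroot
  rw [Polynomial.IsRoot, Polynomial.eval_map] at hz
  obtain ⟨y, rfl⟩ := IsIntegrallyClosed.isIntegral_iff.1 (show IsIntegral V z from ⟨Q, hQ, hz⟩)
  rw [Polynomial.eval₂_at_apply] at hz
  have hy : Q.eval y = 0 := FaithfulSMul.algebraMap_injective V K (by rw [hz, map_zero])
  refine ⟨residue V y, ?_⟩
  rw [Polynomial.eval_map, Polynomial.eval₂_at_apply, hy, map_zero]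

theorem exists_pow_eq_one_residue_eq [CharZero K] (V : ValuationSubring K) {n : ℕ} (hn : 0 < n)
    {a : ResidueField V} (ha : a ^ n = 1) : ∃ η : V, η ^ n = 1 ∧ residue V η = a := by
  have : NeZero n := ⟨hn.ne'⟩
  have : NeZero (n : K) := ⟨Nat.cast_ne_zero.2 hn.ne'⟩
  obtain ⟨ξ, hξ⟩ := HasEnoughRootsOfUnity.exists_primitiveRoot K n
  have hξV : IsPrimitiveRoot (⟨ξ, mem_valuationSubring_of_pow_eq_one V hn hξ.pow_eq_one⟩ : V) n :=
    IsPrimitiveRoot.of_map_of_injective (f := algebraMap V K) hξ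
      (FaithfulSMul.algebraMap_injective V K)
  have hprod := congrArg (Polynomial.eval₂ (residue V) a) (X_pow_sub_one_eq_prod hn hξV)
  simp only [eval₂_finsetProd, eval₂_sub, eval₂_X_pow, eval₂_one, eval₂_X, eval₂_C, ha,
    sub_self] at hprod
  obtain ⟨η, hη, hηa⟩ := Finset.prod_eq_zero_iff.1 hprod.symm
  exact ⟨η, (mem_nthRootsFinset hn _).1 hη, (sub_eq_zero.1 hηa).symm⟩

end ValuationSubrings

section Teichmuller

open IsLocalRing

variable {K F : Type*} [Field K] [Field F]

/-- `ω` is the Teichmüller character of `F` with respect to the embedding `ι` of `F` into the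
residue field of `V`: its values are roots of unity in `V` lifting `ι`. -/
def IsTeichmuller (V : ValuationSubring K) (ι : F →+* ResidueField V) (ω : MulChar F K) : Prop :=
  ∀ x, ∃ h : ω x ∈ V, residue V ⟨ω x, h⟩ = ι x

theorem exists_isTeichmuller [Finite F] [IsAlgClosed K] [CharZero K] (V : ValuationSubring K)
    (ι : F →+* ResidueField V) : ∃ ω : MulChar F K, IsTeichmuller V ι ω := by
  classical
  have := Fintype.ofFinite F
  obtain ⟨g, hg⟩ := IsCyclic.exists_generator (α := Fˣ)
  have hιg : ι g ^ Fintype.card Fˣ = 1 := by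
    rw [← map_pow, ← Units.val_pow_eq_pow_val, pow_card_eq_one, Units.val_one, map_one]
  obtain ⟨η, hη, hηg⟩ := exists_pow_eq_one_residue_eq V Fintype.card_pos hιg
  have hηK : (η : K) ^ Fintype.card Fˣ = 1 := congrArg Subtype.val hη
  let u : Kˣ := Units.ofPowEqOne _ _ hηK Fintype.card_ne_zero
  have hu : u ∈ rootsOfUnity (Fintype.card Fˣ) K := Units.ext hηK
  have hωg : MulChar.ofRootOfUnity hu hg g = η := MulChar.ofRootOfUnity_spec hu hg
  refine ⟨MulChar.ofRootOfUnity hu hg, fun x =>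
    ⟨mulChar_apply_mem_valuationSubring V _ x, ?_⟩⟩
  rcases eq_or_ne x 0 with rfl | hx
  · simp only [MulChar.map_zero, map_zero]
    exact map_zero (residue V)
  · obtain ⟨m, hm⟩ := mem_powers_iff_mem_zpowers.2 (hg (Units.mk0 x hx))
    have hxm : x = (g : F) ^ m := (congrArg Units.val hm).symm
    have hωx : (⟨MulChar.ofRootOfUnity hu hg x, mulChar_apply_mem_valuationSubring V _ x⟩ : V)
        = η ^ m := Subtype.ext (by simp only [hxm, map_pow, hωg, SubmonoidClass.coe_pow])
    rw [hωx, map_pow, hηg, hxm, map_pow]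

theorem IsTeichmuller.apply_eq_one_iff {V : ValuationSubring K} {ι : F →+* ResidueField V}
    {ω : MulChar F K} (hω : IsTeichmuller V ι ω) {x : F} : ω x = 1 ↔ x = 1 := by
  refine ⟨fun h => ι.injective ?_, fun h => by rw [h, map_one]⟩
  obtain ⟨hx, hι⟩ := hω x
  rw [← hι, map_one, show (⟨ω x, hx⟩ : V) = 1 from Subtype.ext h, map_one]

theorem IsTeichmuller.orderOf_eq [Fintype F] {V : ValuationSubring K} {ι : F →+* ResidueField V}
    {ω : MulChar F K} (hω : IsTeichmuller V ι ω) : orderOf ω = Fintype.card F - 1 := by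
  classical
  rw [← Fintype.card_units]
  refine Nat.dvd_antisymm (orderOf_dvd_of_pow_eq_one (MulChar.pow_card_eq_one ω)) ?_
  obtain ⟨g, hg⟩ := IsCyclic.exists_generator (α := Fˣ)
  rw [← Nat.card_eq_fintype_card, ← orderOf_eq_card_of_forall_mem_zpowers hg]
  refine orderOf_dvd_of_pow_eq_one (Units.ext (hω.apply_eq_one_iff.1 ?_))
  rw [Units.val_pow_eq_pow_val, map_pow, ← MulChar.pow_apply_coe, pow_orderOf_eq_one,
    MulChar.one_apply_coe]

theorem IsTeichmuller.exists_eq_pow [Finite F] [IsAlgClosed K] [CharZero K]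
    {V : ValuationSubring K} {ι : F →+* ResidueField V} {ω : MulChar F K}
    (hω : IsTeichmuller V ι ω) (χ : MulChar F K) : ∃ k : ℕ, χ = ω ^ k := by
  classical
  have := Fintype.ofFinite F
  have hcard : orderOf ω = Nat.card (MulChar F K) := by
    rw [hω.orderOf_eq, MulChar.card_eq_card_units_of_hasEnoughRootsOfUnity,
      Nat.card_eq_fintype_card, Fintype.card_units]
  have htop : Subgroup.zpowers ω = ⊤ := by
    rw [← Subgroup.card_eq_iff_eq_top, Nat.card_zpowers, hcard]
  obtain ⟨k, hk⟩ := mem_powers_iff_mem_zpowers.2 (htop ▸ Subgroup.mem_top χ)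
  exact ⟨k, hk.symm⟩

theorem exists_ringHom_residueField {p : ℕ} [Fact p.Prime] [Algebra (ZMod p) F] [Finite F]
    [IsAlgClosed K] {V : ValuationSubring K} (hV : V.valuation (p : K) < 1) :
    Nonempty (F →+* ResidueField V) := by
  have : CharP (ResidueField V) p :=
    (CharP.charP_iff_prime_eq_zero Fact.out).2 (residue_natCast_eq_zero hV)
  let _ : Algebra (ZMod p) (ResidueField V) := ZMod.algebra _ p
  exact ⟨(IsAlgClosed.lift : F →ₐ[ZMod p] ResidueField V).toRingHom⟩

end Teichmuller

section ValuationGaussSum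

open IsLocalRing

theorem valuation_one_sub_le_of_pow_eq_one {K : Type*} [Field K] (V : ValuationSubring K) {n : ℕ}
    (hn : 0 < n) {z w : K} (hz : IsPrimitiveRoot z n) (hw : w ^ n = 1) :
    V.valuation (1 - w) ≤ V.valuation (1 - z) := by
  have : NeZero n := ⟨hn.ne'⟩
  obtain ⟨i, -, rfl⟩ := hz.eq_pow_of_pow_eq_one hw
  rw [← mul_neg_geom_sum, map_mul]
  refine mul_le_of_le_one_right' ?_
  rw [ValuationSubring.valuation_le_one_iff]
  exact sum_mem fun j _ => pow_mem (mem_valuationSubring_of_pow_eq_one V hn hz.pow_eq_one) j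

theorem valuation_prime_eq_pow {K : Type*} [Field K] (V : ValuationSubring K) {p : ℕ}
    [Fact p.Prime] {z : K} (hz : IsPrimitiveRoot z p) :
    V.valuation (p : K) = V.valuation (1 - z) ^ (p - 1) := by
  have hp : p.Prime := Fact.out
  have hprod : (p : K) = ∏ μ ∈ primitiveRoots p K, (1 - μ) := by
    rw [← Polynomial.eval_one_cyclotomic_prime (R := K) (p := p),
      Polynomial.cyclotomic_eq_prod_X_sub_primitiveRoots hz, Polynomial.eval_prod]
    simp only [eval_sub, eval_X, eval_C]
  rw [hprod, map_prod, Finset.prod_congr rfl (g := fun _ => V.valuation (1 - z)),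
    Finset.prod_const, hz.card_primitiveRoots, Nat.totient_prime hp]
  intro μ hμ
  have hμ' := (mem_primitiveRoots hp.pos).1 hμ
  exact le_antisymm (valuation_one_sub_le_of_pow_eq_one V hp.pos hz hμ'.pow_eq_one)
    (valuation_one_sub_le_of_pow_eq_one V hp.pos hμ' hz.pow_eq_one)

theorem exists_pow_eq_one_add_sub_one_mul {R : Type*} [CommRing R] (z : R) (n : ℕ) :
    ∃ y : R, z ^ n = 1 + (z - 1) * n + (z - 1) ^ 2 * y := by
  obtain ⟨y, hy⟩ := Polynomial.powAddExpansion 1 (z - 1) n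
  refine ⟨y, ?_⟩
  rw [add_sub_cancel, one_pow, one_pow] at hy
  rw [hy]
  ring

theorem sum_pow_mul_inv_eq_zero {F : Type*} [Field F] [Fintype F] {n : ℕ} (h1 : 1 < n)
    (hn : n < Fintype.card F) : ∑ x : F, x ^ n * x⁻¹ = 0 := by
  rw [← FiniteField.sum_pow_lt_card_sub_one F (n - 1) (by lia)]
  refine Finset.sum_congr rfl fun x _ => ?_
  rcases eq_or_ne x 0 with rfl | hx
  · rw [zero_pow (by lia), zero_pow (by lia), zero_mul]
  · rw [pow_sub₀ x hx h1.le, pow_one]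

theorem sum_mul_inv_eq_neg_one (F : Type*) [Field F] [Fintype F] : ∑ x : F, x * x⁻¹ = -1 := by
  classical
  have hx (x : F) : x * x⁻¹ = 1 - if x = 0 then 1 else 0 := by
    split_ifs with h
    · rw [h, zero_mul, sub_self]
    · rw [mul_inv_cancel₀ h, sub_zero]
  rw [Fintype.sum_congr _ _ hx, Finset.sum_sub_distrib, Finset.sum_ite_eq', Finset.sum_const,
    Finset.card_univ, nsmul_one, FiniteField.cast_card_eq_zero, zero_sub,
    if_pos (Finset.mem_univ _)]

theorem sum_inv_mul_trace_eq_neg_one (K L : Type*) [Field K] [Finite K] [Field L] [Fintype L]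
    [Algebra K L] : ∑ x : L, x⁻¹ * algebraMap K L (Algebra.trace K L x) = -1 := by
  have hcard : Fintype.card L = Nat.card K ^ Module.finrank K L := by
    rw [← Module.natCard_eq_pow_finrank, Nat.card_eq_fintype_card]
  have hK : 1 < Nat.card K := Finite.one_lt_card
  have hfrob (x : L) : x⁻¹ * algebraMap K L (Algebra.trace K L x)
      = ∑ i ∈ Finset.range (Module.finrank K L), x ^ Nat.card K ^ i * x⁻¹ := by
    rw [FiniteField.algebraMap_trace_eq_sum_pow, mul_comm, Finset.sum_mul]
  rw [Fintype.sum_congr _ _ hfrob, Finset.sum_comm, Finset.sum_eq_single_of_mem 0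
    (Finset.mem_range.2 Module.finrank_pos)]
  · simp only [pow_zero, pow_one, sum_mul_inv_eq_neg_one]
  · intro i hi hi0
    refine sum_pow_mul_inv_eq_zero (Nat.one_lt_pow hi0 hK) ?_
    rw [hcard]
    exact Nat.pow_lt_pow_right hK (Finset.mem_range.1 hi)

variable {p : ℕ} [Fact p.Prime] {F : Type*} [Field F] [Algebra (ZMod p) F] [Fintype F]
  {V : ValuationSubring ℂ} {ι : F →+* ResidueField V} {ω : MulChar F ℂ}

theorem zetaP_mem_valuationSubring (V : ValuationSubring ℂ) : zetaP p ∈ V :=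
  mem_valuationSubring_of_pow_eq_one V (NeZero.pos p) (isPrimitiveRoot_zetaP p).pow_eq_one

theorem valuation_one_sub_zetaP_lt_one (hV : V.valuation (p : ℂ) < 1) :
    V.valuation (1 - zetaP p) < 1 := by
  rw [valuation_prime_eq_pow V (isPrimitiveRoot_zetaP p)] at hV
  exact lt_of_not_ge fun h => (one_le_pow_of_one_le' h _).not_gt hV

/- Modulo `(ζ - 1) ^ 2` one has `ζ ^ Tr x = 1 + (ζ - 1) * Tr x`, so the Gauss sum is `ζ - 1` times
an element congruent to `∑ x⁻¹ Tr x`. -/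
theorem IsTeichmuller.exists_gaussSum_inv_eq_mul (hω : IsTeichmuller V ι ω) (hω1 : ω ≠ 1)
    (hV : V.valuation (p : ℂ) < 1) :
    ∃ u : V, residue V u = -1 ∧ gaussSum ω⁻¹ (traceAddChar p F) = (zetaP p - 1) * u := by
  choose hmem hres using hω
  let ζ : V := ⟨zetaP p, zetaP_mem_valuationSubring V⟩
  let tr (x : F) : ℕ := (Algebra.trace (ZMod p) F x).val
  choose y hy using fun x => exists_pow_eq_one_add_sub_one_mul ζ (tr x)
  let w (x : F) : V := ⟨ω x⁻¹, hmem x⁻¹⟩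
  have hw (x : F) : ω⁻¹ x = (w x : ℂ) := MulChar.inv_apply' ω x
  have hζ : residue V (ζ - 1) = 0 := by
    rw [residue_eq_zero_iff, ValuationSubring.valuation_lt_one_iff, ← Valuation.map_neg]
    simpa [ζ] using valuation_one_sub_zetaP_lt_one hV
  refine ⟨∑ x, w x * tr x + (ζ - 1) * ∑ x, w x * y x, ?_, ?_⟩
  · rw [map_add, map_mul, hζ, zero_mul, add_zero, map_sum, ← map_one ι, ← map_neg,
      ← sum_inv_mul_trace_eq_neg_one (ZMod p) F, map_sum]
    refine Finset.sum_congr rfl fun x _ => ?_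
    rw [map_mul, map_mul, hres, map_natCast, ← map_natCast ι, ← map_natCast (algebraMap (ZMod p) F),
      ZMod.natCast_zmod_val]
  · have hterm (x : F) : ω⁻¹ x * traceAddChar p F x
        = ω⁻¹ x + ((ζ - 1) * (w x * tr x) + (ζ - 1) ^ 2 * (w x * y x) : V) := by
      rw [traceAddChar_apply, show zetaP p ^ tr x = ((ζ ^ tr x : V) : ℂ) from rfl, hy, hw,
        ← V.subtype_apply, ← V.subtype_apply, ← V.subtype_apply, ← map_mul, ← map_add]
      congr 1
      ring
    rw [gaussSum, Fintype.sum_congr _ _ hterm, Finset.sum_add_distrib,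
      MulChar.sum_eq_zero_of_ne_one (inv_ne_one.2 hω1), zero_add,
      show zetaP p - 1 = ((ζ - 1 : V) : ℂ) from rfl, ← V.subtype_apply, ← V.subtype_apply,
      ← map_mul, mul_add, Finset.mul_sum, ← mul_assoc, ← sq, Finset.mul_sum,
      ← Finset.sum_add_distrib, map_sum]
    rfl

theorem IsTeichmuller.valuation_gaussSum_inv (hω : IsTeichmuller V ι ω) (hω1 : ω ≠ 1)
    (hV : V.valuation (p : ℂ) < 1) :
    V.valuation (gaussSum ω⁻¹ (traceAddChar p F)) = V.valuation (1 - zetaP p) := by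
  obtain ⟨u, hu, hG⟩ := hω.exists_gaussSum_inv_eq_mul hω1 hV
  have hunit : IsUnit u := by
    rw [← residue_ne_zero_iff_isUnit, hu]
    exact neg_ne_zero.2 one_ne_zero
  rw [hG, map_mul, (ValuationSubring.valuation_eq_one_iff V u).1 hunit, mul_one,
    Valuation.map_sub_swap]

end ValuationGaussSum

section DigitSum

theorem sub_one_mul_sum_range_div_pow {p f k : ℕ} (hp : 1 < p) (hk : k < p ^ f) :
    (p - 1) * ∑ i ∈ Finset.range f, k / p ^ (i + 1) = k - (p.digits k).sum := by
  rcases eq_or_ne k 0 with rfl | hk0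
  · simp only [Nat.zero_div, Finset.sum_const_zero, mul_zero, Nat.digits_zero, List.sum_nil,
      Nat.sub_zero]
  · rw [← Nat.sub_one_mul_sum_log_div_pow_eq_sub_sum_digits]
    congr 1
    refine (Finset.sum_subset (Finset.range_subset_range.2 (Nat.log_lt_of_lt_pow hk0 hk))
      fun i _ hi => Nat.div_eq_of_lt ?_).symm
    exact Nat.lt_pow_of_log_lt hp (Nat.not_le.1 fun h => hi (Finset.mem_range.2 (by lia)))

theorem mul_div_mul_sub_one {A B k : ℕ} (hk : k < A * B - 1) : A * k / (A * B - 1) = k / B := by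
  obtain ⟨hA, hB⟩ : 0 < A ∧ 0 < B := CanonicallyOrderedAdd.mul_pos.1 (by lia)
  obtain ⟨s, hs⟩ : ∃ s, s = k / B := ⟨_, rfl⟩
  obtain ⟨t, ht⟩ : ∃ t, t = k % B := ⟨_, rfl⟩
  have hkst : k = B * s + t := by rw [hs, ht, Nat.div_add_mod]
  have hsA : s < A := hs ▸ Nat.div_lt_of_lt_mul (by rw [mul_comm]; lia)
  have htB : t < B := ht ▸ Nat.mod_lt _ hB
  have hprod : A * t ≤ A * (B - 1) := Nat.mul_le_mul_left A (by lia)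
  have hsucc : A * (B - 1) + A = A * B := by
    rw [← mul_add_one, Nat.sub_one_add_one hB.ne']
  have hrem : s + A * t < A * B - 1 := by
    refine lt_of_le_of_ne (by lia) fun heq => ?_
    have htop : t = B - 1 := Nat.eq_of_mul_eq_mul_left hA (by lia)
    have hlast : B * s + B = A * B := by rw [← mul_add_one, show s + 1 = A by lia, mul_comm]
    lia
  rw [← hs]
  refine Nat.div_eq_of_lt_le ?_ ?_
  all_goals
    zify [show 1 ≤ A * B by lia] at hrem ⊢
    rw [hkst]
    push_cast
    nlinarith

theorem sum_digits_mul_pow_sub_one {p f k : ℕ} (hp : 1 < p) (hk : k < p ^ f - 1) :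
    (p.digits k).sum * (p ^ f - 1) = (p - 1) * ∑ m ∈ Finset.range f, p ^ m * k % (p ^ f - 1) := by
  have hmod (m : ℕ) (hm : m ∈ Finset.range f) :
      p ^ m * k % (p ^ f - 1) + (p ^ f - 1) * (k / p ^ (f - 1 - m + 1)) = p ^ m * k := by
    have hf : p ^ f = p ^ m * p ^ (f - 1 - m + 1) := by
      rw [← pow_add, show m + (f - 1 - m + 1) = f by have := Finset.mem_range.1 hm; lia]
    rw [hf, ← mul_div_mul_sub_one (hf ▸ hk), Nat.mod_add_div]
  have hsum := Finset.sum_congr rfl hmod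
  rw [Finset.sum_add_distrib, ← Finset.mul_sum, ← Finset.sum_mul,
    Finset.sum_range_reflect fun i => k / p ^ (i + 1)] at hsum
  have hgeom : (p - 1) * ∑ m ∈ Finset.range f, p ^ m = p ^ f - 1 := by
    rw [Nat.geomSum_eq hp, Nat.mul_div_cancel' (Nat.sub_one_dvd_pow_sub_one p f)]
  have hdigits := sub_one_mul_sum_range_div_pow hp (show k < p ^ f by lia)
  have hle := Nat.digit_sum_le p k
  zify [hle] at hdigits hsum hgeom ⊢
  linear_combination (-1 : ℤ) * (p - 1 : ℕ) * hsum + (p ^ f - 1 : ℕ) * hdigits - (k : ℤ) * hgeom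

theorem sum_digits_add_one {b m : ℕ} (hb : 1 < b) (hm : ¬b ∣ m + 1) :
    (b.digits (m + 1)).sum = (b.digits m).sum + 1 := by
  have hr : (m + 1) % b ≠ 0 := fun h => hm (Nat.dvd_of_mod_eq_zero h)
  have hmod : (m + 1) % b = m % b + 1 := by
    have := Nat.div_add_mod m b
    have := Nat.div_add_mod (m + 1) b
    rw [Nat.succ_div_of_not_dvd hm] at this
    lia
  rw [Nat.digits_def' hb m.succ_pos, List.sum_cons, Nat.succ_div_of_not_dvd hm, hmod]
  rcases Nat.eq_zero_or_pos m with rfl | hm0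
  · simp only [Nat.zero_mod, Nat.zero_div, Nat.digits_zero, List.sum_nil,
      add_zero]
  · rw [Nat.digits_def' hb hm0, List.sum_cons]
    ring

end DigitSum

section GaussSumIntegrality

open IsLocalRing

variable {p : ℕ} [Fact p.Prime] {F : Type*} [Field F] [Algebra (ZMod p) F] [Fintype F]
  {V : ValuationSubring ℂ} {ι : F →+* ResidueField V} {ω : MulChar F ℂ}

theorem jacobiSum_mem_valuationSubring {F K : Type*} [Field F] [Fintype F] [Field K]
    (V : ValuationSubring K) (χ φ : MulChar F K) : jacobiSum χ φ ∈ V :=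
  sum_mem fun _ _ => V.mul_mem _ _ (mulChar_apply_mem_valuationSubring V χ _)
    (mulChar_apply_mem_valuationSubring V φ _)

theorem gaussSum_traceAddChar_mem_valuationSubring (V : ValuationSubring ℂ) (χ : MulChar F ℂ) :
    gaussSum χ (traceAddChar p F) ∈ V := by
  refine sum_mem fun x _ => V.mul_mem _ _ (mulChar_apply_mem_valuationSubring V χ x) ?_
  rw [traceAddChar_apply]
  exact pow_mem (zetaP_mem_valuationSubring V) _

theorem valuation_gaussSum_mul_le {F K : Type*} [Field F] [Fintype F] [Field K]
    (V : ValuationSubring K) {χ φ : MulChar F K} (h : χ * φ ≠ 1) (ψ : AddChar F K) :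
    V.valuation (gaussSum χ ψ) * V.valuation (gaussSum φ ψ)
      ≤ V.valuation (gaussSum (χ * φ) ψ) := by
  classical
  rw [← map_mul, ← jacobiSum_mul_nontrivial h, map_mul]
  exact mul_le_of_le_one_right'
    ((ValuationSubring.valuation_le_one_iff _ _).2 (jacobiSum_mem_valuationSubring V χ φ))

theorem IsTeichmuller.pow_le_valuation_gaussSum_inv_pow (hω : IsTeichmuller V ι ω)
    (hV : V.valuation (p : ℂ) < 1) {k : ℕ} (hk : k < Fintype.card F - 1) :
    V.valuation (1 - zetaP p) ^ (p.digits k).sum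
      ≤ V.valuation (gaussSum (ω⁻¹ ^ k) (traceAddChar p F)) := by
  have hp : 1 < p := (Fact.out : p.Prime).one_lt
  induction k using Nat.strong_induction_on with
  | _ k ih =>
  rcases Nat.eq_zero_or_pos k with rfl | hk0
  · rw [Nat.digits_zero, List.sum_nil, pow_zero, pow_zero, gaussSum_one_left traceAddChar_ne_one,
      Valuation.map_neg, map_one]
  by_cases hpk : p ∣ k
  · obtain ⟨m, rfl⟩ := hpk
    have hm0 : 0 < m := Nat.pos_of_mul_pos_left hk0
    have hm : m < p * m := lt_mul_left hm0 hp
    have hfrob := gaussSum_traceAddChar_pow_p (p := p) (ω⁻¹ ^ m) 1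
    rw [pow_one, ← pow_mul, mul_comm] at hfrob
    rw [Nat.digits_base_mul hp hm0, List.sum_cons, zero_add, hfrob]
    exact ih m hm (hm.trans hk)
  · obtain ⟨m, rfl⟩ := Nat.exists_eq_add_one.2 hk0
    have hne : ω⁻¹ ^ m * ω⁻¹ ≠ 1 := by
      rw [← pow_succ, inv_pow, inv_ne_one]
      exact pow_ne_one_of_lt_orderOf (Nat.succ_ne_zero m) (hω.orderOf_eq ▸ hk)
    have hω1 : ω ≠ 1 := by
      rintro rfl
      simp only [inv_one, one_pow, mul_one, ne_eq, not_true] at hne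
    rw [sum_digits_add_one hp hpk, pow_succ, pow_succ]
    refine le_trans ?_ (valuation_gaussSum_mul_le V hne _)
    rw [hω.valuation_gaussSum_inv hω1 hV]
    exact mul_le_mul_left (ih m (by lia) (by lia)) _

theorem exists_pow_le_valuation_gaussSum_inv (hV : V.valuation (p : ℂ) < 1) {f : ℕ}
    (hF : Fintype.card F = p ^ f) (ψ : MulChar F ℂ) :
    ∃ S j : ℕ, j.Coprime (orderOf ψ) ∧
      S * orderOf ψ = (p - 1) * ∑ m ∈ Finset.range f, p ^ m * j % orderOf ψ ∧
      V.valuation (1 - zetaP p) ^ S ≤ V.valuation (gaussSum ψ⁻¹ (traceAddChar p F)) := by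
  obtain ⟨ι⟩ := exists_ringHom_residueField (F := F) hV
  obtain ⟨ω, hω⟩ := exists_isTeichmuller V ι
  obtain ⟨k, rfl⟩ := hω.exists_eq_pow ψ
  have hω0 : 0 < orderOf ω := orderOf_pos ω
  rw [← pow_mod_orderOf]
  have hk : k % orderOf ω < orderOf ω := Nat.mod_lt _ hω0
  generalize k % orderOf ω = m at hk
  have hg : 0 < m.gcd (orderOf ω) := Nat.gcd_pos_of_pos_right _ hω0
  obtain ⟨j, n, hjn, hm, hn⟩ := Nat.exists_coprime m (orderOf ω)
  have hord : orderOf (ω ^ m) = n := by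
    rw [orderOf_pow, Nat.gcd_comm]
    exact Nat.div_eq_of_eq_mul_left hg hn
  have hle := hω.pow_le_valuation_gaussSum_inv_pow hV (hω.orderOf_eq ▸ hk)
  rw [inv_pow] at hle
  have hq : orderOf ω = p ^ f - 1 := by rw [hω.orderOf_eq, hF]
  have hdigits := sum_digits_mul_pow_sub_one (Fact.out : p.Prime).one_lt (hq ▸ hk)
  rw [hq] at hm hn hg
  rw [hord]
  refine ⟨_, j, hjn, Nat.eq_of_mul_eq_mul_right hg ?_, hle⟩
  rw [mul_assoc, ← hn, hdigits, mul_assoc, Finset.sum_mul]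
  congr 1
  refine Finset.sum_congr rfl fun i _ => ?_
  rw [← Nat.mul_mod_mul_right, ← hn, mul_assoc, ← hm]

theorem valuation_eq_one_of_pow_eq_one {K : Type*} [Field K] (V : ValuationSubring K) {z : K}
    {n : ℕ} (hn : n ≠ 0) (hz : z ^ n = 1) : V.valuation z = 1 :=
  (pow_eq_one_iff_left hn).1 (by rw [← map_pow, hz, map_one])

theorem valuation_gaussSum_mul_gaussSum_inv (V : ValuationSubring ℂ) {ψ : MulChar F ℂ}
    (hψ : ψ ≠ 1) :
    V.valuation (gaussSum ψ (traceAddChar p F)) * V.valuation (gaussSum ψ⁻¹ (traceAddChar p F))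
      = V.valuation (Fintype.card F : ℂ) := by
  have hneg : V.valuation (ψ⁻¹ (-1)) = 1 :=
    valuation_eq_one_of_pow_eq_one V two_ne_zero (by rw [← map_pow, neg_one_sq, map_one])
  rw [← gaussSum_mul_gaussSum_eq_card hψ (isPrimitive_traceAddChar (p := p)), map_mul,
    ← mul_gaussSum_inv_eq_gaussSum ψ⁻¹, map_mul, hneg, one_mul]

theorem isIntegral_gaussSum_div_pow {f e : ℕ} (hF : Fintype.card F = p ^ f) {ψ : MulChar F ℂ}
    (hψ : ψ ≠ 1)
    (h : ∀ j, j.Coprime (orderOf ψ) →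
      ∑ m ∈ Finset.range f, p ^ m * j % orderOf ψ + orderOf ψ * e ≤ orderOf ψ * f) :
    IsIntegral ℤ (gaussSum ψ (traceAddChar p F) / (p : ℂ) ^ e) := by
  refine isIntegral_int_of_forall_mem_valuationSubring fun V => ?_
  have hp : 1 < p := (Fact.out : p.Prime).one_lt
  have hp0 : V.valuation (p : ℂ) ≠ 0 :=
    (Valuation.ne_zero_iff _).2 (Nat.cast_ne_zero.2 (NeZero.ne p))
  rw [← ValuationSubring.valuation_le_one_iff, map_div₀, map_pow]
  have hp1 : V.valuation (p : ℂ) ≤ 1 :=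
    (ValuationSubring.valuation_le_one_iff _ _).2 (natCast_mem V p)
  rcases hp1.lt_or_eq with hV | hV
  · obtain ⟨S, j, hj, hS, hle⟩ := exists_pow_le_valuation_gaussSum_inv hV hF ψ
    have hmul := valuation_gaussSum_mul_gaussSum_inv (p := p) V hψ
    rw [hF, Nat.cast_pow, map_pow] at hmul
    rw [valuation_prime_eq_pow V (isPrimitiveRoot_zetaP p)] at hp0 hmul ⊢
    have hπ0 : V.valuation (1 - zetaP p) ≠ 0 := fun h =>
      hp0 (by rw [h, zero_pow (Nat.sub_pos_of_lt hp).ne'])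
    have hSe : (p - 1) * e + S ≤ (p - 1) * f := by
      refine Nat.le_of_mul_le_mul_right (c := orderOf ψ) ?_ (orderOf_pos ψ)
      rw [add_mul, hS]
      nlinarith [Nat.mul_le_mul_left (p - 1) (h j hj)]
    rw [div_le_one₀ (zero_lt_iff.2 (pow_ne_zero e hp0))]
    refine le_of_mul_le_mul_right ?_ (zero_lt_iff.2 (pow_ne_zero S hπ0))
    calc V.valuation (gaussSum ψ (traceAddChar p F)) * V.valuation (1 - zetaP p) ^ S
        ≤ (V.valuation (1 - zetaP p) ^ (p - 1)) ^ f := hmul ▸ mul_le_mul_right hle _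
      _ = V.valuation (1 - zetaP p) ^ ((p - 1) * f) := (pow_mul _ _ _).symm
      _ ≤ V.valuation (1 - zetaP p) ^ ((p - 1) * e + S) :=
        pow_le_pow_right_of_le_one' (valuation_one_sub_zetaP_lt_one hV).le hSe
      _ = _ := by rw [pow_add, pow_mul]
  · rw [hV, one_pow, div_one, ValuationSubring.valuation_le_one_iff]
    exact gaussSum_traceAddChar_mem_valuationSubring V ψ

end GaussSumIntegrality

section ImaginaryQuadraticField

open NumberField

theorem conj_eq_neg_of_sq_eq_neg {z : ℂ} {m : ℕ} (hm : m ≠ 0) (hz : z ^ 2 = -(m : ℂ)) :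
    starRingEnd ℂ z = -z := by
  have hm' : (0 : ℝ) < m := Nat.cast_pos.2 (Nat.pos_of_ne_zero hm)
  obtain ⟨hre, him⟩ := Complex.ext_iff.1 hz
  simp only [sq, mul_re, mul_im, neg_re, neg_im, natCast_re, natCast_im] at hre him
  have hz0 : z.re = 0 := by
    have hprod : z.re * z.im = 0 := by linarith
    rcases mul_eq_zero.1 hprod with h | h
    · exact h
    · nlinarith
  exact Complex.ext (by simp [hz0]) (by simp)

section Field

variable {K : Type*} [Field K] {m : ℕ} {s : K}

theorem eq_zero_of_add_mul_eq_zero [CharZero K] (hm : m ≠ 0) (hs : s ^ 2 = -(m : K)) {a b : ℚ}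
    (hab : (a : K) + b * s = 0) : a = 0 ∧ b = 0 := by
  have hm' : (0 : ℚ) < m := Nat.cast_pos.2 (Nat.pos_of_ne_zero hm)
  have hnorm : a ^ 2 + m * b ^ 2 = 0 := by
    have : ((a ^ 2 + m * b ^ 2 : ℚ) : K) = 0 := by
      push_cast
      linear_combination (a - b * s) * hab + (b : K) ^ 2 * hs
    exact_mod_cast this
  have hb : b = 0 := by
    refine pow_eq_zero_iff two_ne_zero |>.1 (le_antisymm ?_ (sq_nonneg b))
    nlinarith [sq_nonneg a]
  exact ⟨by simpa [hb] using hnorm, hb⟩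

theorem linearIndependent_one_of_sq_eq_neg [CharZero K] (hm : m ≠ 0) (hs : s ^ 2 = -(m : K)) :
    LinearIndependent ℚ ![(1 : K), s] := by
  refine LinearIndependent.pair_iff.2 fun a b hab => eq_zero_of_add_mul_eq_zero hm hs ?_
  rwa [Algebra.smul_def, Algebra.smul_def, mul_one, eq_ratCast, eq_ratCast] at hab

theorem exists_eq_add_mul_of_sq_eq_neg [CharZero K] (hK : Module.finrank ℚ K = 2) (hm : m ≠ 0)
    (hs : s ^ 2 = -(m : K)) (x : K) : ∃ u v : ℚ, x = u + v * s := by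
  have := Module.finite_of_finrank_pos (hK.trans_gt two_pos)
  have hspan := (linearIndependent_one_of_sq_eq_neg hm hs).span_eq_top_of_card_eq_finrank'
    (by rw [hK, Fintype.card_fin])
  have hx : x ∈ Submodule.span ℚ (Set.range ![(1 : K), s]) := hspan ▸ Submodule.mem_top
  rw [Matrix.range_cons_cons_empty, Submodule.mem_span_pair] at hx
  obtain ⟨u, v, rfl⟩ := hx
  exact ⟨u, v, by simp only [Algebra.smul_def, eq_ratCast, mul_one]⟩

end Field

theorem exists_intCast_eq_of_isIntegral {K : Type*} [Field K] [CharZero K] {y : ℚ}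
    (hy : IsIntegral ℤ (y : K)) : ∃ n : ℤ, (n : ℚ) = y :=
  IsIntegrallyClosed.isIntegral_iff.1
    ((isIntegral_algebraMap_iff (algebraMap ℚ K).injective).1 (by rwa [eq_ratCast]))

theorem exists_intCast_eq_of_squarefree_mul_sq {m : ℕ} (hm : Squarefree m) {y : ℚ} {n : ℤ}
    (hy : m * y ^ 2 = n) : ∃ k : ℤ, (k : ℚ) = y := by
  have hm0 : (m : ℚ) ≠ 0 := Nat.cast_ne_zero.2 hm.ne_zero
  have hsq : (m * y) ^ 2 = ((m * n : ℤ) : ℚ) := by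
    push_cast
    rw [← hy]
    ring
  obtain ⟨d, hd⟩ := IsIntegrallyClosed.isIntegral_iff.1
    (IsIntegral.of_pow two_pos (by
      rw [hsq]
      exact isIntegral_algebraMap (R := ℤ) (A := ℚ)))
  rw [eq_intCast] at hd
  have hdvd : (m : ℤ) ∣ d ^ 2 := ⟨n, by rw [← hd] at hsq; exact_mod_cast hsq⟩
  obtain ⟨k, rfl⟩ := ((Int.squarefree_natCast.2 hm).dvd_pow_iff_dvd two_ne_zero).1 hdvd
  push_cast at hd
  exact ⟨k, mul_left_cancel₀ hm0 hd⟩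

theorem two_dvd_sub_of_sq_add_mul_sq_eq {m : ℕ} (hm : m % 4 = 3) {a b n : ℤ}
    (h : a ^ 2 + m * b ^ 2 = 4 * n) : (2 : ℤ) ∣ a - b := by
  obtain ⟨t, ht⟩ : ∃ t : ℤ, (m : ℤ) = 4 * t + 3 := ⟨m / 4, by lia⟩
  rw [ht] at h
  have hsq : (2 : ℤ) ∣ a ^ 2 - b ^ 2 :=
    ⟨2 * n - 2 * t * b ^ 2 - 2 * b ^ 2, by linear_combination h⟩
  rw [← even_iff_two_dvd] at hsq ⊢
  simpa only [Int.even_sub, Int.even_pow' two_ne_zero] using hsq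

variable {K : Type*} [Field K] [NumberField K] {m : ℕ} {s : K}

theorem exists_int_trace_norm_of_sq_eq_neg (hm : m ≠ 0) (hs : s ^ 2 = -(m : K)) {u v : ℚ}
    (hx : IsIntegral ℤ (u + v * s : K)) :
    (∃ a : ℤ, (a : ℚ) = 2 * u) ∧ ∃ n : ℤ, (n : ℚ) = u ^ 2 + m * v ^ 2 := by
  let φ : K →+* ℂ := Classical.arbitrary _
  have hφs : φ s ^ 2 = -(m : ℂ) := by rw [← map_pow, hs, map_neg, map_natCast]
  have hφ : IsIntegral ℤ (u + v * φ s : ℂ) := by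
    simpa only [RingHom.toIntAlgHom_apply, map_add, map_mul, map_ratCast] using hx.map φ.toIntAlgHom
  have hφ' : IsIntegral ℤ (u - v * φ s : ℂ) := by
    simpa only [RingHom.toIntAlgHom_apply, map_add, map_mul, map_ratCast,
      conj_eq_neg_of_sq_eq_neg hm hφs, mul_neg, ← sub_eq_add_neg]
      using hφ.map (starRingEnd ℂ).toIntAlgHom
  refine ⟨exists_intCast_eq_of_isIntegral (K := ℂ) ?_,
    exists_intCast_eq_of_isIntegral (K := ℂ) ?_⟩
  · have htrace : ((2 * u : ℚ) : ℂ) = u + v * φ s + (u - v * φ s) := by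
      push_cast
      ring
    exact htrace ▸ hφ.add hφ'
  · have hnorm : ((u ^ 2 + m * v ^ 2 : ℚ) : ℂ) = (u + v * φ s) * (u - v * φ s) := by
      push_cast
      linear_combination (v : ℂ) ^ 2 * hφs
    exact hnorm ▸ hφ.mul hφ'

variable {θ : 𝓞 K}

theorem exists_ringOfIntegers_eq_half_one_add (hm4 : m % 4 = 3) (hs : s ^ 2 = -(m : K)) :
    ∃ θ : 𝓞 K, algebraMap (𝓞 K) K θ = (1 + s) / 2 := by
  obtain ⟨c, hc⟩ : ∃ c, 1 + m = 4 * c := ⟨(1 + m) / 4, by lia⟩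
  have hcK : (1 : K) + m = 4 * c := by exact_mod_cast hc
  refine ⟨⟨(1 + s) / 2, X ^ 2 - X + C (c : ℤ), by monicity!, ?_⟩, rfl⟩
  simp only [eval₂_add, eval₂_sub, eval₂_pow, eval₂_X, eval₂_C]
  rw [eq_intCast, Int.cast_natCast]
  linear_combination (1 / 4 : K) * hs - (1 / 4 : K) * hcK

theorem sq_eq_of_algebraMap_eq_half_one_add (hs : s ^ 2 = -(m : K))
    (hθ : algebraMap (𝓞 K) K θ = (1 + s) / 2) {c : ℕ} (hc : 1 + m = 4 * c) : θ ^ 2 = θ - c := by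
  have hcK : (1 : K) + m = 4 * c := by exact_mod_cast hc
  apply FaithfulSMul.algebraMap_injective (𝓞 K) K
  rw [map_pow, map_sub, map_natCast, hθ]
  linear_combination (1 / 4 : K) * hs - (1 / 4 : K) * hcK

theorem exists_int_add_int_mul_of_sq_eq_neg (hK : Module.finrank ℚ K = 2) (hm : Squarefree m)
    (hm4 : m % 4 = 3) (hs : s ^ 2 = -(m : K)) (hθ : algebraMap (𝓞 K) K θ = (1 + s) / 2) (x : 𝓞 K) :
    ∃ a b : ℤ, x = a + b * θ := by
  obtain ⟨u, v, huv⟩ := exists_eq_add_mul_of_sq_eq_neg hK hm.ne_zero hs (algebraMap (𝓞 K) K x)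
  obtain ⟨⟨a, ha⟩, n, hn⟩ := exists_int_trace_norm_of_sq_eq_neg hm.ne_zero hs
    (huv ▸ RingOfIntegers.isIntegral_coe x)
  obtain ⟨b, hb⟩ : ∃ b : ℤ, (b : ℚ) = 2 * v := by
    refine exists_intCast_eq_of_squarefree_mul_sq hm (n := 4 * n - a ^ 2) ?_
    push_cast
    rw [hn, ha]
    ring
  have hab : a ^ 2 + m * b ^ 2 = 4 * n := by
    have : (a ^ 2 + m * b ^ 2 : ℚ) = 4 * n := by
      rw [hn, ha, hb]
      ring
    exact_mod_cast this
  obtain ⟨d, hd⟩ := two_dvd_sub_of_sq_add_mul_sq_eq hm4 hab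
  have hdK : (a : K) - b = 2 * d := by exact_mod_cast hd
  have haK : (a : K) = 2 * u := by simpa using congrArg (Rat.cast : ℚ → K) ha
  have hbK : (b : K) = 2 * v := by simpa using congrArg (Rat.cast : ℚ → K) hb
  refine ⟨d, b, FaithfulSMul.algebraMap_injective (𝓞 K) K ?_⟩
  rw [huv, map_add, map_mul, map_intCast, map_intCast, hθ]
  linear_combination (1 / 2 : K) * hdK - (1 / 2 : K) * haK - (s / 2) * hbK

theorem linearIndependent_one_half_one_add (hm : m ≠ 0) (hs : s ^ 2 = -(m : K))
    (hθ : algebraMap (𝓞 K) K θ = (1 + s) / 2) : LinearIndependent ℤ ![(1 : 𝓞 K), θ] := by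
  rw [LinearIndependent.pair_iff]
  intro a b hab
  have hK := congrArg (algebraMap (𝓞 K) K) hab
  rw [map_add, zsmul_eq_mul, zsmul_eq_mul, map_mul, map_mul, map_intCast, map_intCast, hθ, map_one,
    map_zero] at hK
  have hQ := eq_zero_of_add_mul_eq_zero (a := a + b / 2) (b := b / 2) hm hs (by
    push_cast
    linear_combination hK)
  have hb : b = 0 := by simpa using hQ.2
  subst hb
  exact ⟨by simpa using hQ.1, rfl⟩

theorem exists_basis_ringOfIntegers_of_sq_eq_neg (hK : Module.finrank ℚ K = 2) (hm : Squarefree m)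
    (hm4 : m % 4 = 3) (hs : s ^ 2 = -(m : K)) (hθ : algebraMap (𝓞 K) K θ = (1 + s) / 2) :
    ∃ b : Module.Basis (Fin 2) ℤ (𝓞 K), b 0 = 1 ∧ b 1 = θ := by
  have hspan : ⊤ ≤ Submodule.span ℤ (Set.range ![(1 : 𝓞 K), θ]) := by
    intro x _
    obtain ⟨a, b, rfl⟩ := exists_int_add_int_mul_of_sq_eq_neg hK hm hm4 hs hθ x
    rw [Matrix.range_cons_cons_empty, Submodule.mem_span_pair]
    exact ⟨a, b, by rw [zsmul_eq_mul, zsmul_eq_mul, mul_one]⟩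
  have hli := linearIndependent_one_half_one_add hm.ne_zero hs hθ
  exact ⟨Module.Basis.mk hli hspan, Module.Basis.mk_apply hli hspan 0,
    Module.Basis.mk_apply hli hspan 1⟩

theorem discr_eq_neg_of_sq_eq_neg (hK : Module.finrank ℚ K = 2) (hm : Squarefree m)
    (hm4 : m % 4 = 3) (hs : s ^ 2 = -(m : K)) : discr K = -(m : ℤ) := by
  obtain ⟨θ, hθ⟩ := exists_ringOfIntegers_eq_half_one_add hm4 hs
  obtain ⟨b, hb0, hb1⟩ := exists_basis_ringOfIntegers_of_sq_eq_neg hK hm hm4 hs hθ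
  obtain ⟨c, hc⟩ : ∃ c, 1 + m = 4 * c := ⟨(1 + m) / 4, by lia⟩
  have hθ2 : θ ^ 2 = θ - (c : ℤ) • 1 := by
    rw [sq_eq_of_algebraMap_eq_half_one_add hs hθ hc, natCast_zsmul, nsmul_one]
  have htr1 : Algebra.trace ℤ (𝓞 K) 1 = 2 := by
    simpa using Algebra.trace_algebraMap_of_basis b (1 : ℤ)
  have htrθ : Algebra.trace ℤ (𝓞 K) θ = 1 := by
    rw [Algebra.trace_eq_matrix_trace b, Matrix.trace_fin_two, Algebra.leftMulMatrix_eq_repr_mul,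
      Algebra.leftMulMatrix_eq_repr_mul, hb0, hb1, mul_one, ← sq, hθ2, ← hb0, ← hb1, map_sub,
      map_smul]
    simp
  have htrθ2 : Algebra.trace ℤ (𝓞 K) (θ * θ) = 1 - 2 * c := by
    rw [← sq, hθ2, map_sub, htrθ, map_smul, htr1, smul_eq_mul, mul_comm]
  rw [← discr_eq_discr K b, Algebra.discr_def, Matrix.det_fin_two]
  simp only [Algebra.traceMatrix_apply, Algebra.traceForm_apply, hb0, hb1, one_mul, mul_one, htr1,
    htrθ, htrθ2]
  lia

theorem isTotallyComplex_of_sq_eq_neg (hm : m ≠ 0) (hs : s ^ 2 = -(m : K)) :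
    IsTotallyComplex K := by
  refine ⟨fun w => InfinitePlace.not_isReal_iff_isComplex.1 fun hw => ?_⟩
  have hreal := InfinitePlace.isReal_iff.1 hw
  have hsq : hreal.embedding s ^ 2 = -(m : ℝ) := by rw [← map_pow, hs, map_neg, map_natCast]
  have hpos : (0 : ℝ) < m := Nat.cast_pos.2 (Nat.pos_of_ne_zero hm)
  nlinarith [sq_nonneg (hreal.embedding s)]

theorem regulator_eq_one_of_rank_eq_zero (h : Units.rank K = 0) : Units.regulator K = 1 := by
  classical
  have w₀ : InfinitePlace K := Classical.arbitrary _
  have hcard :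
      Fintype.card {w : InfinitePlace K // w ≠ w₀} = Fintype.card (Fin (Units.rank K)) := by
    rw [Fintype.card_subtype_compl, Fintype.card_fin, Units.rank, Fintype.card_subtype_eq]
  have : IsEmpty {w : InfinitePlace K // w ≠ w₀} :=
    Fintype.card_eq_zero_iff.1 (by rw [hcard, Fintype.card_fin, h])
  rw [Units.regulator_eq_det K w₀ (Fintype.equivOfCardEq hcard), Matrix.det_isEmpty, abs_one]

theorem eq_one_or_neg_one_of_mem_torsion (hK : Module.finrank ℚ K = 2) (hm : Squarefree m)
    (hm4 : m % 4 = 3) (hm3 : 3 < m) (hs : s ^ 2 = -(m : K)) {u : (𝓞 K)ˣ}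
    (hu : u ∈ Units.torsion K) : u = 1 ∨ u = -1 := by
  obtain ⟨θ, hθ⟩ := exists_ringOfIntegers_eq_half_one_add hm4 hs
  obtain ⟨a, b, hab⟩ := exists_int_add_int_mul_of_sq_eq_neg hK hm hm4 hs hθ u
  have w : InfinitePlace K := Classical.arbitrary _
  have hs' : w.embedding s ^ 2 = -(m : ℂ) := by rw [← map_pow, hs, map_neg, map_natCast]
  have hw := (Units.mem_torsion K).1 hu w
  rw [← InfinitePlace.norm_embedding_eq, hab] at hw
  simp only [map_add, map_mul, map_intCast, hθ, map_div₀, map_one, map_ofNat] at hw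
  have hnorm := Complex.mul_conj' ((a : ℂ) + b * ((1 + w.embedding s) / 2))
  rw [hw] at hnorm
  simp only [map_add, map_mul, map_intCast, map_div₀, map_one, map_ofNat,
    conj_eq_neg_of_sq_eq_neg hm.ne_zero hs'] at hnorm
  have hZ : (2 * a + b) ^ 2 + m * b ^ 2 = 4 := by
    have : (((2 * a + b) ^ 2 + m * b ^ 2 : ℤ) : ℂ) = (4 : ℤ) := by
      push_cast at hnorm ⊢
      linear_combination 4 * hnorm + (b : ℂ) ^ 2 * hs'
    exact_mod_cast this
  have hb : b = 0 := by
    by_contra hb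
    have : 0 < b ^ 2 := by positivity
    nlinarith [sq_nonneg (2 * a + b), show (7 : ℤ) ≤ m by lia]
  rw [hb, add_zero, zero_pow two_ne_zero, mul_zero, add_zero] at hZ
  rw [hb, Int.cast_zero, zero_mul, add_zero] at hab
  have ha : a = 1 ∨ a = -1 := sq_eq_one_iff.1 (by linarith)
  refine ha.imp (fun h => Units.ext ?_) fun h => Units.ext ?_
  · rw [hab, h, Int.cast_one, Units.val_one]
  · rw [hab, h, Int.cast_neg, Int.cast_one, Units.val_neg, Units.val_one]

theorem torsionOrder_eq_two_of_sq_eq_neg (hK : Module.finrank ℚ K = 2) (hm : Squarefree m)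
    (hm4 : m % 4 = 3) (hm3 : 3 < m) (hs : s ^ 2 = -(m : K)) : Units.torsionOrder K = 2 := by
  have hset : (Units.torsion K : Set (𝓞 K)ˣ) = {1, -1} := by
    refine Set.Subset.antisymm
      (fun u hu => eq_one_or_neg_one_of_mem_torsion hK hm hm4 hm3 hs hu) ?_
    rintro u (rfl | rfl)
    · exact one_mem _
    · exact (Units.mem_torsion K).2 fun w => by simp [← InfinitePlace.norm_embedding_eq]
  rw [Units.torsionOrder, ← SetLike.coe_sort_coe, Nat.card_coe_set_eq, hset, Set.ncard_pair]
  intro h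
  have := congrArg (fun u : (𝓞 K)ˣ => ((u : 𝓞 K) : K)) h
  norm_num [eq_neg_iff_add_eq_zero] at this

theorem dedekindZeta_residue_of_sq_eq_neg (hK : Module.finrank ℚ K = 2) (hm : Squarefree m)
    (hm4 : m % 4 = 3) (hm3 : 3 < m) (hs : s ^ 2 = -(m : K)) :
    dedekindZeta_residue K = Real.pi * classNumber K / Real.sqrt m := by
  have hr : InfinitePlace.nrRealPlaces K = 0 :=
    nrRealPlaces_eq_zero_iff.2 (isTotallyComplex_of_sq_eq_neg hm.ne_zero hs)
  have hc : InfinitePlace.nrComplexPlaces K = 1 := by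
    have := InfinitePlace.card_add_two_mul_card_eq_rank K
    lia
  have hrank : Units.rank K = 0 := by
    rw [Units.rank, InfinitePlace.card_eq_nrRealPlaces_add_nrComplexPlaces, hr, hc]
  rw [dedekindZeta_residue_def, hr, hc, regulator_eq_one_of_rank_eq_zero hrank,
    torsionOrder_eq_two_of_sq_eq_neg hK hm hm4 hm3 hs, discr_eq_neg_of_sq_eq_neg hK hm hm4 hs]
  have habs : |((-(m : ℤ) : ℤ) : ℝ)| = m := by
    rw [Int.cast_neg, abs_neg, Int.cast_natCast, Nat.abs_cast]
  rw [habs, pow_zero, pow_one, one_mul, mul_one]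
  push_cast
  rw [mul_assoc, mul_div_mul_left _ _ two_ne_zero]

end ImaginaryQuadraticField

section IdealCount

open NumberField

/-- The number of ideals of norm `n` in the ring of integers of `K`, that is, the `n`-th coefficient
of the Dedekind zeta function of `K`. -/
noncomputable def idealCount (K : Type*) [Field K] [NumberField K] (n : ℕ) : ℕ :=
  Nat.card {I : Ideal (𝓞 K) // Ideal.absNorm I = n}

section Ring

variable {R : Type*} [CommRing R]

theorem ideal_eq_top_of_isCoprime_mem {I : Ideal R} {a b : ℤ} (h : IsCoprime a b)
    (ha : (a : R) ∈ I) (hb : (b : R) ∈ I) : I = ⊤ := by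
  obtain ⟨u, v, huv⟩ := h
  have h1 : (u : R) * a + v * b = 1 := by exact_mod_cast congrArg (Int.cast : ℤ → R) huv
  rw [Ideal.eq_top_iff_one, ← h1]
  exact I.add_mem (I.mul_mem_left _ ha) (I.mul_mem_left _ hb)

theorem sup_span_natCast_eq_top {m n : ℕ} (h : m.Coprime n) {J : Ideal R} (hJ : (n : R) ∈ J) :
    J ⊔ Ideal.span {(m : R)} = ⊤ := by
  refine ideal_eq_top_of_isCoprime_mem (Nat.isCoprime_iff_coprime.2 h)
    (Ideal.mem_sup_right ?_) (Ideal.mem_sup_left ?_)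
  · exact_mod_cast Ideal.mem_span_singleton_self (m : R)
  · exact_mod_cast hJ

theorem mul_sup_span_natCast_eq_left {m n : ℕ} (h : m.Coprime n) {I J : Ideal R}
    (hI : (m : R) ∈ I) (hJ : (n : R) ∈ J) : I * J ⊔ Ideal.span {(m : R)} = I := by
  refine le_antisymm (sup_le Ideal.mul_le_left ((Ideal.span_singleton_le_iff_mem _).2 hI)) ?_
  calc I = I * (J ⊔ Ideal.span {(m : R)}) := by rw [sup_span_natCast_eq_top h hJ, Ideal.mul_top]
    _ = I * J ⊔ I * Ideal.span {(m : R)} := Ideal.mul_sup _ _ _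
    _ ≤ I * J ⊔ Ideal.span {(m : R)} := sup_le_sup_left Ideal.mul_le_right _

theorem sup_span_mul_sup_span_eq_self {m n : ℕ} (h : m.Coprime n) {L : Ideal R}
    (hL : ((m * n : ℕ) : R) ∈ L) :
    (L ⊔ Ideal.span {(m : R)}) * (L ⊔ Ideal.span {(n : R)}) = L := by
  set A := Ideal.span {(m : R)} with hA
  set B := Ideal.span {(n : R)} with hB
  have hAB : A * B ≤ L := by
    rwa [hA, hB, Ideal.span_singleton_mul_span_singleton, Ideal.span_singleton_le_iff_mem,
      ← Nat.cast_mul]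
  have hBA : B ⊔ A = ⊤ := sup_span_natCast_eq_top h (Ideal.mem_span_singleton_self _)
  apply le_antisymm
  · rw [Ideal.sup_mul, Ideal.mul_sup, Ideal.mul_sup]
    exact sup_le (sup_le Ideal.mul_le_left Ideal.mul_le_left) (sup_le Ideal.mul_le_right hAB)
  · calc L = L * (B ⊔ A) := by rw [hBA, Ideal.mul_top]
      _ = L * B ⊔ A * L := by rw [Ideal.mul_sup, mul_comm L A]
      _ ≤ (L ⊔ A) * (L ⊔ B) := sup_le (Ideal.mul_mono le_sup_left le_sup_right)
        (Ideal.mul_mono le_sup_right le_sup_left)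

theorem span_pair_mul_span_pair_eq_span {θ : R} {c : ℕ} (hθ : θ ^ 2 = θ - c) {q b : ℤ}
    (hb : q ∣ b ^ 2 - b + c) (hcop : IsCoprime q (2 * b - 1)) :
    Ideal.span {(q : R), θ - b} * Ideal.span {(q : R), θ - (1 - b)} = Ideal.span {(q : R)} := by
  have hq := Ideal.mem_span_singleton_self (q : R)
  rw [Ideal.span_pair_mul_span_pair]
  apply le_antisymm
  · rw [Ideal.span_le]
    rintro x (rfl | rfl | rfl | rfl)
    · exact Ideal.mul_mem_left _ _ hq
    · exact Ideal.mul_mem_right _ _ hq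
    · exact Ideal.mul_mem_left _ _ hq
    · obtain ⟨t, ht⟩ := hb
      have htR : (b : R) ^ 2 - b + c = q * t := by
        exact_mod_cast congrArg (Int.cast : ℤ → R) ht
      exact Ideal.mem_span_singleton.2 ⟨-t, by linear_combination hθ - htR⟩
  · obtain ⟨u, v, huv⟩ := hcop
    have huvR : (u : R) * q + v * (2 * b - 1) = 1 := by
      exact_mod_cast congrArg (Int.cast : ℤ → R) huv
    have hcomb : (q : R) = u * (q * q) + v * (q * (θ - (1 - b)) - (θ - b) * q) := by
      linear_combination -(q : R) * huvR
    set J := Ideal.span {(q : R) * q, q * (θ - (1 - b)), (θ - b) * q, (θ - b) * (θ - (1 - b))}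
    rw [Ideal.span_singleton_le_iff_mem, hcomb]
    exact Ideal.add_mem _ (Ideal.mul_mem_left _ _ (Ideal.subset_span (by simp)))
      (Ideal.mul_mem_left _ _ (Ideal.sub_mem _ (Ideal.subset_span (by simp))
        (Ideal.subset_span (by simp))))

theorem pow_mul_pow_ne_of_lt {M : Type*} [CommMonoidWithZero M] [IsCancelMulZero M] {x y : M}
    (hx : Prime x) (hy : ¬ x ∣ y) {i i' j j' : ℕ} (h : i < i') :
    x ^ i * y ^ j ≠ x ^ i' * y ^ j' := by
  intro heq
  obtain ⟨d, rfl⟩ := Nat.exists_eq_add_of_lt h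
  rw [add_assoc, pow_add, mul_assoc] at heq
  have hdvd := mul_left_cancel₀ (pow_ne_zero i hx.ne_zero) heq
  exact hy (hx.dvd_of_dvd_pow (hdvd ▸ (dvd_pow_self x d.succ_ne_zero).mul_right _))

end Ring

variable {K : Type*} [Field K] [NumberField K] {m n q : ℕ}

theorem natCast_mem_of_absNorm_eq {I : Ideal (𝓞 K)} (h : Ideal.absNorm I = n) : (n : 𝓞 K) ∈ I :=
  h ▸ Ideal.absNorm_mem I

theorem absNorm_span_natCast (n : ℕ) :
    Ideal.absNorm (Ideal.span {(n : 𝓞 K)}) = n ^ Module.finrank ℚ K := by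
  have hcast : (n : 𝓞 K) = algebraMap ℤ (𝓞 K) n := by rw [eq_intCast, Int.cast_natCast]
  rw [Ideal.absNorm_span_singleton, hcast, Algebra.norm_algebraMap, RingOfIntegers.rank,
    Int.natAbs_pow, Int.natAbs_natCast]

theorem absNorm_sup_span_of_coprime (h : m.Coprime n) {L : Ideal (𝓞 K)}
    (hL : Ideal.absNorm L = m * n) : Ideal.absNorm (L ⊔ Ideal.span {(m : 𝓞 K)}) = m := by
  set A := L ⊔ Ideal.span {(m : 𝓞 K)}
  set B := L ⊔ Ideal.span {(n : 𝓞 K)}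
  have hprod : Ideal.absNorm A * Ideal.absNorm B = m * n := by
    rw [← map_mul, sup_span_mul_sup_span_eq_self h (natCast_mem_of_absNorm_eq hL), hL]
  have hA : (Ideal.absNorm A).Coprime n := by
    refine Nat.Coprime.coprime_dvd_left ?_ (h.pow_left (Module.finrank ℚ K))
    rw [← absNorm_span_natCast (K := K)]
    exact Ideal.absNorm_dvd_absNorm_of_le le_sup_right
  have hB : m.Coprime (Ideal.absNorm B) := by
    refine Nat.Coprime.coprime_dvd_right ?_ (h.pow_right (Module.finrank ℚ K))
    rw [← absNorm_span_natCast (K := K)]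
    exact Ideal.absNorm_dvd_absNorm_of_le le_sup_right
  exact Nat.dvd_antisymm (hA.dvd_of_dvd_mul_right (Dvd.intro _ hprod))
    (hB.dvd_of_dvd_mul_right (Dvd.intro _ hprod.symm))

theorem idealCount_mul_of_coprime (h : m.Coprime n) :
    idealCount K (m * n) = idealCount K m * idealCount K n := by
  rw [idealCount, idealCount, idealCount, ← Nat.card_prod]
  refine (Nat.card_eq_of_bijective
    (fun x : {I : Ideal (𝓞 K) // Ideal.absNorm I = m} × {I : Ideal (𝓞 K) // Ideal.absNorm I = n} =>
      (⟨x.1.1 * x.2.1, by rw [map_mul, x.1.2, x.2.2]⟩ :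
        {I : Ideal (𝓞 K) // Ideal.absNorm I = m * n})) ⟨?_, ?_⟩).symm
  · rintro ⟨⟨I, hI⟩, ⟨J, hJ⟩⟩ ⟨⟨I', hI'⟩, ⟨J', hJ'⟩⟩ heq
    rw [Subtype.mk.injEq] at heq
    have hIm := natCast_mem_of_absNorm_eq hI
    have hJn := natCast_mem_of_absNorm_eq hJ
    have hIm' := natCast_mem_of_absNorm_eq hI'
    have hJn' := natCast_mem_of_absNorm_eq hJ'
    simp only [Prod.mk.injEq, Subtype.mk.injEq]
    constructor
    · rw [← mul_sup_span_natCast_eq_left h hIm hJn, heq, mul_sup_span_natCast_eq_left h hIm' hJn']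
    · rw [← mul_sup_span_natCast_eq_left h.symm hJn hIm, mul_comm J, heq, mul_comm I',
        mul_sup_span_natCast_eq_left h.symm hJn' hIm']
  · rintro ⟨L, hL⟩
    exact ⟨⟨⟨_, absNorm_sup_span_of_coprime h hL⟩,
      ⟨_, absNorm_sup_span_of_coprime h.symm (mul_comm m n ▸ hL)⟩⟩,
      Subtype.ext (sup_span_mul_sup_span_eq_self h (natCast_mem_of_absNorm_eq hL))⟩

theorem dvd_span_natCast_pow {k : ℕ} {I : Ideal (𝓞 K)} (hI : Ideal.absNorm I = q ^ k) :
    I ∣ Ideal.span {(q : 𝓞 K)} ^ k := by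
  rw [Ideal.dvd_iff_le, Ideal.span_singleton_pow, Ideal.span_singleton_le_iff_mem, ← Nat.cast_pow]
  exact natCast_mem_of_absNorm_eq hI

theorem prime_of_absNorm_eq_prime (hq : q.Prime) {P : Ideal (𝓞 K)} (hP : Ideal.absNorm P = q) :
    Prime P := by
  refine Ideal.prime_of_isPrime ?_ (Ideal.isPrime_of_irreducible_absNorm (hP ▸ hq))
  rintro rfl
  exact hq.ne_zero (hP ▸ Ideal.absNorm_bot)

theorem idealCount_prime_pow_of_inert (hq : q.Prime) (hK : Module.finrank ℚ K = 2)
    (hP : (Ideal.span {(q : 𝓞 K)}).IsPrime) (k : ℕ) :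
    idealCount K (q ^ k) = if Even k then 1 else 0 := by
  set P := Ideal.span {(q : 𝓞 K)} with hPdef
  have hprime : Prime P := Ideal.prime_of_isPrime
    (by rw [hPdef, Ne, Ideal.span_singleton_eq_bot]; exact_mod_cast hq.ne_zero) hP
  have hN : Ideal.absNorm P = q ^ 2 := by rw [hPdef, absNorm_span_natCast, hK]
  have hpow (I : Ideal (𝓞 K)) (hI : Ideal.absNorm I = q ^ k) : ∃ i, I = P ^ i ∧ 2 * i = k := by
    obtain ⟨i, -, hi⟩ := (dvd_prime_pow hprime _).1 (dvd_span_natCast_pow hI)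
    rw [associated_iff_eq] at hi
    rw [hi, map_pow, hN, ← pow_mul] at hI
    exact ⟨i, hi, Nat.pow_right_injective hq.two_le hI⟩
  unfold idealCount
  split_ifs with hk
  · obtain ⟨j, rfl⟩ := hk.exists_two_nsmul
    rw [Nat.card_eq_one_iff_exists]
    refine ⟨⟨P ^ j, by rw [map_pow, hN, ← pow_mul, smul_eq_mul]⟩, fun ⟨I, hI⟩ => Subtype.ext ?_⟩
    obtain ⟨i, hi, hij⟩ := hpow I hI
    exact hi.trans (by rw [Nat.eq_of_mul_eq_mul_left two_pos hij])
  · refine Nat.card_eq_zero.2 (Or.inl ⟨fun ⟨I, hI⟩ => ?_⟩)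
    obtain ⟨i, -, rfl⟩ := hpow I hI
    exact hk (even_two_mul i)

theorem idealCount_prime_pow_of_ramified (hq : q.Prime) {P : Ideal (𝓞 K)}
    (hN : Ideal.absNorm P = q) (hP : P ^ 2 = Ideal.span {(q : 𝓞 K)}) (k : ℕ) :
    idealCount K (q ^ k) = 1 := by
  refine Nat.card_eq_one_iff_exists.2 ⟨⟨P ^ k, by rw [map_pow, hN]⟩, fun ⟨I, hI⟩ => Subtype.ext ?_⟩
  have hdvd := dvd_span_natCast_pow hI
  rw [← hP, ← pow_mul] at hdvd
  obtain ⟨i, -, hi⟩ := (dvd_prime_pow (prime_of_absNorm_eq_prime hq hN) _).1 hdvd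
  rw [associated_iff_eq] at hi
  rw [hi, map_pow, hN] at hI
  exact hi.trans (by rw [Nat.pow_right_injective hq.two_le hI])

theorem idealCount_prime_pow_of_split (hq : q.Prime) {P Q : Ideal (𝓞 K)}
    (hPN : Ideal.absNorm P = q) (hQN : Ideal.absNorm Q = q) (hPQ : P ≠ Q)
    (hmul : P * Q = Ideal.span {(q : 𝓞 K)}) (k : ℕ) : idealCount K (q ^ k) = k + 1 := by
  have hP := prime_of_absNorm_eq_prime hq hPN
  have hQ := prime_of_absNorm_eq_prime hq hQN
  have hnd : ¬ P ∣ Q := fun h => hPQ (associated_iff_eq.1 ((hP.dvd_prime_iff_associated hQ).1 h))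
  have hN (i j : ℕ) : Ideal.absNorm (P ^ i * Q ^ j) = q ^ (i + j) := by
    rw [map_mul, map_pow, map_pow, hPN, hQN, pow_add]
  rw [idealCount, ← Nat.card_fin (k + 1)]
  refine (Nat.card_eq_of_bijective
    (fun x : Fin (k + 1) => (⟨P ^ (x : ℕ) * Q ^ (k - x), by
      rw [hN, Nat.add_sub_cancel' (Nat.le_of_lt_succ x.2)]⟩ :
        {I : Ideal (𝓞 K) // Ideal.absNorm I = q ^ k})) ⟨fun x y hxy => ?_, fun ⟨I, hI⟩ => ?_⟩).symm
  · rw [Subtype.mk.injEq] at hxy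
    rcases lt_trichotomy (x : ℕ) y with h | h | h
    · exact (pow_mul_pow_ne_of_lt hP hnd h hxy).elim
    · exact Fin.ext h
    · exact (pow_mul_pow_ne_of_lt hP hnd h hxy.symm).elim
  · have hdvd := dvd_span_natCast_pow hI
    rw [← hmul, mul_pow] at hdvd
    obtain ⟨I₁, I₂, h₁, h₂, rfl⟩ := exists_dvd_and_dvd_of_dvd_mul hdvd
    obtain ⟨i, -, hi⟩ := (dvd_prime_pow hP _).1 h₁
    obtain ⟨j, -, hj⟩ := (dvd_prime_pow hQ _).1 h₂
    obtain rfl := associated_iff_eq.1 hi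
    obtain rfl := associated_iff_eq.1 hj
    rw [hN] at hI
    obtain rfl := Nat.pow_right_injective hq.two_le hI
    exact ⟨⟨i, by lia⟩, Subtype.ext (by simp only [Nat.add_sub_cancel_left])⟩

section Legendre

variable {l : ℕ} [Fact l.Prime] {c : ℕ}

theorem legendreSym_two_eq_one_iff (hl : l % 4 = 3) (hc : 1 + l = 4 * c) :
    legendreSym l (2 : ℕ) = 1 ↔ ∃ b : ℤ, ((2 : ℕ) : ℤ) ∣ b ^ 2 - b + c := by
  have heven (b : ℤ) : ((2 : ℕ) : ℤ) ∣ b ^ 2 - b := by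
    rw [Nat.cast_ofNat, ← even_iff_two_dvd, sq, ← mul_sub_one]
    exact Int.even_mul_pred_self b
  have hdvd : (∃ b : ℤ, ((2 : ℕ) : ℤ) ∣ b ^ 2 - b + c) ↔ 2 ∣ c := by
    simp only [Int.dvd_add_right (heven _), exists_const, Int.natCast_dvd_natCast]
  rw [hdvd, Nat.cast_ofNat, legendreSym.at_two (by lia), ZMod.χ₈_nat_eq_if_mod_eight]
  split_ifs <;> lia

theorem legendreSym_eq_legendreSym_neg (hl : l % 4 = 3) {q : ℕ} [Fact q.Prime] (hq : q ≠ 2) :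
    legendreSym l q = legendreSym q (-l) := by
  rw [legendreSym.at_neg hq, legendreSym.quadratic_reciprocity' (by lia) hq,
    ZMod.χ₄_eq_neg_one_pow ((Fact.out : q.Prime).eq_two_or_odd.resolve_left hq), ← mul_assoc,
    ← pow_add, ← one_add_mul, Even.neg_one_pow, one_mul]
  exact Even.mul_right (by rw [Nat.even_iff]; lia) _

theorem legendreSym_neg_eq_one_iff (hc : 1 + l = 4 * c) {q : ℕ} [Fact q.Prime] (hq : q ≠ 2)
    (hql : q ≠ l) : legendreSym q (-l) = 1 ↔ ∃ b : ℤ, (q : ℤ) ∣ b ^ 2 - b + c := by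
  have hc' : (1 + l : ZMod q) = 4 * c := by exact_mod_cast congrArg (Nat.cast : ℕ → ZMod q) hc
  have h2 : (2 : ZMod q) ≠ 0 := by
    have := ZMod.prime_ne_zero q 2 hq
    exact_mod_cast this
  rw [legendreSym.eq_one_iff _ (by
    rw [Int.cast_neg, neg_ne_zero, Int.cast_natCast]
    exact ZMod.prime_ne_zero q l hql)]
  constructor
  · rintro ⟨y, hy⟩
    refine ⟨(((1 + y) / 2 : ZMod q).val : ℤ), ?_⟩
    rw [← ZMod.intCast_zmod_eq_zero_iff_dvd]
    push_cast at hy ⊢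
    rw [ZMod.natCast_zmod_val]
    field_simp
    linear_combination -hc' - hy
  · rintro ⟨b, hb⟩
    rw [← ZMod.intCast_zmod_eq_zero_iff_dvd] at hb
    push_cast at hb
    refine ⟨2 * b - 1, ?_⟩
    push_cast
    linear_combination -4 * hb - hc'

theorem legendreSym_natCast_eq_one_iff (hl : l % 4 = 3) (hc : 1 + l = 4 * c) {q : ℕ}
    (hq : q.Prime) (hql : q ≠ l) :
    legendreSym l q = 1 ↔ ∃ b : ℤ, (q : ℤ) ∣ b ^ 2 - b + c := by
  have := Fact.mk hq
  rcases eq_or_ne q 2 with rfl | hq2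
  · exact legendreSym_two_eq_one_iff hl hc
  · rw [legendreSym_eq_legendreSym_neg hl hq2, legendreSym_neg_eq_one_iff hc hq2 hql]

end Legendre

section Splitting

variable {l c : ℕ} {s : K} {θ : 𝓞 K}

theorem sub_intCast_notMem_span_natCast (hK : Module.finrank ℚ K = 2) (hm : Squarefree m)
    (hm4 : m % 4 = 3) (hs : s ^ 2 = -(m : K)) (hθ : algebraMap (𝓞 K) K θ = (1 + s) / 2) (hq : q ≠ 1)
    (d : ℤ) : θ - d ∉ Ideal.span {(q : 𝓞 K)} := by
  intro hd
  obtain ⟨t, ht⟩ := Ideal.mem_span_singleton'.1 hd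
  obtain ⟨x, y, rfl⟩ := exists_int_add_int_mul_of_sq_eq_neg hK hm hm4 hs hθ t
  have hzero : (x * q + d) • (1 : 𝓞 K) + (y * q - 1) • θ = 0 := by
    rw [zsmul_eq_mul, zsmul_eq_mul]
    push_cast
    linear_combination ht
  have hy := (LinearIndependent.pair_iff.1 (linearIndependent_one_half_one_add hm.ne_zero hs hθ)
    _ _ hzero).2
  exact hq (Nat.dvd_one.1 (Int.natCast_dvd_natCast.1 ⟨y, by push_cast; linarith⟩))

theorem idealCount_prime_pow_of_dvd_of_not_dvd (hK : Module.finrank ℚ K = 2) (hm : Squarefree m)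
    (hs : s ^ 2 = -(m : K)) (hθ : algebraMap (𝓞 K) K θ = (1 + s) / 2) (hc : 1 + m = 4 * c)
    (hq : q.Prime) {b : ℤ} (hb : (q : ℤ) ∣ b ^ 2 - b + c) (hb' : ¬ (q : ℤ) ∣ 2 * b - 1) (k : ℕ) :
    idealCount K (q ^ k) = k + 1 := by
  have hcop := (Nat.prime_iff_prime_int.1 hq).coprime_iff_not_dvd.2 hb'
  have hPQ := span_pair_mul_span_pair_eq_span (sq_eq_of_algebraMap_eq_half_one_add hs hθ hc) hb hcop
  rw [Int.cast_natCast] at hPQ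
  set P := Ideal.span {(q : 𝓞 K), θ - b}
  set Q := Ideal.span {(q : 𝓞 K), θ - (1 - b)}
  have hθP : θ - b ∈ P := Ideal.subset_span (by simp)
  have hθQ : θ - (1 - b) ∈ Q := Ideal.subset_span (by simp)
  have hnotMem := sub_intCast_notMem_span_natCast hK hm (by lia) hs hθ hq.ne_one
  have hP : P ≠ ⊤ := by
    intro h
    rw [h, Ideal.top_mul] at hPQ
    exact hnotMem (1 - b) (by rwa [Int.cast_sub, Int.cast_one, ← hPQ])
  have hQ : Q ≠ ⊤ := by
    intro h
    rw [h, Ideal.mul_top] at hPQ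
    exact hnotMem b (hPQ ▸ hθP)
  have hne : P ≠ Q := by
    refine fun h => hP (ideal_eq_top_of_isCoprime_mem hcop ?_ ?_)
    · exact Ideal.subset_span (by simp)
    · have hdiff : ((2 * b - 1 : ℤ) : 𝓞 K) = (θ - (1 - b)) - (θ - b) := by
        push_cast
        ring
      exact hdiff ▸ P.sub_mem (h ▸ hθQ) hθP
  have hN : Ideal.absNorm P * Ideal.absNorm Q = q ^ 2 := by
    rw [← map_mul, hPQ, absNorm_span_natCast, hK]
  obtain ⟨hPN, hQN⟩ := (hq.mul_eq_prime_sq_iff (by rwa [Ne, Ideal.absNorm_eq_one_iff])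
    (by rwa [Ne, Ideal.absNorm_eq_one_iff])).1 hN
  exact idealCount_prime_pow_of_split hq hPN hQN hne hPQ k

theorem exists_sub_intCast_mem_of_absNorm_eq_prime (hq : q.Prime) {M : Ideal (𝓞 K)}
    (hM : Ideal.absNorm M = q) (x : 𝓞 K) : ∃ b : ℤ, x - b ∈ M := by
  have hcard : Nat.card (𝓞 K ⧸ M) = q := hM
  have : Finite (𝓞 K ⧸ M) := Nat.finite_of_card_ne_zero (hcard ▸ hq.ne_zero)
  have := Fintype.ofFinite (𝓞 K ⧸ M)
  let e := ZMod.ringEquivOfPrime (𝓞 K ⧸ M) hq (by rw [← hcard, Nat.card_eq_fintype_card])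
  obtain ⟨b, hb⟩ := ZMod.intCast_surjective (e.symm (Ideal.Quotient.mk M x))
  refine ⟨b, (Ideal.Quotient.mk_eq_mk_iff_sub_mem _ _).1 ?_⟩
  rw [map_intCast, ← map_intCast e, hb, RingEquiv.apply_symm_apply]

theorem isPrime_span_natCast_of_forall_not_dvd (hK : Module.finrank ℚ K = 2)
    (hθ : θ ^ 2 = θ - c) (hq : q.Prime) (h : ∀ b : ℤ, ¬ (q : ℤ) ∣ b ^ 2 - b + c) :
    (Ideal.span {(q : 𝓞 K)}).IsPrime := by
  have hN : Ideal.absNorm (Ideal.span {(q : 𝓞 K)}) = q ^ 2 := by rw [absNorm_span_natCast, hK]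
  have hne : Ideal.span {(q : 𝓞 K)} ≠ ⊤ := by
    rw [Ne, ← Ideal.absNorm_eq_one_iff, hN]
    exact (Nat.one_lt_pow two_ne_zero hq.one_lt).ne'
  obtain ⟨M, hM, hle⟩ := Ideal.exists_le_maximal _ hne
  obtain ⟨M', hM'⟩ := Ideal.dvd_iff_le.2 hle
  by_cases hM'top : M' = ⊤
  · rw [hM', hM'top, Ideal.mul_top]
    exact hM.isPrime
  rw [hM', map_mul] at hN
  obtain ⟨hMN, -⟩ := (hq.mul_eq_prime_sq_iff (by rw [Ne, Ideal.absNorm_eq_one_iff]; exact hM.ne_top)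
    (by rwa [Ne, Ideal.absNorm_eq_one_iff])).1 hN
  obtain ⟨b, hb⟩ := exists_sub_intCast_mem_of_absNorm_eq_prime hq hMN θ
  have hval : ((b ^ 2 - b + c : ℤ) : 𝓞 K) = -((θ - b) * (θ - (1 - b))) := by
    push_cast
    linear_combination hθ
  refine (hM.ne_top (ideal_eq_top_of_isCoprime_mem
    ((Nat.prime_iff_prime_int.1 hq).coprime_iff_not_dvd.2 (h b)) ?_ ?_)).elim
  · exact_mod_cast hle (Ideal.mem_span_singleton_self (q : 𝓞 K))
  · exact hval ▸ M.neg_mem (M.mul_mem_right _ hb)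

theorem idealCount_prime_pow_self (hK : Module.finrank ℚ K = 2) (hq : q.Prime)
    (hθ : θ ^ 2 = θ - c) (hc : 1 + q = 4 * c) (k : ℕ) : idealCount K (q ^ k) = 1 := by
  have hcR : (1 + q : 𝓞 K) = 4 * c := by exact_mod_cast congrArg (Nat.cast : ℕ → 𝓞 K) hc
  have hP : Ideal.span {2 * θ - 1} ^ 2 = Ideal.span {(q : 𝓞 K)} := by
    have hsq : (2 * θ - 1) ^ 2 = -(q : 𝓞 K) := by linear_combination 4 * hθ + hcR
    rw [Ideal.span_singleton_pow, hsq, Ideal.span_singleton_neg]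
  refine idealCount_prime_pow_of_ramified hq (Nat.pow_left_injective two_ne_zero ?_) hP k
  simp only [← map_pow, hP, absNorm_span_natCast, hK]

theorem idealCount_prime_pow_of_ne [Fact l.Prime] (hK : Module.finrank ℚ K = 2)
    (hs : s ^ 2 = -(l : K)) (hθ : algebraMap (𝓞 K) K θ = (1 + s) / 2) (hc : 1 + l = 4 * c)
    (hq : q.Prime) (hql : q ≠ l) (k : ℕ) :
    (idealCount K (q ^ k) : ℤ) = ∑ i ∈ Finset.range (k + 1), legendreSym l q ^ i := by
  have hl : l.Prime := Fact.out
  have := Fact.mk hq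
  have hiff := legendreSym_natCast_eq_one_iff (l := l) (by lia) hc hq hql
  have hlq : legendreSym l q = 1 ∨ legendreSym l q = -1 :=
    legendreSym.eq_one_or_neg_one l (by exact_mod_cast ZMod.prime_ne_zero l q hql.symm)
  rcases hlq with h1 | h1
  · obtain ⟨b, hb⟩ := hiff.1 h1
    have hb' : ¬ (q : ℤ) ∣ 2 * b - 1 := by
      intro h
      have hdvd : (q : ℤ) ∣ l := by
        have hl' : (l : ℤ) = 4 * (b ^ 2 - b + c) - (2 * b - 1) * (2 * b - 1) := by
          linear_combination (by exact_mod_cast hc : (1 : ℤ) + l = 4 * c)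
        exact hl' ▸ dvd_sub (hb.mul_left _) (h.mul_left _)
      exact hql ((Nat.prime_dvd_prime_iff_eq hq hl).1 (Int.natCast_dvd_natCast.1 hdvd))
    rw [idealCount_prime_pow_of_dvd_of_not_dvd hK hl.prime.squarefree hs hθ hc hq hb hb', h1]
    simp
  · have hθ2 := sq_eq_of_algebraMap_eq_half_one_add hs hθ hc
    have hb : ∀ b : ℤ, ¬ (q : ℤ) ∣ b ^ 2 - b + c := by
      rw [← not_exists, ← hiff, h1]
      decide
    rw [idealCount_prime_pow_of_inert hq hK (isPrime_span_natCast_of_forall_not_dvd hK hθ2 hq hb),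
      h1, neg_one_geom_sum]
    split_ifs <;> simp_all [parity_simps]

theorem idealCount_prime_pow [Fact l.Prime] (hK : Module.finrank ℚ K = 2) (hl : l % 4 = 3)
    (hs : s ^ 2 = -(l : K)) (hq : q.Prime) (k : ℕ) :
    (idealCount K (q ^ k) : ℤ) = ∑ i ∈ Finset.range (k + 1), legendreSym l q ^ i := by
  obtain ⟨θ, hθ⟩ := exists_ringOfIntegers_eq_half_one_add hl hs
  obtain ⟨c, hc⟩ : ∃ c, 1 + l = 4 * c := ⟨(1 + l) / 4, by lia⟩
  rcases eq_or_ne q l with rfl | hql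
  · have h0 : legendreSym q q = 0 := by rw [legendreSym.eq_zero_iff]; simp
    rw [idealCount_prime_pow_self hK hq (sq_eq_of_algebraMap_eq_half_one_add hs hθ hc) hc, h0,
      Finset.sum_range_succ']
    simp
  · exact idealCount_prime_pow_of_ne hK hs hθ hc hq hql k

end Splitting

end IdealCount

section PeriodicZeta

open Filter Topology HurwitzZeta

theorem one_sub_mem_slitPlane {w : ℂ} (hw : ‖w‖ ≤ 1) (hw1 : w ≠ 1) : 1 - w ∈ slitPlane := by
  refine mem_slitPlane_iff.2 (or_iff_not_imp_right.2 fun him => ?_)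
  have him' : w.im = 0 := by simpa using him
  have hre : w.re ≠ 1 := fun h => hw1 (Complex.ext h him')
  simpa using lt_of_le_of_ne ((re_le_norm w).trans hw) hre

section Antiderivative

variable {z : ℂ} (hz : ‖z‖ = 1)

include hz in
theorem norm_mul_exp_neg (t : ℝ) : ‖z * exp (-t)‖ = Real.exp (-t) := by
  rw [norm_mul, hz, one_mul, norm_exp]
  simp

include hz in
theorem one_sub_mul_exp_neg_mem_slitPlane (hz1 : z ≠ 1) {t : ℝ} (ht : 0 ≤ t) :
    1 - z * exp (-t) ∈ slitPlane := by
  refine one_sub_mem_slitPlane (by rw [norm_mul_exp_neg hz]; simpa) fun h => hz1 ?_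
  have ht0 : t = 0 := by simpa [h] using (norm_mul_exp_neg hz t).symm
  simpa [ht0] using h

theorem tendsto_one_sub_mul_exp_neg (z : ℂ) :
    Tendsto (fun t : ℝ => 1 - z * exp (-t)) atTop (𝓝 1) := by
  have hexp : Tendsto (fun t : ℝ => exp (-t)) atTop (𝓝 0) :=
    tendsto_exp_comap_re_atBot.comp (tendsto_comap_iff.2 (by simpa using! tendsto_neg_atTop_atBot))
  simpa using (hexp.const_mul z).const_sub 1

include hz in
theorem hasDerivAt_log_one_sub_mul_exp_neg (hz1 : z ≠ 1) {t : ℝ} (ht : 0 ≤ t) :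
    HasDerivAt (fun t : ℝ => log (1 - z * exp (-t))) (z * exp (-t) / (1 - z * exp (-t))) t := by
  have hexp : HasDerivAt (fun t : ℝ => exp (-t)) (exp (-t) * -1) t :=
    ((hasDerivAt_id (t : ℂ)).neg.cexp).comp_ofReal
  simpa using ((hexp.const_mul z).const_sub 1).clog_real
    (one_sub_mul_exp_neg_mem_slitPlane hz hz1 ht)

include hz in
theorem continuousOn_mul_exp_neg_div (hz1 : z ≠ 1) :
    ContinuousOn (fun t : ℝ => z * exp (-t) / (1 - z * exp (-t))) (Set.Ici 0) :=
  ContinuousOn.div (by fun_prop) (by fun_prop) fun _ ht =>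
    slitPlane_ne_zero (one_sub_mul_exp_neg_mem_slitPlane hz hz1 ht)

include hz in
theorem isBigO_atTop_mul_exp_neg_div :
    (fun t : ℝ => z * exp (-t) / (1 - z * exp (-t))) =O[atTop] fun t => Real.exp (-1 * t) := by
  have hnum : (fun t : ℝ => z * exp (-t)) =O[atTop] fun t => Real.exp (-1 * t) :=
    Asymptotics.isBigO_of_le _ fun t => by simp [← norm_mul_exp_neg hz t]
  simpa [div_eq_mul_inv] using
    hnum.mul (((tendsto_one_sub_mul_exp_neg z).inv₀ one_ne_zero).isBigO_one ℝ)

include hz in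
theorem isBigO_nhdsGT_zero_mul_exp_neg_div (hz1 : z ≠ 1) :
    (fun t : ℝ => z * exp (-t) / (1 - z * exp (-t))) =O[𝓝[>] 0] fun t => t ^ (-0 : ℝ) := by
  simpa using (((continuousOn_mul_exp_neg_div hz hz1) 0 Set.self_mem_Ici).mono_left
    (nhdsWithin_mono 0 Set.Ioi_subset_Ici_self)).isBigO_one ℝ

include hz in
theorem mellin_mul_exp_neg_div_one (hz1 : z ≠ 1) :
    mellin (fun t : ℝ => z * exp (-t) / (1 - z * exp (-t))) 1 = -log (1 - z) := by
  have hintegral := mellinConvergent_of_isBigO_rpow_exp (s := 1) one_pos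
    (((continuousOn_mul_exp_neg_div hz hz1).mono Set.Ioi_subset_Ici_self).locallyIntegrableOn
      measurableSet_Ioi) (isBigO_atTop_mul_exp_neg_div hz)
    (isBigO_nhdsGT_zero_mul_exp_neg_div hz hz1) (by simp)
  have hlim : Tendsto (fun t : ℝ => log (1 - z * exp (-t))) atTop (𝓝 0) := by
    simpa using (tendsto_one_sub_mul_exp_neg z).clog one_mem_slitPlane
  simp only [MellinConvergent, sub_self, cpow_zero, one_smul] at hintegral
  simpa [mellin] using MeasureTheory.integral_Ioi_of_hasDerivAt_of_tendsto'
    (fun t ht => hasDerivAt_log_one_sub_mul_exp_neg hz hz1 ht) hintegral hlim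

end Antiderivative

theorem norm_exp_two_pi_mul_I_mul (x : ℝ) : ‖exp (2 * Real.pi * I * x)‖ = 1 := by
  rw [show 2 * (Real.pi : ℂ) * I * x = (2 * Real.pi * x : ℝ) * I by push_cast; ring,
    norm_exp_ofReal_mul_I]

theorem exp_two_pi_mul_I_mul_ne_one {x : ℝ} (hx : (x : UnitAddCircle) ≠ 0) :
    exp (2 * Real.pi * I * x) ≠ 1 := by
  rw [Ne, exp_eq_one_iff]
  rintro ⟨n, hn⟩
  have hxn : x = n := by
    exact_mod_cast mul_left_cancel₀ two_pi_I_ne_zero (hn.trans (mul_comm _ _))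
  exact hx ((AddCircle.coe_eq_zero_iff 1).2 ⟨n, by simp [hxn]⟩)

theorem Gamma_mul_expZeta_eq_mellin (x : ℝ) {s : ℂ} (hs : 1 < s.re) :
    Gamma s * expZeta x s = mellin (fun t : ℝ => exp (2 * Real.pi * I * x) * exp (-t) /
      (1 - exp (2 * Real.pi * I * x) * exp (-t))) s := by
  have hz := norm_exp_two_pi_mul_I_mul x
  set z := exp (2 * Real.pi * I * x) with hzdef
  have hzeta : HasSum (fun n : ℕ => Gamma s * z ^ (n + 1) / ((n + 1 : ℕ) : ℝ) ^ s)
      (Gamma s * expZeta x s) := by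
    have h := ((hasSum_nat_add_iff' 1).2 (hasSum_expZeta_of_one_lt_re x hs)).mul_left (Gamma s)
    have hs0 : s ≠ 0 := ne_zero_of_one_lt_re hs
    simpa [hzdef, ← exp_nat_mul, mul_comm, mul_div_assoc, zero_cpow hs0] using h
  refine hzeta.unique (hasSum_mellin (fun n => Or.inr (by positivity)) (by linarith)
    (fun t ht => ?_) ?_)
  · have hlt : ‖z * exp (-t)‖ < 1 := by
      rw [norm_mul_exp_neg hz]
      simpa using ht
    have h := (hasSum_geometric_of_norm_lt_one hlt).mul_left (z * exp (-t))
    rw [← div_eq_mul_inv] at h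
    refine h.congr_fun fun n => ?_
    rw [← pow_succ', mul_pow, ← exp_nat_mul (-t : ℂ)]
    push_cast
    ring_nf
  · simp only [norm_pow, hz, one_pow]
    exact_mod_cast (summable_nat_add_iff 1).2 (Real.summable_one_div_nat_rpow.2 hs)

theorem expZeta_one {x : ℝ} (hx : (x : UnitAddCircle) ≠ 0) :
    expZeta x 1 = -log (1 - exp (2 * Real.pi * I * x)) := by
  have hz := norm_exp_two_pi_mul_I_mul x
  have hz1 := exp_two_pi_mul_I_mul_ne_one hx
  have hofReal : Tendsto (fun s : ℝ => (s : ℂ)) (𝓝[>] 1) (𝓝 1) :=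
    (continuous_ofReal.tendsto' 1 1 ofReal_one).mono_left nhdsWithin_le_nhds
  have hzeta := (((differentiableAt_Gamma_one.mul (differentiableAt_expZeta _ 1
    (Or.inr hx))).continuousAt).tendsto.comp hofReal)
  have hmellin := ((mellin_differentiableAt_of_isBigO_rpow_exp (s := 1) one_pos
    (((continuousOn_mul_exp_neg_div hz hz1).mono Set.Ioi_subset_Ici_self).locallyIntegrableOn
      measurableSet_Ioi) (isBigO_atTop_mul_exp_neg_div hz)
    (isBigO_nhdsGT_zero_mul_exp_neg_div hz hz1) (by simp)).continuousAt).tendsto.comp hofReal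
  have heq := tendsto_nhds_unique (hzeta.congr' ?_) hmellin
  · simpa [mellin_mul_exp_neg_div_one hz hz1] using heq
  · filter_upwards [self_mem_nhdsWithin] with s hs
    exact Gamma_mul_expZeta_eq_mellin x (by simpa using hs)

theorem one_sub_exp_eq (θ : ℝ) : 1 - exp (θ * I) =
    ((2 * Real.sin (θ / 2) : ℝ) : ℂ) * exp (((θ - Real.pi) / 2 : ℝ) * I) := by
  have hθ : exp (θ * I) = exp (θ / 2 * I) * exp (θ / 2 * I) := by rw [← exp_add]; ring_nf
  have hinv : exp (-(θ / 2 : ℂ) * I) * exp (θ / 2 * I) = 1 := by rw [← exp_add]; simp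
  have hshift : exp (((θ - Real.pi) / 2 : ℝ) * I) = -I * exp (θ / 2 * I) := by
    rw [show (((θ - Real.pi) / 2 : ℝ) : ℂ) * I = θ / 2 * I - Real.pi / 2 * I by push_cast; ring,
      exp_sub, exp_pi_div_two_mul_I, div_I]
    ring
  rw [hshift, hθ]
  push_cast
  rw [Complex.sin]
  linear_combination -hinv + (exp (-(θ / 2 : ℂ) * I) * exp (θ / 2 * I) -
    exp (θ / 2 * I) * exp (θ / 2 * I)) * I_sq

theorem arg_one_sub_exp {θ : ℝ} (h0 : 0 < θ) (h1 : θ < 2 * Real.pi) :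
    arg (1 - exp (θ * I)) = (θ - Real.pi) / 2 := by
  have hsin : 0 < Real.sin (θ / 2) := Real.sin_pos_of_pos_of_lt_pi (by linarith) (by linarith)
  rw [one_sub_exp_eq, arg_real_mul _ (by positivity), arg_exp_mul_I, toIocMod_eq_self]
  constructor <;> linarith

theorem coe_unitAddCircle_ne_zero {x : ℝ} (h0 : 0 < x) (h1 : x < 1) : (x : UnitAddCircle) ≠ 0 := by
  rw [Ne, AddCircle.coe_eq_zero_iff]
  rintro ⟨n, hn⟩
  rw [zsmul_one] at hn
  have h0' : 0 < n := by exact_mod_cast hn ▸ h0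
  have h1' : n < 1 := by exact_mod_cast hn ▸ h1
  lia

theorem sinZeta_one {x : ℝ} (h0 : 0 < x) (h1 : x < 1) :
    sinZeta x 1 = Real.pi * (1 / 2 - x) := by
  have hx := coe_unitAddCircle_ne_zero h0 h1
  have hx' : ((-x : ℝ) : UnitAddCircle) ≠ 0 := by simpa using hx
  set z := exp (2 * Real.pi * I * x) with hzdef
  have harg : arg (1 - z) = Real.pi * (x - 1 / 2) := by
    rw [hzdef, show 2 * (Real.pi : ℂ) * I * x = (2 * Real.pi * x : ℝ) * I by push_cast; ring,
      arg_one_sub_exp (by positivity) (by nlinarith [Real.pi_pos])]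
    ring
  have hconj : exp (2 * Real.pi * I * (-x : ℝ)) = (starRingEnd ℂ) z := by
    rw [hzdef, ← exp_conj]
    simp [Complex.conj_ofNat]
  have hmem : 1 - z ∈ slitPlane := one_sub_mem_slitPlane (norm_exp_two_pi_mul_I_mul x).le
    (exp_two_pi_mul_I_mul_ne_one hx)
  have hlog : (starRingEnd ℂ) (log (1 - z)) - log (1 - z) = -2 * I * arg (1 - z) := by
    rw [← log_im]
    apply Complex.ext <;> simp
    ring
  rw [sinZeta_eq, ← AddCircle.coe_neg, expZeta_one hx, expZeta_one hx', hconj, neg_sub_neg,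
    ← map_one (starRingEnd ℂ), ← map_sub, log_conj _ (slitPlane_arg_ne_pi hmem), map_one, hlog,
    harg]
  push_cast
  field_simp
  ring

end PeriodicZeta

/-- The quadratic character of a finite field, with complex values; for `ZMod l` it is the
Dirichlet character given by the Legendre symbol. -/
noncomputable def complexQuadraticChar (F : Type*) [Field F] [Fintype F] [DecidableEq F] :
    MulChar F ℂ :=
  (quadraticChar F).ringHomComp (Int.castRingHom ℂ)

section ComplexQuadraticChar

variable {F : Type*} [Field F] [Fintype F] [DecidableEq F]

theorem complexQuadraticChar_apply (x : F) : complexQuadraticChar F x = (quadraticChar F x : ℂ) :=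
  rfl

theorem isQuadratic_complexQuadraticChar : (complexQuadraticChar F).IsQuadratic :=
  (quadraticChar_isQuadratic F).comp _

theorem complexQuadraticChar_ne_one (hF : ringChar F ≠ 2) : complexQuadraticChar F ≠ 1 :=
  (MulChar.ringHomComp_ne_one_iff (RingHom.injective_int _)).2 (quadraticChar_ne_one hF)

variable (l : ℕ) [Fact l.Prime]

theorem complexQuadraticChar_natCast (a : ℕ) :
    complexQuadraticChar (ZMod l) a = (legendreSym l a : ℂ) := by
  simp [complexQuadraticChar_apply, legendreSym]

variable {l} (hl : l % 4 = 3)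

theorem complexQuadraticChar_zmod_ne_one (hl2 : l ≠ 2) : complexQuadraticChar (ZMod l) ≠ 1 :=
  complexQuadraticChar_ne_one (by rwa [ZMod.ringChar_zmod_n])

include hl in
theorem complexQuadraticChar_neg_one : complexQuadraticChar (ZMod l) (-1) = -1 := by
  rw [complexQuadraticChar_apply, quadraticChar_neg_one (by rw [ZMod.ringChar_zmod_n]; lia),
    ZMod.card, ZMod.χ₄_nat_three_mod_four hl]
  simp

include hl in
theorem gaussSum_complexQuadraticChar_sq :
    gaussSum (complexQuadraticChar (ZMod l)) ZMod.stdAddChar ^ 2 = -l := by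
  rw [gaussSum_sq (complexQuadraticChar_zmod_ne_one (by lia)) isQuadratic_complexQuadraticChar
    (ZMod.isPrimitive_stdAddChar l), complexQuadraticChar_neg_one hl, ZMod.card, neg_one_mul]

include hl in
theorem norm_gaussSum_complexQuadraticChar :
    ‖gaussSum (complexQuadraticChar (ZMod l)) ZMod.stdAddChar‖ = Real.sqrt l := by
  rw [← Real.sqrt_sq (norm_nonneg _), ← norm_pow, gaussSum_complexQuadraticChar_sq hl, norm_neg,
    norm_natCast]

end ComplexQuadraticChar

section LFunctionOne

open HurwitzZeta ZMod

theorem LFunction_dft_one_of_odd {N : ℕ} [NeZero N] {Φ : ZMod N → ℂ} (hΦ : Φ.Odd) :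
    LFunction (𝓕 Φ) 1 = Real.pi * I / N * ∑ j, Φ j * j.val := by
  have hcos : ∑ j, Φ j * cosZeta (toAddCircle j) 1 = 0 :=
    (hΦ.mul_even fun j => by rw [map_neg, cosZeta_neg]).sum_eq_zero
  have hsin (j : ZMod N) : Φ j * sinZeta (toAddCircle j) 1 =
      Real.pi / 2 * Φ j - Real.pi / N * (Φ j * j.val) := by
    rcases eq_or_ne j 0 with rfl | hj
    · simp [hΦ.map_zero]
    have hN : (0 : ℝ) < N := by exact_mod_cast NeZero.pos N
    have hval : (0 : ℝ) < j.val := by exact_mod_cast (ZMod.val_pos).2 hj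
    rw [toAddCircle_apply, sinZeta_one (by positivity)
      ((div_lt_one hN).2 (by exact_mod_cast j.val_lt))]
    push_cast
    ring
  rw [LFunction_dft _ (Or.inl hΦ.map_zero)]
  simp only [map_neg, expZeta, cosZeta_neg, sinZeta_neg, mul_add, mul_neg, Finset.sum_add_distrib,
    hcos, zero_add, mul_left_comm _ I, hsin, Finset.sum_neg_distrib, ← Finset.mul_sum,
    Finset.sum_sub_distrib, hΦ.sum_eq_zero]
  ring

theorem gaussSum_mul_LFunction_inv_one {N : ℕ} [NeZero N] {χ : DirichletCharacter ℂ N}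
    (hχ : χ.IsPrimitive) (hodd : χ.Odd) :
    gaussSum χ stdAddChar * χ⁻¹.LFunction 1 = -(Real.pi * I / N * ∑ j, χ j * j.val) := by
  have hinv : χ⁻¹.Odd := by
    have h := MulChar.mul_apply χ χ⁻¹ (-1)
    rw [mul_inv_cancel, MulChar.one_apply isUnit_one.neg, hodd, neg_one_mul] at h
    exact (neg_eq_iff_eq_neg.1 h.symm)
  have hdft (k : ZMod N) : 𝓕 χ k = -gaussSum χ stdAddChar * χ⁻¹ k := by
    rw [hχ.fourierTransform_eq_inv_mul_gaussSum, hinv.eval_neg]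
    ring
  rw [← LFunction_dft_one_of_odd hodd.to_fun, LFunction, DirichletCharacter.LFunction, LFunction]
  simp only [hdft, mul_assoc, ← Finset.mul_sum]
  ring

end LFunctionOne

section ClassNumberFormula

open Filter Topology NumberField

variable {K : Type*} [Field K] [NumberField K] {l : ℕ} [Fact l.Prime] {t : K}

theorem natCast_idealCount_eq_zetaMul (hK : Module.finrank ℚ K = 2) (hl : l % 4 = 3)
    (ht : t ^ 2 = -(l : K)) {n : ℕ} (hn : n ≠ 0) :
    (idealCount K n : ℂ) = DirichletCharacter.zetaMul (complexQuadraticChar (ZMod l)) n := by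
  have hmul := DirichletCharacter.isMultiplicative_zetaMul (complexQuadraticChar (ZMod l))
  induction n using Nat.recOnPosPrimePosCoprime with
  | prime_pow q k hq _ =>
    rw [DirichletCharacter.zetaMul, ArithmeticFunction.coe_zeta_mul_apply,
      Nat.sum_divisors_prime_pow hq]
    have h := congrArg (Int.cast : ℤ → ℂ) (idealCount_prime_pow hK hl ht hq k)
    simpa [toArithmeticFunction, hq.ne_zero, ← complexQuadraticChar_natCast] using h
  | zero => exact (hn rfl).elim
  | one =>
    rw [hmul.map_one]
    simpa using idealCount_prime_pow hK hl ht Nat.prime_two 0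
  | coprime a b ha hb hab iha ihb =>
    rw [idealCount_mul_of_coprime hab, hmul.map_mul_of_coprime hab, Nat.cast_mul,
      iha (by lia), ihb (by lia)]

theorem dedekindZeta_eq_mul_LFunction (hK : Module.finrank ℚ K = 2) (hl : l % 4 = 3)
    (ht : t ^ 2 = -(l : K)) {s : ℂ} (hs : 1 < s.re) :
    dedekindZeta K s =
      riemannZeta s * DirichletCharacter.LFunction (complexQuadraticChar (ZMod l)) s := by
  set χ : DirichletCharacter ℂ l := complexQuadraticChar (ZMod l)
  have hζ : dedekindZeta K s = LSeries (χ.zetaMul ·) s :=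
    LSeries_congr (fun hn => natCast_idealCount_eq_zetaMul hK hl ht hn) s
  rw [hζ, DirichletCharacter.zetaMul, ← ArithmeticFunction.coe_mul, LSeries_convolution']
  · simp_rw [χ.LFunction_eq_LSeries hs, ← ArithmeticFunction.LSeries_zeta_eq_riemannZeta hs,
      ← ArithmeticFunction.natCoe_apply, LSeries_congr χ.apply_eq_toArithmeticFunction_apply s]
  · exact ArithmeticFunction.LSeriesSummable_zeta_iff.2 hs
  · exact (LSeriesSummable_congr _ fun h => χ.apply_eq_toArithmeticFunction_apply h).1
      (ZMod.LSeriesSummable_of_one_lt_re χ hs)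

theorem dedekindZeta_residue_eq_LFunction_one (hK : Module.finrank ℚ K = 2) (hl : l % 4 = 3)
    (ht : t ^ 2 = -(l : K)) :
    (dedekindZeta_residue K : ℂ) =
      DirichletCharacter.LFunction (complexQuadraticChar (ZMod l)) 1 := by
  have hofReal : Tendsto (fun s : ℝ => (s : ℂ)) (𝓝[>] 1) (𝓝[≠] 1) := by
    refine tendsto_nhdsWithin_iff.2 ⟨(continuous_ofReal.tendsto' 1 1 ofReal_one).mono_left
      nhdsWithin_le_nhds, ?_⟩
    filter_upwards [self_mem_nhdsWithin] with s hs
    exact Set.mem_compl_singleton_iff.2 (by exact_mod_cast (Set.mem_Ioi.1 hs).ne')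
  have hL := (DirichletCharacter.differentiable_LFunction
    (complexQuadraticChar_zmod_ne_one (l := l) (by lia))).continuous.tendsto 1
  have hlim := (riemannZeta_residue_one.comp hofReal).mul
    ((hL.mono_left nhdsWithin_le_nhds).comp hofReal)
  rw [one_mul] at hlim
  refine tendsto_nhds_unique (tendsto_sub_one_mul_dedekindZeta_nhdsGT K) (hlim.congr' ?_)
  filter_upwards [self_mem_nhdsWithin] with s hs
  rw [dedekindZeta_eq_mul_LFunction hK hl ht (by simpa using hs)]
  simp only [Function.comp_apply, mul_assoc]

theorem isPrimitive_complexQuadraticChar (hl : l ≠ 2) :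
    DirichletCharacter.IsPrimitive (complexQuadraticChar (ZMod l)) :=
  ((Nat.dvd_prime Fact.out).1 (DirichletCharacter.conductor_dvd_level _)).resolve_left fun h =>
    complexQuadraticChar_zmod_ne_one hl (DirichletCharacter.eq_one_iff_conductor_eq_one.2 h)

theorem sum_zmod_eq_sum_range {M : Type*} [AddCommMonoid M] (n : ℕ) [NeZero n] (g : ZMod n → M) :
    ∑ a, g a = ∑ a ∈ Finset.range n, g a := by
  refine Finset.sum_nbij ZMod.val (fun a _ => Finset.mem_range.2 a.val_lt)
    (ZMod.val_injective n).injOn (fun a ha => ⟨a, Finset.mem_coe.2 (Finset.mem_univ _), ?_⟩)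
    fun a _ => by rw [ZMod.natCast_zmod_val]
  exact ZMod.val_cast_of_lt (Finset.mem_range.1 ha)

theorem classNumber_mul_eq_abs_sum_legendreSym (hK : Module.finrank ℚ K = 2) (hl : l % 4 = 3)
    (hl3 : 3 < l) (ht : t ^ 2 = -(l : K)) :
    (classNumber K : ℤ) * l = |∑ a ∈ Finset.range l, legendreSym l a * a| := by
  have hl0 : (0 : ℝ) < l := by exact_mod_cast (Fact.out : l.Prime).pos
  have hL := gaussSum_mul_LFunction_inv_one (isPrimitive_complexQuadraticChar (l := l) (by lia))
    (complexQuadraticChar_neg_one hl)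
  have hsum : ∑ j : ZMod l, complexQuadraticChar (ZMod l) j * j.val =
      ((∑ a ∈ Finset.range l, legendreSym l a * a : ℤ) : ℂ) := by
    rw [sum_zmod_eq_sum_range]
    push_cast
    refine Finset.sum_congr rfl fun a ha => ?_
    rw [complexQuadraticChar_natCast, ZMod.val_cast_of_lt (Finset.mem_range.1 ha)]
  rw [isQuadratic_complexQuadraticChar.inv, ← dedekindZeta_residue_eq_LFunction_one hK hl ht,
    dedekindZeta_residue_of_sq_eq_neg hK (Fact.out : l.Prime).prime.squarefree hl hl3 ht,
    hsum] at hL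
  have hnorm := congrArg norm hL
  rw [norm_mul, norm_gaussSum_complexQuadraticChar hl, norm_neg, norm_mul, norm_div, norm_mul,
    norm_I, norm_natCast, norm_intCast, norm_real, norm_real, Real.norm_of_nonneg Real.pi_pos.le,
    Real.norm_of_nonneg (by positivity), mul_one,
    mul_div_cancel₀ _ (Real.sqrt_pos.2 hl0).ne', div_mul_eq_mul_div, eq_div_iff hl0.ne',
    mul_assoc] at hnorm
  exact_mod_cast mul_left_cancel₀ Real.pi_pos.ne' hnorm

end ClassNumberFormula

section ClassNumberSqrtNeg

theorem finrank_adjoin_sqrtNeg {m : ℕ} (hm : 0 < m) : Module.finrank ℚ ℚ⟮sqrtNeg m⟯ = 2 := by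
  have hmonic : (X ^ 2 + C (m : ℚ) : ℚ[X]).Monic := monic_X_pow_add_C _ two_ne_zero
  have hdeg : (X ^ 2 + C (m : ℚ) : ℚ[X]).natDegree = 2 := natDegree_X_pow_add_C
  have hirr : Irreducible (X ^ 2 + C (m : ℚ) : ℚ[X]) := by
    rw [hmonic.irreducible_iff_roots_eq_zero_of_degree_le_three hdeg.ge (by lia),
      Multiset.eq_zero_iff_forall_notMem]
    intro x hx
    have hroot : x ^ 2 + m = 0 := by simpa using (mem_roots'.1 hx).2
    have hm' : (0 : ℚ) < m := by exact_mod_cast hm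
    nlinarith [sq_nonneg x]
  rw [IntermediateField.adjoin.finrank (isIntegral_sqrtNeg m),
    ← minpoly.eq_of_irreducible_of_monic hirr (by simp [sqrtNeg_sq]) hmonic, hdeg]

theorem classNumSqrtNeg_mul_eq_abs_sum_legendreSym {l : ℕ} [Fact l.Prime] (hl : l % 4 = 3)
    (hl3 : 3 < l) :
    (classNumSqrtNeg l : ℤ) * l = |∑ a ∈ Finset.range l, legendreSym l a * a| := by
  have := IntermediateField.adjoin.finiteDimensional (isIntegral_sqrtNeg l)
  have : NumberField ℚ⟮sqrtNeg l⟯ := { }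
  refine classNumber_mul_eq_abs_sum_legendreSym (t := AdjoinSimple.gen ℚ (sqrtNeg l))
    (finrank_adjoin_sqrtNeg (by lia)) hl hl3 (Subtype.ext ?_)
  push_cast
  rw [AdjoinSimple.coe_gen, sqrtNeg_sq]

end ClassNumberSqrtNeg

section DuplicationFormula

variable {F : Type*} [Field F] [Fintype F]

theorem eq_complexQuadraticChar_of_orderOf_eq_two [DecidableEq F] (hF : ringChar F ≠ 2)
    {χ : MulChar F ℂ} (hχ : orderOf χ = 2) : χ = complexQuadraticChar F := by
  obtain ⟨e⟩ := MulChar.mulEquiv_units F ℂ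
  have : IsCyclic (MulChar F ℂ) := e.isCyclic.2 inferInstance
  have : Fintype (MulChar F ℂ) := Fintype.ofFinite _
  have hcard := IsCyclic.card_orderOf_eq_totient (hχ ▸ orderOf_dvd_card : 2 ∣ Fintype.card _)
  refine Finset.card_le_one.1 hcard.le χ (by simp [hχ]) _ ?_
  rw [Finset.mem_filter_univ]
  exact orderOf_eq_prime isQuadratic_complexQuadraticChar.sq_eq_one (complexQuadraticChar_ne_one hF)

theorem sum_apply_sq_eq [DecidableEq F] (hF : ringChar F ≠ 2) (g : F → ℂ) :
    ∑ y, g (y ^ 2) = ∑ z, (complexQuadraticChar F z + 1) * g z := by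
  rw [← Finset.sum_fiberwise Finset.univ fun y : F => y ^ 2]
  refine Finset.sum_congr rfl fun z _ => ?_
  rw [Finset.sum_congr rfl fun y hy => congrArg g (Finset.mem_filter.1 hy).2, Finset.sum_const,
    nsmul_eq_mul]
  have h := quadraticChar_card_sqrts hF z
  rw [Set.toFinset_ofPred] at h
  rw [complexQuadraticChar_apply]
  exact_mod_cast congrArg (fun n : ℤ => n * g z) h

theorem jacobiSum_self_eq_jacobiSum_complexQuadraticChar [DecidableEq F] (hF : ringChar F ≠ 2)
    {ψ : MulChar F ℂ} (hψ : ψ ≠ 1) (h4 : ψ 4 = 1) :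
    jacobiSum ψ ψ = jacobiSum (complexQuadraticChar F) ψ := by
  have h2 : (2 : F) ≠ 0 := Ring.two_ne_zero hF
  -- Substitute `y = 2 * x - 1`, so that `4 * x * (1 - x) = 1 - y ^ 2`.
  have hsub : jacobiSum ψ ψ = ∑ y : F, ψ (1 - y ^ 2) := by
    refine Fintype.sum_equiv ((Equiv.mulLeft₀ 2 h2).trans (Equiv.subRight 1)) _ _ fun x => ?_
    rw [← map_mul, ← one_mul (ψ _), ← h4, ← map_mul, Equiv.trans_apply, Equiv.mulLeft₀_apply,
      Equiv.subRight_apply]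
    ring_nf
  have hzero : ∑ z : F, ψ (1 - z) = 0 :=
    ((Equiv.subLeft 1).sum_comp ψ).trans (MulChar.sum_eq_zero_of_ne_one hψ)
  rw [hsub, sum_apply_sq_eq hF fun z => ψ (1 - z)]
  simp only [add_mul, one_mul, Finset.sum_add_distrib, hzero, add_zero, jacobiSum]

theorem gaussSum_mul_complexQuadraticChar_mul_gaussSum [DecidableEq F] (hF : ringChar F ≠ 2)
    {ψ : MulChar F ℂ} {e : AddChar F ℂ} (he : e.IsPrimitive) (hsq : ψ ^ 2 ≠ 1)
    (hψ : ψ * complexQuadraticChar F ≠ 1) (h4 : ψ 4 = 1) :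
    gaussSum (ψ * complexQuadraticChar F) e * gaussSum ψ e =
      gaussSum (complexQuadraticChar F) e * gaussSum (ψ ^ 2) e := by
  have hne : ψ ≠ 1 := fun h => hsq (by rw [h, one_pow])
  have hself := jacobiSum_mul_nontrivial (χ := ψ) (φ := ψ) (by rwa [← sq]) e
  have hquad := jacobiSum_mul_nontrivial (χ := complexQuadraticChar F) (φ := ψ)
    (by rwa [mul_comm]) e
  rw [jacobiSum_self_eq_jacobiSum_complexQuadraticChar hF hne h4, ← sq] at hself
  rw [mul_comm _ ψ] at hquad
  apply mul_left_cancel₀ (gaussSum_ne_zero_of_nontrivial (by simp) hne he)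
  linear_combination gaussSum (ψ ^ 2) e * hquad - gaussSum (ψ * complexQuadraticChar F) e * hself

theorem conj_gaussSum_of_apply_neg_one {ψ : MulChar F ℂ} (e : AddChar F ℂ) (h : ψ (-1) = 1) :
    (starRingEnd ℂ) (gaussSum ψ e) = gaussSum ψ⁻¹ e := by
  rw [starRingEnd_apply, star_gaussSum_eq, AddChar.inv_mulShift, ← Units.coe_neg_one,
    gaussSum_mulShift_eq, inv_inv, Units.coe_neg_one, h, one_mul]

theorem gaussSum_mul_conj_gaussSum {ψ : MulChar F ℂ} {e : AddChar F ℂ} (he : e.IsPrimitive)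
    (hψ : ψ ≠ 1) : gaussSum ψ e * (starRingEnd ℂ) (gaussSum ψ e) = Fintype.card F := by
  rw [← gaussSum_mul_gaussSum_eq_card hψ he, starRingEnd_apply, star_gaussSum_eq]

end DuplicationFormula

section LegendreSymbol

variable {l : ℕ} [Fact l.Prime]

theorem legendreSym_neg_of_mod_four_eq_three (hl : l % 4 = 3) (a : ℤ) :
    legendreSym l (-a) = -legendreSym l a := by
  rw [← neg_one_mul, legendreSym.mul, legendreSym.at_neg_one (by lia),
    ZMod.χ₄_nat_three_mod_four hl, neg_one_mul]

theorem legendreSym_natCast_ne_zero {a : ℕ} (ha : a.Coprime l) : legendreSym l a ≠ 0 := by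
  rw [Ne, legendreSym.eq_zero_iff, Int.cast_natCast, ZMod.natCast_eq_zero_iff,
    ← (Fact.out : l.Prime).coprime_iff_not_dvd.not_left]
  exact not_not.2 ha.symm

theorem legendreSym_eq_zero_or (a : ℤ) :
    legendreSym l a = 0 ∨ legendreSym l a = 1 ∨ legendreSym l a = -1 :=
  quadraticChar_isQuadratic (ZMod l) a

variable {r f : ℕ}

theorem legendreSym_eq_of_cast_eq (hr : r ≠ 0) {a b : ℤ} (h : (a : ZMod (l ^ r)) = b) :
    legendreSym l a = legendreSym l b := by
  have hdvd : (l : ℤ) ∣ ((l ^ r : ℕ) : ℤ) := by exact_mod_cast dvd_pow_self l hr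
  rw [legendreSym, legendreSym, (ZMod.intCast_eq_intCast_iff a b l).2
    (((ZMod.intCast_eq_intCast_iff a b _).1 h).of_dvd hdvd)]

theorem legendreSym_eq_one_of_pow_eq_one (hr : r ≠ 0) (hf : Odd f) {a : ℤ}
    (h : (a : ZMod (l ^ r)) ^ f = 1) : legendreSym l a = 1 := by
  have hpow : legendreSym l (a ^ f) = legendreSym l 1 :=
    legendreSym_eq_of_cast_eq hr (by rw [Int.cast_pow, h, Int.cast_one])
  rw [← legendreSym.hom_apply, map_pow, legendreSym.hom_apply, legendreSym.at_one] at hpow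
  exact hf.strictMono_pow.injective (hpow.trans (one_pow f).symm)

theorem eq_pow_mul_half_of_two_mul_eq_totient_pow (hl : Odd l)
    (hf : 2 * f = (l ^ r).totient) (hr : r ≠ 0) : f = l ^ (r - 1) * ((l - 1) / 2) := by
  obtain ⟨t, ht⟩ := hl
  rw [Nat.totient_prime_pow Fact.out (Nat.pos_of_ne_zero hr), show l - 1 = 2 * t by lia,
    mul_left_comm] at hf
  rw [show (l - 1) / 2 = t by lia]
  exact Nat.eq_of_mul_eq_mul_left two_pos hf

theorem odd_of_two_mul_eq_totient_pow (hl : l % 4 = 3) (hf : 2 * f = (l ^ r).totient)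
    (hr : r ≠ 0) : Odd f := by
  have hodd : Odd l := Nat.odd_iff.2 (by lia)
  rw [eq_pow_mul_half_of_two_mul_eq_totient_pow hodd hf hr]
  exact hodd.pow.mul (Nat.odd_iff.2 (by lia))

theorem coprime_sub_one_pow (hl : Odd l) (hl3 : 3 < l) (hr : r ≠ 0) {p : ℕ} (hp0 : p ≠ 0)
    (hp : orderOf (p : ZMod (l ^ r)) = f) (hf : 2 * f = (l ^ r).totient) :
    (p - 1).Coprime (l ^ r) := by
  refine (((Fact.out : l.Prime).coprime_iff_not_dvd.2 fun hdvd => ?_).symm).pow_right r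
  have hdvd' := dvd_sub_pow_of_dvd_sub (R := ℤ) (a := p) (b := 1) (p := l)
    (by simpa [Nat.cast_pred (Nat.pos_of_ne_zero hp0)] using Int.natCast_dvd_natCast.2 hdvd) (r - 1)
  rw [Nat.sub_add_cancel (Nat.one_le_iff_ne_zero.2 hr), one_pow] at hdvd'
  have hpow : (p : ZMod (l ^ r)) ^ l ^ (r - 1) = 1 := by
    rw [← sub_eq_zero]
    exact_mod_cast (ZMod.intCast_zmod_eq_zero_iff_dvd _ _).2 (by exact_mod_cast hdvd')
  have hle := Nat.le_of_dvd (pow_pos (by lia) _) (orderOf_dvd_of_pow_eq_one hpow)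
  rw [hp, eq_pow_mul_half_of_two_mul_eq_totient_pow hl hf hr] at hle
  have := Nat.le_of_mul_le_mul_left (hle.trans_eq (mul_one _).symm) (pow_pos (by lia) _)
  obtain ⟨t, rfl⟩ := hl
  lia

end LegendreSymbol

section IndexTwo

variable {l r f p : ℕ} [Fact l.Prime] (hl : l % 4 = 3) (hr : r ≠ 0)
  (hp : orderOf (p : ZMod (l ^ r)) = f) (hf : 2 * f = (l ^ r).totient)

include hl hr hp hf

theorem legendreSym_pow_mul (k : ℕ) (a : ℤ) :
    legendreSym l (p ^ k * a) = legendreSym l a := by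
  have h := legendreSym_eq_one_of_pow_eq_one (l := l) (a := p) hr
    (odd_of_two_mul_eq_totient_pow hl hf hr) (by rw [Int.cast_natCast, ← hp, pow_orderOf_eq_one])
  rw [← legendreSym.hom_apply, map_mul, map_pow, legendreSym.hom_apply, legendreSym.hom_apply, h,
    one_pow, one_mul]

theorem exists_eq_or_eq_neg_pow (x : (ZMod (l ^ r))ˣ) :
    ∃ k < f, (x : ZMod (l ^ r)) = p ^ k ∨ (x : ZMod (l ^ r)) = -p ^ k := by
  have hodd := odd_of_two_mul_eq_totient_pow hl hf hr
  obtain ⟨u, hu⟩ : IsUnit (p : ZMod (l ^ r)) :=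
    .of_pow_eq_one (by rw [← hp, pow_orderOf_eq_one]) hodd.pos.ne'
  have hord : orderOf u = f := by rw [← hp, ← hu, orderOf_units]
  have hmem (y : (ZMod (l ^ r))ˣ) (hy : y ∈ Subgroup.zpowers u) :
      ∃ k < f, (y : ZMod (l ^ r)) = p ^ k := by
    classical
    obtain ⟨k, hk, rfl⟩ := Finset.mem_image.1 (mem_zpowers_iff_mem_range_orderOf.1 hy)
    exact ⟨k, hord ▸ Finset.mem_range.1 hk, by rw [Units.val_pow_eq_pow_val, hu]⟩
  have hindex : (Subgroup.zpowers u).index = 2 := by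
    have h := (Subgroup.zpowers u).card_mul_index
    rw [Nat.card_zpowers, hord, Nat.card_eq_fintype_card, ZMod.card_units_eq_totient, ← hf,
      mul_comm 2] at h
    exact Nat.eq_of_mul_eq_mul_left hodd.pos h
  have hneg : -1 ∉ Subgroup.zpowers u := by
    intro h
    obtain ⟨k, -, hk⟩ := hmem _ h
    have hleg := legendreSym_eq_of_cast_eq (a := -1) (b := p ^ k * 1) hr (by simpa using hk)
    rw [legendreSym_pow_mul hl hr hp hf, legendreSym_neg_of_mod_four_eq_three hl,
      legendreSym.at_one] at hleg
    lia
  by_cases hx : x ∈ Subgroup.zpowers u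
  · obtain ⟨k, hk, h⟩ := hmem x hx
    exact ⟨k, hk, Or.inl h⟩
  · have hx' : -1 * x ∈ Subgroup.zpowers u := by
      simp only [Subgroup.mul_mem_iff_of_index_two hindex, hneg, hx]
    obtain ⟨k, hk, h⟩ := hmem _ hx'
    exact ⟨k, hk, Or.inr (by rw [← h]; simp)⟩

theorem exists_eq_pow_mul_of_legendreSym_eq {a b : ℤ} (hb : legendreSym l b ≠ 0)
    (h : legendreSym l a = legendreSym l b) :
    ∃ k < f, (a : ZMod (l ^ r)) = p ^ k * b := by
  have hunit {c : ℤ} (hc : legendreSym l c ≠ 0) : IsUnit (c : ZMod (l ^ r)) := by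
    rw [Ne, legendreSym.eq_zero_iff, ZMod.intCast_zmod_eq_zero_iff_dvd] at hc
    rw [ZMod.coe_int_isUnit_iff_isCoprime, Nat.cast_pow]
    exact ((Nat.prime_iff_prime_int.1 Fact.out).coprime_iff_not_dvd.2 hc).pow_left
  obtain ⟨y, hy⟩ := hunit hb
  obtain ⟨x, hx⟩ := hunit (h ▸ hb)
  obtain ⟨k, hk, hxy | hxy⟩ := exists_eq_or_eq_neg_pow hl hr hp hf (x * y⁻¹) <;>
    rw [Units.val_mul, Units.mul_inv_eq_iff_eq_mul, hx, hy] at hxy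
  · exact ⟨k, hk, hxy⟩
  · have hneg := legendreSym_eq_of_cast_eq (b := -(p ^ k * b)) hr
      (by rw [hxy]; push_cast; ring)
    rw [legendreSym_neg_of_mod_four_eq_three hl, legendreSym_pow_mul hl hr hp hf, h] at hneg
    lia

theorem gaussSum_zpow_eq_of_legendreSym_eq [Fact p.Prime] {F : Type*} [Field F]
    [Algebra (ZMod p) F] [Fintype F] {ψ : MulChar F ℂ} (hψ : ψ ^ l ^ r = 1) {a b : ℤ}
    (hb : legendreSym l b ≠ 0) (h : legendreSym l a = legendreSym l b) :
    gaussSum (ψ ^ a) (traceAddChar p F) = gaussSum (ψ ^ b) (traceAddChar p F) := by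
  obtain ⟨k, -, hk⟩ := exists_eq_pow_mul_of_legendreSym_eq hl hr hp hf hb h
  rw [← gaussSum_traceAddChar_pow_p (ψ ^ b) k, ← zpow_natCast, ← zpow_mul, mul_comm b]
  congr 1
  rw [zpow_eq_zpow_iff_modEq]
  refine Int.ModEq.of_dvd (Int.natCast_dvd_natCast.2 (orderOf_dvd_of_pow_eq_one hψ)) ?_
  rw [← ZMod.intCast_eq_intCast_iff, hk]
  push_cast
  rfl

end IndexTwo

section CharacterSums

variable {l : ℕ} [Fact l.Prime]

theorem sum_legendreSym_eq_zero (hl : l ≠ 2) : ∑ a ∈ Finset.range l, legendreSym l a = 0 := by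
  have h : ∑ a ∈ Finset.range l, complexQuadraticChar (ZMod l) a = 0 := by
    rw [← sum_zmod_eq_sum_range]
    exact MulChar.sum_eq_zero_of_ne_one (complexQuadraticChar_zmod_ne_one hl)
  simp only [complexQuadraticChar_natCast] at h
  exact_mod_cast h

theorem sum_range_mul_legendreSym_mul (hl : l ≠ 2) (k : ℕ) :
    ∑ a ∈ Finset.range (l * k), legendreSym l a * a =
      k * ∑ a ∈ Finset.range l, legendreSym l a * a := by
  induction k with
  | zero => simp
  | succ k ih =>
    have hshift (a : ℕ) : legendreSym l (l * k + a : ℕ) * (l * k + a : ℕ) =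
        legendreSym l a * a + l * k * legendreSym l a := by
      have h : legendreSym l (l * k + a : ℕ) = legendreSym l a := by simp [legendreSym]
      rw [h]
      push_cast
      ring
    rw [mul_add_one, Finset.sum_range_add, ih, Finset.sum_congr rfl fun a _ => hshift a,
      Finset.sum_add_distrib, ← Finset.mul_sum, sum_legendreSym_eq_zero hl]
    push_cast
    ring

theorem sum_range_eq_mul_half (hl : l ≠ 2) :
    ∑ a ∈ Finset.range l, (a : ℤ) = l * ((l - 1) / 2 : ℕ) := by
  have hodd := (Fact.out : l.Prime).odd_of_ne_two hl
  have h := Finset.sum_range_id_mul_two l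
  have hdiv : (l - 1) / 2 * 2 = l - 1 :=
    Nat.div_mul_cancel (even_iff_two_dvd.1 (Nat.Odd.sub_odd hodd odd_one))
  rw [← hdiv, ← mul_assoc] at h
  rw [← Nat.cast_sum, Nat.eq_of_mul_eq_mul_right two_pos h, Nat.cast_mul]

theorem odd_classNumSqrtNeg (hl : l % 4 = 3) (hl3 : 3 < l) : Odd (classNumSqrtNeg l) := by
  have hsub : Even (∑ a ∈ Finset.range l, (legendreSym l a * a - a)) := by
    refine even_iff_two_dvd.2 (Finset.dvd_sum fun a ha => ?_)
    rcases eq_or_ne a 0 with rfl | ha0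
    · simp
    have hne := legendreSym_natCast_ne_zero
      (Nat.coprime_of_lt_prime ha0 (Finset.mem_range.1 ha) (Fact.out : l.Prime)).symm
    rcases (legendreSym_eq_zero_or (l := l) a).resolve_left hne with h | h <;> rw [h] <;> lia
  have hsum : Odd (∑ a ∈ Finset.range l, (a : ℤ)) := by
    rw [sum_range_eq_mul_half (by lia)]
    exact_mod_cast (Nat.odd_iff.2 (by lia) : Odd l).mul (Nat.odd_iff.2 (by lia))
  rw [Finset.sum_sub_distrib, Int.even_sub] at hsub
  have hclass : Odd ((classNumSqrtNeg l : ℤ) * l) := by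
    rw [classNumSqrtNeg_mul_eq_abs_sum_legendreSym hl hl3, odd_abs, ← Int.not_even_iff_odd, hsub,
      Int.not_even_iff_odd]
    exact hsum
  exact_mod_cast (Int.odd_mul.1 hclass).1

theorem two_mul_classNumSqrtNeg_le (hl : l % 4 = 3) (hl3 : 3 < l) :
    2 * classNumSqrtNeg l ≤ l - 1 := by
  have hle : (classNumSqrtNeg l : ℤ) * l ≤ ((l - 1) / 2 : ℕ) * l := by
    rw [classNumSqrtNeg_mul_eq_abs_sum_legendreSym hl hl3, mul_comm _ (l : ℤ),
      ← sum_range_eq_mul_half (by lia)]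
    refine (Finset.abs_sum_le_sum_abs _ _).trans (Finset.sum_le_sum fun a _ => ?_)
    rw [abs_mul, Nat.abs_cast]
    rcases legendreSym_eq_zero_or (l := l) a with h | h | h <;> simp [h]
  have h := le_of_mul_le_mul_right hle (by lia)
  lia

end CharacterSums

section DigitSums

variable {l r f p : ℕ} [Fact l.Prime] (hl : l % 4 = 3) (hr : r ≠ 0)
  (hp : orderOf (p : ZMod (l ^ r)) = f) (hf : 2 * f = (l ^ r).totient)

include hl hr

theorem legendreSym_mul_sum_legendreSym_mul {j : ℤ} (hj : legendreSym l j ≠ 0) :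
    legendreSym l j * ∑ a ∈ Finset.range (l ^ r), legendreSym l a * a =
      ∑ x : ZMod (l ^ r) with legendreSym l x.val = legendreSym l j, (2 * x.val - l ^ r : ℤ) := by
  have hneg (x : ZMod (l ^ r)) : legendreSym l (-x).val = -legendreSym l x.val := by
    rw [← legendreSym_neg_of_mod_four_eq_three hl]
    exact legendreSym_eq_of_cast_eq hr (by simp)
  have hsplit (x : ZMod (l ^ r)) : legendreSym l j * (legendreSym l x.val * x.val) =
      (if legendreSym l x.val = legendreSym l j then (x.val : ℤ) else 0) -
        if legendreSym l (-x).val = legendreSym l j then (x.val : ℤ) else 0 := by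
    rw [hneg]
    rcases (legendreSym_eq_zero_or j).resolve_left hj with h | h <;>
      rcases legendreSym_eq_zero_or (l := l) x.val with h' | h' | h' <;> rw [h, h'] <;> norm_num
  have hrefl : ∑ x : ZMod (l ^ r),
      (if legendreSym l (-x).val = legendreSym l j then (x.val : ℤ) else 0) =
        ∑ x with legendreSym l x.val = legendreSym l j, ((-x : ZMod (l ^ r)).val : ℤ) := by
    rw [Finset.sum_filter]
    exact Fintype.sum_equiv (Equiv.neg _) _ _ fun x => by rw [Equiv.neg_apply, neg_neg]
  have hval (x : ZMod (l ^ r)) (hx : legendreSym l x.val = legendreSym l j) :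
      (x.val - (-x).val : ℤ) = 2 * x.val - l ^ r := by
    have : NeZero x := ⟨fun h => hj (by rw [← hx, h]; simp)⟩
    rw [ZMod.val_neg_of_ne_zero, Nat.cast_sub x.val_lt.le, Nat.cast_pow]
    ring
  have hzmod : ∑ a ∈ Finset.range (l ^ r), legendreSym l a * a =
      ∑ x : ZMod (l ^ r), legendreSym l x.val * x.val := by
    rw [sum_zmod_eq_sum_range]
    exact Finset.sum_congr rfl fun a ha => by rw [ZMod.val_cast_of_lt (Finset.mem_range.1 ha)]
  rw [hzmod, Finset.mul_sum, Finset.sum_congr rfl fun x _ => hsplit x, Finset.sum_sub_distrib,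
    hrefl, ← Finset.sum_filter, ← Finset.sum_sub_distrib]
  exact Finset.sum_congr rfl fun x hx => hval x (Finset.mem_filter.1 hx).2

include hp hf

theorem sum_pow_mul_eq_sum_filter_legendreSym {M : Type*} [AddCommMonoid M] {j : ℕ}
    (hj : j.Coprime l) (g : ZMod (l ^ r) → M) :
    ∑ m ∈ Finset.range f, g (p ^ m * j) =
      ∑ x with legendreSym l x.val = legendreSym l j, g x := by
  have hval (a : ℤ) : legendreSym l ((a : ZMod (l ^ r)).val : ℤ) = legendreSym l a :=
    legendreSym_eq_of_cast_eq hr (by simp)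
  refine Finset.sum_nbij (fun m => p ^ m * j) (fun m _ => ?_) (fun a ha b hb hab => ?_)
    (fun x hx => ?_) fun _ _ => rfl
  · rw [Finset.mem_filter_univ, ← legendreSym_pow_mul hl hr hp hf m j, ← hval (p ^ m * j)]
    push_cast
    rfl
  · rw [Finset.coe_range, Set.mem_Iio, ← hp] at ha hb
    have hunit : IsUnit (j : ZMod (l ^ r)) := (ZMod.isUnit_iff_coprime _ _).2 (hj.pow_right r)
    exact pow_injOn_Iio_orderOf ha hb (hunit.mul_right_cancel hab)
  · obtain ⟨k, hk, h⟩ := exists_eq_pow_mul_of_legendreSym_eq hl hr hp hf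
      (legendreSym_natCast_ne_zero hj) ((Finset.mem_filter_univ x).1 hx)
    exact ⟨k, Finset.mem_coe.2 (Finset.mem_range.2 hk), by simpa using h.symm⟩

theorem two_mul_sum_pow_mul_mod_eq {j : ℕ} (hj : j.Coprime l) :
    2 * ∑ m ∈ Finset.range f, ((p ^ m * j % l ^ r : ℕ) : ℤ) =
      f * l ^ r + legendreSym l j * ∑ a ∈ Finset.range (l ^ r), legendreSym l a * a := by
  have hcoset := sum_pow_mul_eq_sum_filter_legendreSym hl hr hp hf hj
    fun x => (2 * x.val - l ^ r : ℤ)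
  rw [← legendreSym_mul_sum_legendreSym_mul hl hr (legendreSym_natCast_ne_zero hj),
    Finset.sum_sub_distrib, ← Finset.mul_sum, Finset.sum_const, Finset.card_range,
    nsmul_eq_mul] at hcoset
  have hval (m : ℕ) : (p ^ m * j : ZMod (l ^ r)).val = p ^ m * j % l ^ r := by
    rw [← ZMod.val_natCast]
    push_cast
    rfl
  simp only [← hval]
  linear_combination hcoset

theorem sum_pow_mul_mod_add_le (hl3 : 3 < l) {e : ℕ} (he : f = 2 * e + classNumSqrtNeg l)
    {j : ℕ} (hj : j.Coprime l) :
    ∑ m ∈ Finset.range f, p ^ m * j % l ^ r + l ^ r * e ≤ l ^ r * f := by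
  have hsum := two_mul_sum_pow_mul_mod_eq hl hr hp hf hj
  have habs : |legendreSym l j * ∑ a ∈ Finset.range (l ^ r), legendreSym l a * a| =
      l ^ r * classNumSqrtNeg l := by
    have hj1 : |legendreSym l j| = 1 := by
      rcases (legendreSym_eq_zero_or j).resolve_left (legendreSym_natCast_ne_zero hj) with h | h <;>
        simp [h]
    rw [← mul_pow_sub_one hr, sum_range_mul_legendreSym_mul (by lia), abs_mul, abs_mul, hj1,
      ← classNumSqrtNeg_mul_eq_abs_sum_legendreSym hl hl3, ← mul_pow_sub_one hr (l : ℤ)]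
    push_cast [Nat.abs_cast, abs_pow]
    ring
  have h := le_of_abs_le habs.le
  zify
  rw [he] at hsum ⊢
  push_cast at hsum ⊢
  linarith

end DigitSums

section CyclotomicValues

theorem exists_int_aeval_eq_of_forall_coprime {K : Type*} [Field K] [CharZero K] {n : ℕ} [NeZero n]
    {z : K} (hz : IsPrimitiveRoot z n) (P : ℤ[X])
    (h : ∀ c : ℕ, c.Coprime n → aeval (z ^ c) P = aeval z P) : ∃ k : ℤ, aeval z P = k := by
  set R := P %ₘ cyclotomic n ℤ with hR
  have hroot (y : K) (hy : y ∈ primitiveRoots n K) : aeval y R = aeval z P := by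
    rw [mem_primitiveRoots (NeZero.pos n)] at hy
    obtain ⟨c, -, hc, rfl⟩ := hz.isPrimitiveRoot_iff.1 hy
    have hcyc : aeval (z ^ c) (cyclotomic n ℤ) = 0 := by
      rw [aeval_def, ← eval_map, map_cyclotomic]
      exact isRoot_cyclotomic_iff.2 hy
    rw [← h c hc, hR, aeval_modByMonic_eq_self_of_root hcyc]
  have hdeg : (R.map (Int.castRingHom K) - C (aeval z P)).degree < n.totient := by
    refine (degree_sub_le _ _).trans_lt (max_lt (degree_map_le.trans_lt ?_) ?_)
    · rw [← degree_cyclotomic n ℤ]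
      exact degree_modByMonic_lt P (cyclotomic.monic n ℤ)
    · exact degree_C_le.trans_lt (by exact_mod_cast Nat.totient_pos.2 (NeZero.pos n))
  have hzero : R.map (Int.castRingHom K) - C (aeval z P) = 0 := by
    refine eq_zero_of_degree_lt_of_eval_finset_eq_zero (primitiveRoots n K) ?_ fun y hy => ?_
    · rwa [hz.card_primitiveRoots]
    · rw [eval_sub, eval_C, eval_map, ← hroot y hy, aeval_def, algebraMap_int_eq, sub_self]
  refine ⟨R.coeff 0, ?_⟩
  simpa using (congrArg (coeff · 0) (sub_eq_zero.1 hzero)).symm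

theorem zetaP_mul_pow (m : ℕ) {n : ℕ} (hn : n ≠ 0) : zetaP (m * n) ^ n = zetaP m := by
  have : (n : ℂ) ≠ 0 := Nat.cast_ne_zero.2 hn
  rw [zetaP, zetaP, ← Complex.exp_nat_mul]
  congr 1
  push_cast
  field_simp

theorem stdAddChar_natCast (n : ℕ) [NeZero n] (a : ℕ) :
    ZMod.stdAddChar (a : ZMod n) = zetaP n ^ a := by
  rw [zetaP, ← Complex.exp_nat_mul, ← Int.cast_natCast, ZMod.stdAddChar_coe]
  congr 1
  push_cast
  ring

theorem exists_aeval_zetaP_pow_eq_gaussSum {p : ℕ} [Fact p.Prime] {F : Type*} [Field F]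
    [Algebra (ZMod p) F] [Fintype F] {n : ℕ} [NeZero n] {ψ : MulChar F ℂ} (hψ : ψ ^ n = 1)
    (hψp : ∀ c : ℕ, c.Coprime p → ψ c = 1) :
    ∃ P : ℤ[X], ∀ c : ℕ, c.Coprime p →
      aeval (zetaP (p * n) ^ c) P = gaussSum (ψ ^ c) (traceAddChar p F) := by
  classical
  have : CharP F p := charP_of_injective_algebraMap (algebraMap (ZMod p) F).injective p
  have hζp : zetaP (p * n) ^ n = zetaP p := zetaP_mul_pow p (NeZero.ne n)
  have hroot (x : F) (hx : x ≠ 0) : ∃ i : ℕ, ψ x = (zetaP (p * n) ^ p) ^ i := by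
    rw [mul_comm, zetaP_mul_pow n (NeZero.ne p)]
    obtain ⟨i, -, hi⟩ := (isPrimitiveRoot_zetaP n).eq_pow_of_pow_eq_one (ξ := ψ x) (by
      rw [← MulChar.pow_apply' _ (NeZero.ne n), hψ, MulChar.one_apply hx.isUnit])
    exact ⟨i, hi.symm⟩
  choose! a ha using hroot
  refine ⟨∑ x : F with x ≠ 0, X ^ (p * a x + n * (Algebra.trace (ZMod p) F x).val), fun c hc => ?_⟩
  have hcp : ¬ p ∣ c := (Fact.out : p.Prime).coprime_iff_not_dvd.1 hc.symm
  have hc0 : c ≠ 0 := by rintro rfl; exact hcp (dvd_zero p)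
  have hcF : (c : F) ≠ 0 := by rwa [Ne, CharP.cast_eq_zero_iff F p]
  have hshift := gaussSum_mulShift (ψ ^ c) (traceAddChar p F) (Units.mk0 (c : F) hcF)
  rw [Units.val_mk0, MulChar.pow_apply' _ hc0, hψp c hc, one_pow, one_mul] at hshift
  rw [← hshift, gaussSum, map_sum, Finset.sum_filter]
  refine Finset.sum_congr rfl fun x _ => ?_
  split_ifs with hx
  · rw [AddChar.mulShift_apply, ← nsmul_eq_mul, AddChar.map_nsmul_eq_pow,
      MulChar.pow_apply' _ hc0, ha x hx, traceAddChar_apply, ← hζp, map_pow, aeval_X]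
    ring
  · rw [not_not.1 hx, MulChar.map_zero, zero_mul]

theorem exists_aeval_zetaP_pow_eq_legendreSym_mul {l : ℕ} [Fact l.Prime] (hl2 : l ≠ 2) {n : ℕ}
    [NeZero n] (hln : l ∣ n) :
    ∃ P : ℤ[X], ∀ c : ℕ, aeval (zetaP n ^ c) P =
      legendreSym l c * gaussSum (complexQuadraticChar (ZMod l)) ZMod.stdAddChar := by
  obtain ⟨m, rfl⟩ := hln
  have hm : m ≠ 0 := right_ne_zero_of_mul (NeZero.ne (l * m))
  refine ⟨∑ a ∈ Finset.range l, C (legendreSym l a) * X ^ (m * a), fun c => ?_⟩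
  have hshift := gaussSum_mulShift_of_isPrimitive (ZMod.stdAddChar (N := l))
    (isPrimitive_complexQuadraticChar hl2) c
  rw [isQuadratic_complexQuadraticChar.inv, complexQuadraticChar_natCast] at hshift
  rw [← hshift, gaussSum, sum_zmod_eq_sum_range, map_sum]
  refine Finset.sum_congr rfl fun a _ => ?_
  rw [complexQuadraticChar_natCast, AddChar.mulShift_apply, ← Nat.cast_mul, stdAddChar_natCast,
    ← zetaP_mul_pow l hm]
  simp only [map_mul, eq_intCast, map_intCast, map_pow, aeval_X]
  ring

end CyclotomicValues

theorem exists_int_eq_half_of_sq_eq_neg {K : Type*} [Field K] [CharZero K] {l : ℕ} [Fact l.Prime]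
    {x y τ : K} (hx : IsIntegral ℤ x) (hy : IsIntegral ℤ y) (hτ : τ ^ 2 = -l) {s d : ℚ} {m : ℤ}
    (hs : x + y = s) (hd : (x - y) * τ = d) (hm : x * y = m) :
    ∃ a b : ℤ, 4 * m = a ^ 2 + l * b ^ 2 ∧ x = (a + b * τ) / 2 := by
  have hl0 : (l : ℤ) ≠ 0 := Nat.cast_ne_zero.2 (NeZero.ne l)
  have hτ0 : τ ≠ 0 := by
    rintro rfl
    exact hl0 (by simpa using hτ)
  have hτint : IsIntegral ℤ τ := .of_pow two_pos (hτ ▸ (isIntegral_natCast l).neg)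
  obtain ⟨a, rfl⟩ := exists_intCast_eq_of_isIntegral (hs ▸ hx.add hy)
  obtain ⟨c, rfl⟩ := exists_intCast_eq_of_isIntegral (hd ▸ (hx.sub hy).mul hτint)
  rw [Rat.cast_intCast] at hs hd
  have hc : c ^ 2 = l * (a ^ 2 - 4 * m) * (-1) := by
    have : (c : K) ^ 2 = l * (a ^ 2 - 4 * m) * (-1) := by
      rw [← hd, ← hs, ← hm, mul_pow, hτ]
      ring
    exact_mod_cast this
  obtain ⟨b, rfl⟩ : (l : ℤ) ∣ c := Int.Prime.dvd_pow' Fact.out ⟨_, hc.trans (mul_assoc _ _ _)⟩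
  have hdiff : x - y = -b * τ := by
    refine mul_right_cancel₀ hτ0 (hd.trans ?_)
    push_cast
    linear_combination b * hτ
  refine ⟨a, -b, mul_left_cancel₀ hl0 (by linear_combination -hc), ?_⟩
  push_cast
  linear_combination hs / 2 + hdiff / 2

theorem apply_algebraMap_eq_one_of_coprime {K L R : Type*} [Field K] [Fintype K] [Field L]
    [Algebra K L] [CommRing R] {ψ : MulChar L R} {n : ℕ} (hψ : ψ ^ n = 1)
    (hn : (Fintype.card K - 1).Coprime n) {x : K} (hx : x ≠ 0) : ψ (algebraMap K L x) = 1 := by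
  have hunit : IsUnit (algebraMap K L x) := (IsUnit.mk0 x hx).map _
  have hcard : ψ (algebraMap K L x) ^ (Fintype.card K - 1) = 1 := by
    rw [← map_pow, ← map_pow, FiniteField.pow_card_sub_one_eq_one x hx, map_one, map_one]
  have hpow : ψ (algebraMap K L x) ^ n = 1 := by
    rw [← hunit.unit_spec, ← MulChar.pow_apply_coe, hψ, MulChar.one_apply_coe]
  simpa [hn.gcd_eq_one] using pow_gcd_eq_one.2 ⟨hcard, hpow⟩

section IndexTwoGaussSum

variable {l r f p : ℕ} [Fact l.Prime] (hl : l % 4 = 3) (hr : r ≠ 0)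
  (hp : orderOf (p : ZMod (l ^ r)) = f) (hf : 2 * f = (l ^ r).totient)
  [Fact p.Prime] {F : Type*} [Field F] [Algebra (ZMod p) F] {ψ : MulChar F ℂ}

include hl hr hp hf

theorem apply_natCast_eq_one_of_coprime (hl3 : 3 < l) (hψ : ψ ^ l ^ r = 1) {c : ℕ}
    (hc : c.Coprime p) : ψ c = 1 := by
  have hcop := coprime_sub_one_pow (Nat.odd_iff.2 (by lia)) hl3 hr (NeZero.ne p) hp hf
  rw [← map_natCast (algebraMap (ZMod p) F)]
  refine apply_algebraMap_eq_one_of_coprime hψ (by rwa [ZMod.card]) ?_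
  rw [Ne, ZMod.natCast_eq_zero_iff]
  exact (Fact.out : p.Prime).coprime_iff_not_dvd.1 hc.symm

variable [Fintype F]

theorem gaussSum_pow_eq_or (hψ : ψ ^ l ^ r = 1) {c : ℕ} (hc : c.Coprime l) :
    (legendreSym l c = 1 ∧ gaussSum (ψ ^ c) (traceAddChar p F) = gaussSum ψ (traceAddChar p F)) ∨
    (legendreSym l c = -1 ∧
      gaussSum (ψ ^ c) (traceAddChar p F) = gaussSum ψ⁻¹ (traceAddChar p F)) := by
  refine ((legendreSym_eq_zero_or (c : ℤ)).resolve_left (legendreSym_natCast_ne_zero hc)).imp ?_ ?_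
    <;> refine fun h => ⟨h, ?_⟩
  · simpa using gaussSum_zpow_eq_of_legendreSym_eq hl hr hp hf hψ (a := c) (b := 1)
      (by simp [legendreSym.at_one]) (by rw [h, legendreSym.at_one])
  · have hneg : legendreSym l (-1) = -1 := by
      rw [legendreSym_neg_of_mod_four_eq_three hl, legendreSym.at_one]
    simpa using gaussSum_zpow_eq_of_legendreSym_eq hl hr hp hf hψ (a := c) (b := -1)
      (by simp [hneg]) (by rw [h, hneg])

theorem exists_int_gaussSum_add_inv_and_sub_inv_mul (hl3 : 3 < l) (hψ : ψ ^ l ^ r = 1) :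
    (∃ s : ℤ, gaussSum ψ (traceAddChar p F) + gaussSum ψ⁻¹ (traceAddChar p F) = s) ∧
    ∃ d : ℤ, (gaussSum ψ (traceAddChar p F) - gaussSum ψ⁻¹ (traceAddChar p F)) *
      gaussSum (complexQuadraticChar (ZMod l)) ZMod.stdAddChar = d := by
  have hψ' : ψ⁻¹ ^ l ^ r = 1 := by rw [inv_pow, hψ, inv_one]
  have hz := isPrimitiveRoot_zetaP (p * l ^ r)
  obtain ⟨P, hP⟩ := exists_aeval_zetaP_pow_eq_gaussSum hψ fun c =>
    apply_natCast_eq_one_of_coprime hl hr hp hf hl3 hψ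
  obtain ⟨P', hP'⟩ := exists_aeval_zetaP_pow_eq_gaussSum hψ' fun c =>
    apply_natCast_eq_one_of_coprime hl hr hp hf hl3 hψ'
  obtain ⟨T, hT⟩ := exists_aeval_zetaP_pow_eq_legendreSym_mul (l := l) (n := p * l ^ r) (by lia)
    ((dvd_pow_self l hr).mul_left p)
  have hP1 := hP 1 (Nat.coprime_one_left p)
  have hP1' := hP' 1 (Nat.coprime_one_left p)
  have hT1 := hT 1
  rw [pow_one, pow_one] at hP1 hP1'
  rw [pow_one, Nat.cast_one, legendreSym.at_one, Int.cast_one, one_mul] at hT1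
  have hconj (c : ℕ) (hc : c.Coprime (p * l ^ r)) :
      (legendreSym l c = 1 ∧ aeval (zetaP (p * l ^ r) ^ c) P = aeval (zetaP (p * l ^ r)) P ∧
        aeval (zetaP (p * l ^ r) ^ c) P' = aeval (zetaP (p * l ^ r)) P') ∨
      (legendreSym l c = -1 ∧ aeval (zetaP (p * l ^ r) ^ c) P = aeval (zetaP (p * l ^ r)) P' ∧
        aeval (zetaP (p * l ^ r) ^ c) P' = aeval (zetaP (p * l ^ r)) P) := by
    have hcl : c.Coprime l := hc.coprime_mul_left_right.coprime_dvd_right (dvd_pow_self l hr)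
    rw [hP c hc.coprime_mul_right_right, hP' c hc.coprime_mul_right_right, hP1, hP1']
    have hψc := gaussSum_pow_eq_or hl hr hp hf hψ hcl
    have hψc' := gaussSum_pow_eq_or hl hr hp hf hψ' hcl
    rw [inv_inv] at hψc'
    lia
  rw [← hP1, ← hP1', ← hT1, ← map_add, ← map_sub, ← map_mul]
  refine ⟨exists_int_aeval_eq_of_forall_coprime hz _ fun c hc => ?_,
    exists_int_aeval_eq_of_forall_coprime hz _ fun c hc => ?_⟩
  · rw [map_add, map_add]
    rcases hconj c hc with ⟨-, h1, h2⟩ | ⟨-, h1, h2⟩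
    · rw [h1, h2]
    · rw [h1, h2, add_comm]
  · rw [map_mul, map_mul, map_sub, map_sub, hT, hT1]
    rcases hconj c hc with ⟨h, h1, h2⟩ | ⟨h, h1, h2⟩
    · rw [h, h1, h2, Int.cast_one, one_mul]
    · rw [h, h1, h2, Int.cast_neg, Int.cast_one]
      ring

theorem exists_gaussSum_eq_pow_mul_half (hl3 : 3 < l) {e : ℕ}
    (he : f = 2 * e + classNumSqrtNeg l) (hF : Fintype.card F = p ^ f) (hψ : orderOf ψ = l ^ r) :
    ∃ a b : ℤ, 4 * (p : ℤ) ^ classNumSqrtNeg l = a ^ 2 + l * b ^ 2 ∧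
      gaussSum ψ (traceAddChar p F) = p ^ e * ((a + b * sqrtNeg l) / 2) := by
  set G := gaussSum ψ (traceAddChar p F)
  set G' := gaussSum ψ⁻¹ (traceAddChar p F) with hG'
  set τ := gaussSum (complexQuadraticChar (ZMod l)) ZMod.stdAddChar
  have hψ1 : ψ ≠ 1 := by
    rw [Ne, ← orderOf_eq_one_iff, hψ]
    exact (Nat.one_lt_pow hr (by lia)).ne'
  have hψm : ψ (-1) = 1 := MulChar.val_neg_one_eq_one_of_odd_order
    (Nat.odd_iff.2 (by lia) : Odd l).pow (hψ ▸ pow_orderOf_eq_one ψ)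
  have hpe : (p : ℂ) ^ e ≠ 0 := pow_ne_zero _ (Nat.cast_ne_zero.2 (NeZero.ne p))
  have hbound (j : ℕ) (hj : j.Coprime (l ^ r)) :=
    sum_pow_mul_mod_add_le hl hr hp hf hl3 he (hj.coprime_dvd_right (dvd_pow_self l hr))
  have hGint : IsIntegral ℤ (G / (p : ℂ) ^ e) := isIntegral_gaussSum_div_pow hF hψ1 (by rwa [hψ])
  have hG'int : IsIntegral ℤ (G' / (p : ℂ) ^ e) :=
    isIntegral_gaussSum_div_pow hF (inv_ne_one.2 hψ1) (by rwa [orderOf_inv, hψ])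
  obtain ⟨⟨s, hs⟩, d, hd⟩ := exists_int_gaussSum_add_inv_and_sub_inv_mul hl hr hp hf hl3
    (hψ ▸ pow_orderOf_eq_one ψ)
  have hnorm : G / (p : ℂ) ^ e * (G' / (p : ℂ) ^ e) = (p ^ classNumSqrtNeg l : ℤ) := by
    rw [div_mul_div_comm, hG', ← conj_gaussSum_of_apply_neg_one _ hψm,
      gaussSum_mul_conj_gaussSum isPrimitive_traceAddChar hψ1, hF, div_eq_iff (mul_ne_zero hpe hpe),
      he]
    push_cast
    ring
  have hτ : τ ^ 2 = -(l : ℂ) := gaussSum_complexQuadraticChar_sq hl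
  obtain ⟨a, b, hab, hG⟩ := exists_int_eq_half_of_sq_eq_neg hGint hG'int hτ (s := s / p ^ e)
    (d := d / p ^ e) (by push_cast; rw [← add_div, hs]) (by push_cast; rw [← hd]; ring) hnorm
  rw [div_eq_iff hpe, mul_comm] at hG
  rcases sq_eq_sq_iff_eq_or_eq_neg.1 (hτ.trans (sqrtNeg_sq l).symm) with h | h
  · exact ⟨a, b, hab, by rw [hG, h]⟩
  · exact ⟨a, -b, by rwa [neg_sq], by rw [hG, h]; push_cast; ring⟩

end IndexTwoGaussSum

section PolynomialCoefficients

theorem sum_eval_eq_neg_coeff {K : Type*} [Field K] [Fintype K] {P : K[X]}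
    (hP : P.natDegree ≤ Fintype.card K - 1) :
    ∑ x, P.eval x = -P.coeff (Fintype.card K - 1) := by
  classical
  have hpow : ∑ x : K, x ^ (Fintype.card K - 1) = -1 := by
    have hx (x : K) : x ^ (Fintype.card K - 1) = 1 - if x = 0 then 1 else 0 := by
      split_ifs with h
      · rw [h, zero_pow (Nat.sub_pos_of_lt Fintype.one_lt_card).ne', sub_self]
      · rw [FiniteField.pow_card_sub_one_eq_one x h, sub_zero]
    simp [hx]
  simp_rw [eval_eq_sum_range' (Nat.lt_succ_of_le hP)]
  rw [Finset.sum_comm, Finset.sum_range_succ, Finset.sum_eq_zero, zero_add, ← Finset.mul_sum, hpow,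
    mul_neg_one]
  intro i hi
  rw [← Finset.mul_sum, FiniteField.sum_pow_lt_card_sub_one _ _ (Finset.mem_range.1 hi), mul_zero]

theorem coeff_card_prod_of_coeff_zero {R ι : Type*} [CommRing R] {s : Finset ι} {Q : ι → R[X]}
    (h : ∀ i ∈ s, (Q i).coeff 0 = 0) :
    (∏ i ∈ s, Q i).coeff s.card = ∏ i ∈ s, (Q i).coeff 1 := by
  have hX (i : ι) (hi : i ∈ s) : Q i = X * (Q i).divX := by
    simpa [h i hi] using (X_mul_divX_add (Q i)).symm
  have hcoeff := coeff_X_pow_mul (∏ i ∈ s, (Q i).divX) s.card 0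
  rw [zero_add, coeff_zero_prod] at hcoeff
  rw [Finset.prod_congr rfl hX, Finset.prod_mul_distrib, Finset.prod_const, hcoeff]
  exact Finset.prod_congr rfl fun i _ => coeff_divX

variable {p : ℕ} [Fact p.Prime]

theorem coeff_taylor_one_eq_zero_of_cyclotomic_dvd {P : ℤ[X]} (hP : cyclotomic p ℤ ∣ P) {k : ℕ}
    (hk : k < p - 1) : (taylor 1 (P.map (Int.castRingHom (ZMod p)))).coeff k = 0 := by
  obtain ⟨W, rfl⟩ := hP
  have hcyc : cyclotomic p (ZMod p) = (X - 1) ^ (p - 1) := by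
    simpa using cyclotomic_mul_prime_eq_pow_of_not_dvd (ZMod p) (p := p) (n := 1)
      (Fact.out : p.Prime).not_dvd_one
  have hX : taylor (1 : ZMod p) ((X - 1) ^ (p - 1)) = X ^ (p - 1) := by simp [taylor_apply]
  rw [Polynomial.map_mul, map_cyclotomic, hcyc, taylor_mul, hX, coeff_X_pow_mul',
    if_neg hk.not_ge]

theorem coeff_prod_X_add_one_pow_sub {m : ℕ} (hm : m ≤ p) :
    (∏ k ∈ Finset.range m, ((X + 1 : (ZMod p)[X]) ^ (k + 1) - (X + 1) ^ (p - (k + 1)))).coeff m =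
      2 ^ m * (m.factorial : ZMod p) := by
  have hprod := coeff_card_prod_of_coeff_zero (s := Finset.range m)
    (Q := fun k => (X + 1 : (ZMod p)[X]) ^ (k + 1) - (X + 1) ^ (p - (k + 1)))
    fun k _ => by simp [coeff_X_add_one_pow]
  have hcoeff (k : ℕ) (hk : k ∈ Finset.range m) :
      ((X + 1 : (ZMod p)[X]) ^ (k + 1) - (X + 1) ^ (p - (k + 1))).coeff 1 =
        2 * ((k + 1 : ℕ) : ZMod p) := by
    rw [coeff_sub, coeff_X_add_one_pow, coeff_X_add_one_pow, Nat.choose_one_right,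
      Nat.choose_one_right, Nat.cast_sub ((Finset.mem_range.1 hk).trans_le hm),
      CharP.cast_eq_zero _ p]
    ring
  rw [Finset.card_range] at hprod
  rw [hprod, Finset.prod_congr rfl hcoeff, Finset.prod_mul_distrib, Finset.prod_const,
    Finset.card_range, ← Nat.cast_prod, Finset.prod_range_add_one_eq_factorial]

theorem sum_legendreSym_mul_choose_mul_factorial {m : ℕ} (hm : p = 2 * m + 1) :
    (∑ j ∈ Finset.range p, (legendreSym p j : ZMod p) * ((2 * j).choose m : ZMod p)) *
      m.factorial = -2 ^ m := by
  set D := (descPochhammer (ZMod p) m).comp (C 2 * X) with hD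
  have h2 : (2 : ZMod p) ≠ 0 := Ring.two_ne_zero (by rw [ZMod.ringChar_zmod_n]; lia)
  have hcard : Fintype.card (ZMod p) - 1 = m + m := by
    rw [ZMod.card]
    lia
  have hdeg : (X ^ m * D).natDegree ≤ m + m := by
    refine natDegree_mul_le.trans (add_le_add (natDegree_X_pow m).le (natDegree_comp_le.trans ?_))
    rw [descPochhammer_natDegree, natDegree_C_mul_X _ h2, mul_one]
  have hcoeff : (X ^ m * D).coeff (m + m) = 2 ^ m := by
    have hlead := (monic_descPochhammer (ZMod p) m).coeff_natDegree
    rw [descPochhammer_natDegree] at hlead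
    rw [coeff_X_pow_mul, hD, comp_C_mul_X_coeff, hlead, one_mul]
  rw [← hcoeff, ← hcard, ← sum_eval_eq_neg_coeff (hdeg.trans_eq hcard.symm), sum_zmod_eq_sum_range,
    Finset.sum_mul]
  refine Finset.sum_congr rfl fun j _ => ?_
  have hdesc := descPochhammer_eval_eq_descFactorial (ZMod p) (2 * j) m
  rw [eval_mul, eval_pow, eval_X, hD, eval_comp, eval_mul, eval_C, eval_X, legendreSym.eq_pow,
    show p / 2 = m by lia, Int.cast_natCast, ← Nat.cast_ofNat (R := ZMod p), ← Nat.cast_mul, hdesc,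
    Nat.descFactorial_eq_factorial_mul_choose]
  push_cast
  ring

theorem neg_one_pow_mul_factorial_sq {m : ℕ} (hm : p = 2 * m + 1) :
    (-1 : ZMod p) ^ m * (m.factorial : ZMod p) ^ 2 = -1 := by
  have hhalf : ∏ k ∈ Finset.range m, ((m : ZMod p) + 1 + k) = (-1) ^ m * m.factorial := by
    have hp : (2 * m + 1 : ZMod p) = 0 := by simpa [hm] using ZMod.natCast_self p
    rw [← Finset.prod_range_add_one_eq_factorial, ← Finset.prod_range_reflect, Nat.cast_prod,
      Finset.pow_eq_prod_const, ← Finset.prod_mul_distrib]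
    refine Finset.prod_congr rfl fun k hk => ?_
    rw [show m - 1 - k = m - (k + 1) by lia, Nat.cast_sub (Finset.mem_range.1 hk)]
    push_cast
    linear_combination hp
  refine Eq.trans ?_ (ZMod.wilsons_lemma p)
  rw [show p - 1 = m + m by lia, ← Nat.factorial_mul_ascFactorial, Nat.ascFactorial_eq_prod_range]
  push_cast
  rw [hhalf]
  ring

theorem intCast_mul_factorial_sq_of_cyclotomic_dvd {m : ℕ} (hm : p = 2 * m + 1) {ε : ℤ}
    (hdvd : cyclotomic p ℤ ∣ (∑ j ∈ Finset.range p, C (legendreSym p j) * X ^ (2 * j)) -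
      C ε * ∏ k ∈ Finset.range m, (X ^ (k + 1) - X ^ (p - (k + 1)))) :
    (ε : ZMod p) * (m.factorial : ZMod p) ^ 2 = -1 := by
  have h2 : (2 : ZMod p) ≠ 0 := Ring.two_ne_zero (by rw [ZMod.ringChar_zmod_n]; lia)
  have hp := (Fact.out : p.Prime).two_le
  have hcoeff := coeff_taylor_one_eq_zero_of_cyclotomic_dvd hdvd (k := m) (by lia)
  have htaylor : taylor 1 (((∑ j ∈ Finset.range p, C (legendreSym p j) * X ^ (2 * j)) -
      C ε * ∏ k ∈ Finset.range m, (X ^ (k + 1) - X ^ (p - (k + 1)))).map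
        (Int.castRingHom (ZMod p))) =
      (∑ j ∈ Finset.range p, C (legendreSym p j : ZMod p) * (X + 1) ^ (2 * j)) -
        C (ε : ZMod p) * ∏ k ∈ Finset.range m, ((X + 1) ^ (k + 1) - (X + 1) ^ (p - (k + 1))) := by
    simp [taylor_apply, Polynomial.map_sum, Polynomial.map_prod, Polynomial.sum_comp,
      Polynomial.prod_comp]
  rw [htaylor, coeff_sub, coeff_C_mul, coeff_prod_X_add_one_pow_sub (by lia), finsetSum_coeff,
    sub_eq_zero] at hcoeff
  simp only [coeff_C_mul, coeff_X_add_one_pow] at hcoeff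
  have hsum := sum_legendreSym_mul_choose_mul_factorial hm
  rw [hcoeff] at hsum
  exact mul_left_cancel₀ (pow_ne_zero m h2) (by linear_combination hsum)

theorem eq_neg_one_pow_of_cyclotomic_dvd {m : ℕ} (hm : p = 2 * m + 1) {ε : ℤ}
    (hε : ε = 1 ∨ ε = -1)
    (hdvd : cyclotomic p ℤ ∣ (∑ j ∈ Finset.range p, C (legendreSym p j) * X ^ (2 * j)) -
      C ε * ∏ k ∈ Finset.range m, (X ^ (k + 1) - X ^ (p - (k + 1)))) :
    ε = (-1) ^ m := by
  have hp := (Fact.out : p.Prime).two_le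
  have hfact := intCast_mul_factorial_sq_of_cyclotomic_dvd hm hdvd
  have hne : (m.factorial : ZMod p) ^ 2 ≠ 0 := fun h => by simp [h] at hfact
  have hcast : (ε : ZMod p) = (-1) ^ m :=
    mul_right_cancel₀ hne (hfact.trans (neg_one_pow_mul_factorial_sq hm).symm)
  have : Fact (2 < p) := ⟨by lia⟩
  have hneg : (-1 : ZMod p) ≠ 1 := ZMod.neg_one_ne_one
  rcases hε with rfl | rfl <;> rcases m.even_or_odd with h | h <;>
    simp_all [Odd.neg_one_pow, hneg.symm]

end PolynomialCoefficients

section SineProduct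

theorem norm_one_sub_zetaP_pow {n k : ℕ} (hk : k ≤ n) :
    ‖1 - zetaP n ^ k‖ = 2 * Real.sin (Real.pi * k / n) := by
  have hexp : zetaP n ^ k = exp (I * (2 * (Real.pi * k / n) : ℝ)) := by
    rw [zetaP, ← Complex.exp_nat_mul]
    congr 1
    push_cast
    ring
  rw [norm_sub_rev, hexp, norm_exp_I_mul_ofReal_sub_one, mul_div_cancel_left₀ _ two_ne_zero,
    Real.norm_of_nonneg]
  refine mul_nonneg zero_le_two (Real.sin_nonneg_of_nonneg_of_le_pi (by positivity) ?_)
  rw [mul_div_assoc]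
  exact mul_le_of_le_one_right Real.pi_pos.le
    (div_le_one_of_le₀ (Nat.cast_le.2 hk) (Nat.cast_nonneg n))

theorem prod_two_mul_sin {n : ℕ} (hn : n ≠ 0) :
    ∏ k ∈ Finset.range (n - 1), 2 * Real.sin (Real.pi * (k + 1 : ℕ) / n) = n := by
  have : NeZero n := ⟨hn⟩
  have hn1 : n - 1 + 1 = n := by lia
  have hprod := congrArg norm
    (IsPrimitiveRoot.prod_one_sub_pow_eq_order (hn1.symm ▸ isPrimitiveRoot_zetaP n))
  rw [norm_prod, ← Nat.cast_add_one, hn1, Complex.norm_natCast] at hprod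
  refine (Finset.prod_congr rfl fun k hk => (norm_one_sub_zetaP_pow ?_).symm).trans hprod
  have := Finset.mem_range.1 hk
  lia

theorem prod_two_mul_sin_eq_sqrt {n m : ℕ} (hn : n = 2 * m + 1) :
    ∏ k ∈ Finset.range m, 2 * Real.sin (Real.pi * (k + 1 : ℕ) / n) = Real.sqrt n := by
  have hn0 : (n : ℝ) ≠ 0 := by exact_mod_cast (by lia : n ≠ 0)
  have hhalf : ∏ k ∈ Finset.range m, 2 * Real.sin (Real.pi * (m + (m - 1 - k) + 1 : ℕ) / n) =
      ∏ k ∈ Finset.range m, 2 * Real.sin (Real.pi * (k + 1 : ℕ) / n) := by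
    refine Finset.prod_congr rfl fun k hk => ?_
    have := Finset.mem_range.1 hk
    rw [show m + (m - 1 - k) + 1 = n - (k + 1) by lia, Nat.cast_sub (by lia), mul_sub, sub_div,
      mul_div_cancel_right₀ _ hn0, Real.sin_pi_sub]
  have hsq := prod_two_mul_sin (n := n) (by lia)
  rw [show n - 1 = m + m by lia, Finset.prod_range_add,
    ← Finset.prod_range_reflect (fun k => 2 * Real.sin (Real.pi * (m + k + 1 : ℕ) / n)), hhalf]
    at hsq
  have hnonneg : 0 ≤ ∏ k ∈ Finset.range m, 2 * Real.sin (Real.pi * (k + 1 : ℕ) / n) := by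
    refine Finset.prod_nonneg fun k hk => ?_
    have := Finset.mem_range.1 hk
    rw [← norm_one_sub_zetaP_pow (by lia)]
    exact norm_nonneg _
  exact ((Real.sqrt_eq_iff_mul_self_eq (Nat.cast_nonneg n) hnonneg).2 hsq.symm).symm

theorem zetaP_pow_half_pow_sub {n m j : ℕ} (hn : n = 2 * m + 1) (hj : j ≤ n) :
    (zetaP n ^ (m + 1)) ^ j - (zetaP n ^ (m + 1)) ^ (n - j) =
      (-1) ^ j * I * (2 * Real.sin (Real.pi * j / n) : ℝ) := by
  have hn0 : (n : ℂ) ≠ 0 := by exact_mod_cast (by lia : n ≠ 0)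
  have : NeZero n := ⟨by lia⟩
  have hexp : zetaP n ^ (m + 1) = -exp (Real.pi / n * I) := by
    rw [zetaP, ← Complex.exp_nat_mul, ← neg_one_mul, ← Complex.exp_pi_mul_I, ← Complex.exp_add]
    congr 1
    have hcast : (n : ℂ) = 2 * m + 1 := by exact_mod_cast hn
    push_cast
    field_simp
    rw [hcast]
    ring
  have hpow : (zetaP n ^ (m + 1)) ^ j = (-1) ^ j * exp ((Real.pi * j / n : ℝ) * I) := by
    rw [hexp, neg_pow, ← Complex.exp_nat_mul]
    congr 2
    push_cast
    ring
  have hinv : (zetaP n ^ (m + 1)) ^ (n - j) = ((zetaP n ^ (m + 1)) ^ j)⁻¹ := by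
    refine eq_inv_of_mul_eq_one_left ?_
    rw [← pow_add, Nat.sub_add_cancel hj, pow_right_comm, (isPrimitiveRoot_zetaP n).pow_eq_one,
      one_pow]
  rw [hinv, hpow, mul_inv, ← Complex.exp_neg, ← inv_pow, inv_neg_one, Complex.ofReal_mul,
    Complex.ofReal_sin, Complex.ofReal_ofNat, Complex.two_sin, neg_mul]
  linear_combination (-1) ^ j * (exp ((Real.pi * j / n : ℝ) * I) -
    exp (-((Real.pi * j / n : ℝ) * I))) * I_mul_I

theorem prod_neg_one_pow_mul_I (m : ℕ) :
    ∏ k ∈ Finset.range (2 * m), (-1 : ℂ) ^ (k + 1) * I = 1 := by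
  induction m with
  | zero => simp
  | succ m ih =>
    rw [mul_add_one, Finset.prod_range_succ, Finset.prod_range_succ, ih, pow_succ, pow_succ,
      pow_succ, (even_two_mul m).neg_one_pow]
    linear_combination -I_mul_I

theorem prod_zetaP_pow_half_pow_sub {n m : ℕ} (hn : n = 2 * m + 1) :
    ∏ k ∈ Finset.range m, ((zetaP n ^ (m + 1)) ^ (k + 1) - (zetaP n ^ (m + 1)) ^ (n - (k + 1))) =
      (-1) ^ m * sqrtPStar n := by
  have hterm (k : ℕ) (hk : k ∈ Finset.range m) :=
    zetaP_pow_half_pow_sub (j := k + 1) hn (by have := Finset.mem_range.1 hk; lia)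
  rw [Finset.prod_congr rfl hterm, Finset.prod_mul_distrib, ← Complex.ofReal_prod,
    prod_two_mul_sin_eq_sqrt hn]
  rcases m.even_or_odd' with ⟨t, rfl | rfl⟩
  · rw [prod_neg_one_pow_mul_I, sqrtPStar, if_pos (by lia), (even_two_mul t).neg_one_pow]
  · rw [Finset.prod_range_succ, prod_neg_one_pow_mul_I, sqrtPStar, if_neg (by lia),
      (odd_two_mul_add_one t).neg_one_pow]
    ring

theorem sqrtPStar_sq {n m : ℕ} (hn : n = 2 * m + 1) : sqrtPStar n ^ 2 = (-1) ^ m * n := by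
  have hsqrt : (Real.sqrt n : ℂ) ^ 2 = n := by
    exact_mod_cast Real.sq_sqrt (Nat.cast_nonneg n)
  rcases m.even_or_odd' with ⟨t, rfl | rfl⟩
  · rw [sqrtPStar, if_pos (by lia), hsqrt, (even_two_mul t).neg_one_pow, one_mul]
  · rw [sqrtPStar, if_neg (by lia), mul_pow, hsqrt, I_sq, (odd_two_mul_add_one t).neg_one_pow,
      mul_comm]

end SineProduct

section QuadraticGaussSum

variable {p m : ℕ} [Fact p.Prime] (hm : p = 2 * m + 1)

include hm

theorem gaussSum_complexQuadraticChar_stdAddChar :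
    gaussSum (complexQuadraticChar (ZMod p)) ZMod.stdAddChar = sqrtPStar p := by
  have hprim : IsPrimitiveRoot (zetaP p ^ (m + 1)) p :=
    (isPrimitiveRoot_zetaP p).pow_of_coprime _ (by simp [hm, two_mul, add_assoc])
  have hchar : complexQuadraticChar (ZMod p) (-1) = (-1) ^ m := by
    rw [complexQuadraticChar_apply, quadraticChar_neg_one (by rw [ZMod.ringChar_zmod_n]; lia),
      ZMod.card, ZMod.χ₄_eq_neg_one_pow (by lia), show p / 2 = m by lia]
    push_cast
    rfl
  have hsq : gaussSum (complexQuadraticChar (ZMod p)) ZMod.stdAddChar ^ 2 =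
      ((-1) ^ m * sqrtPStar p) ^ 2 := by
    rw [gaussSum_sq (complexQuadraticChar_zmod_ne_one (by lia)) isQuadratic_complexQuadraticChar
      (ZMod.isPrimitive_stdAddChar p), ZMod.card, hchar, mul_pow, sqrtPStar_sq hm, ← pow_mul,
      (even_two.mul_left m).neg_one_pow, one_mul]
  obtain ⟨ε, hε, hG⟩ : ∃ ε : ℤ, (ε = 1 ∨ ε = -1) ∧
      gaussSum (complexQuadraticChar (ZMod p)) ZMod.stdAddChar = ε * ((-1) ^ m * sqrtPStar p) := by
    rcases sq_eq_sq_iff_eq_or_eq_neg.1 hsq with h | h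
    · exact ⟨1, .inl rfl, by simp [h]⟩
    · exact ⟨-1, .inr rfl, by simp [h]⟩
  have hdvd : cyclotomic p ℤ ∣ (∑ j ∈ Finset.range p, C (legendreSym p j) * X ^ (2 * j)) -
      C ε * ∏ k ∈ Finset.range m, (X ^ (k + 1) - X ^ (p - (k + 1))) := by
    rw [cyclotomic_eq_minpoly hprim (NeZero.pos p)]
    refine minpoly.isIntegrallyClosed_dvd (hprim.isIntegral (NeZero.pos p)) ?_
    have hpow (j : ℕ) : (zetaP p ^ (m + 1)) ^ (2 * j) = zetaP p ^ j := by
      rw [← pow_mul, show (m + 1) * (2 * j) = p * j + j by rw [hm]; ring, pow_add, pow_mul,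
        (isPrimitiveRoot_zetaP p).pow_eq_one, one_pow, one_mul]
    simp only [map_sub, map_sum, map_mul, map_prod, map_pow, aeval_X, eq_intCast, map_intCast, hpow,
      prod_zetaP_pow_half_pow_sub hm]
    rw [← hG, gaussSum, sum_zmod_eq_sum_range, sub_eq_zero]
    simp only [complexQuadraticChar_natCast, stdAddChar_natCast]
  rw [hG, eq_neg_one_pow_of_cyclotomic_dvd hm hε hdvd, ← mul_assoc]
  push_cast
  rw [← mul_pow, neg_one_mul, neg_neg, one_pow, one_mul]

end QuadraticGaussSum

section QuadraticGaussSumLift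

variable {K L ι : Type*} [Field K] [Field L] [Algebra K L] [Fintype ι] [DecidableEq ι]

theorem exists_sq_eq_algebraMap_discr [FiniteDimensional K L] [IsGalois K L]
    (v : Module.Basis ι K L) : ∃ δ, δ ^ 2 = algebraMap K L (Algebra.discr K v) := by
  have hcard : Fintype.card ι = Fintype.card Gal(L/K) := by
    rw [← Module.finrank_eq_card_basis v, Fintype.card_eq_nat_card,
      IsGalois.card_aut_eq_finrank]
  set M : Matrix ι ι L := .of fun i j => Fintype.equivOfCardEq hcard j (v i)
  refine ⟨M.det, ?_⟩
  rw [sq, ← congrArg (M.det * ·) M.det_transpose, ← Matrix.det_mul, Algebra.discr_def,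
    RingHom.map_det]
  congr 1
  ext i j
  rw [RingHom.mapMatrix_apply, Matrix.map_apply, Algebra.traceMatrix_apply,
    Algebra.traceForm_apply, trace_eq_sum_automorphisms, Matrix.mul_apply,
    ← (Fintype.equivOfCardEq hcard).sum_comp]
  exact Finset.sum_congr rfl fun k _ =>
    (map_mul (Fintype.equivOfCardEq hcard k) (v i) (v j)).symm

theorem isSquare_discr_of_odd_finrank [FiniteDimensional K L] [IsGalois K L]
    (hodd : Odd (Module.finrank K L)) (v : Module.Basis ι K L) :
    IsSquare (Algebra.discr K v) := by
  obtain ⟨δ, hδ⟩ := exists_sq_eq_algebraMap_discr v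
  obtain ⟨k, hk⟩ := hodd
  have hnorm := congrArg (Algebra.norm K) hδ
  rw [map_pow, Algebra.norm_algebraMap, hk] at hnorm
  have hne := Algebra.discr_not_zero_of_basis K v
  refine ⟨Algebra.norm K δ / Algebra.discr K v ^ k, ?_⟩
  field_simp
  rw [hnorm]
  ring

theorem discr_eq_prod_trace_sq {v : ι → L} (hv : (Algebra.traceForm K L).IsOrthoᵢ v) :
    Algebra.discr K v = ∏ i, Algebra.trace K L (v i ^ 2) := by
  have hdiag : Algebra.traceMatrix K v = Matrix.diagonal fun i => Algebra.trace K L (v i ^ 2) := by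
    ext i j
    rcases eq_or_ne i j with rfl | hij
    · rw [Algebra.traceMatrix_apply, Algebra.traceForm_apply, Matrix.diagonal_apply_eq, sq]
    · rw [Algebra.traceMatrix_apply, Matrix.diagonal_apply_ne _ hij]
      exact hv hij
  rw [Algebra.discr_def, hdiag, Matrix.det_diagonal]

omit [DecidableEq ι] in
theorem trace_sum_smul_sq {v : ι → L} (hv : (Algebra.traceForm K L).IsOrthoᵢ v) (t : ι → K) :
    Algebra.trace K L ((∑ i, t i • v i) ^ 2) = ∑ i, Algebra.trace K L (v i ^ 2) * t i ^ 2 := by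
  rw [sq, ← Algebra.traceForm_apply, LinearMap.BilinForm.sum_left]
  refine Finset.sum_congr rfl fun i _ => ?_
  rw [LinearMap.BilinForm.sum_right, Finset.sum_eq_single i]
  · simp only [map_smul, LinearMap.smul_apply, smul_eq_mul, Algebra.traceForm_apply, ← sq]
    ring
  · intro j _ hj
    have hij : Algebra.traceForm K L (v i) (v j) = 0 := hv hj.symm
    simp only [map_smul, LinearMap.smul_apply, hij, smul_zero]
  · exact fun h => absurd (Finset.mem_univ i) h

theorem addChar_map_sum {A M ι : Type*} [AddCommMonoid A] [CommMonoid M] (e : AddChar A M)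
    (s : Finset ι) (g : ι → A) : e (∑ i ∈ s, g i) = ∏ i ∈ s, e (g i) :=
  map_prod e.toMonoidHom (fun i => Multiplicative.ofAdd (g i)) s

theorem sum_addChar_mul_sq {F : Type*} [Field F] [Fintype F] [DecidableEq F]
    (hF : ringChar F ≠ 2) {e : AddChar F ℂ} (he : e.IsPrimitive) {d : F} (hd : d ≠ 0) :
    ∑ x, e (d * x ^ 2) =
      complexQuadraticChar F d * gaussSum (complexQuadraticChar F) e := by
  have hsum : ∑ x, e (d * x) = 0 := by
    simpa only [mul_comm, if_neg hd, Nat.cast_zero] using AddChar.sum_mulShift d he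
  have hshift := gaussSum_mulShift_eq (complexQuadraticChar F) e (Units.mk0 d hd)
  rw [isQuadratic_complexQuadraticChar.inv, Units.val_mk0] at hshift
  rw [sum_apply_sq_eq hF fun x => e (d * x), ← hshift]
  simp only [add_mul, one_mul, Finset.sum_add_distrib, hsum, add_zero, gaussSum,
    AddChar.mulShift_apply]

variable [Fintype K] [DecidableEq K] [Fintype L] [DecidableEq L]

theorem gaussSum_complexQuadraticChar_trace (hK : ringChar K ≠ 2) {e : AddChar K ℂ}
    (he : e.IsPrimitive) (hodd : Odd (Module.finrank K L)) :
    gaussSum (complexQuadraticChar L)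
        (e.compAddMonoidHom (Algebra.trace K L).toAddMonoidHom) =
      gaussSum (complexQuadraticChar K) e ^ Module.finrank K L := by
  have hL : ringChar L ≠ 2 := by rwa [← Algebra.ringChar_eq K L]
  have : Invertible (2 : K) := invertibleOfNonzero (Ring.two_ne_zero hK)
  obtain ⟨v, hv⟩ := LinearMap.BilinForm.exists_orthogonal_basis (B := Algebra.traceForm K L)
    ⟨(Algebra.traceForm_isSymm K).eq⟩
  have hdiscr := discr_eq_prod_trace_sq hv
  have hne (i) : Algebra.trace K L (v i ^ 2) ≠ 0 :=
    Finset.prod_ne_zero_iff.1 (hdiscr ▸ Algebra.discr_not_zero_of_basis K v) i (Finset.mem_univ i)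
  have hchar : complexQuadraticChar K (∏ i, Algebra.trace K L (v i ^ 2)) = 1 := by
    rw [← hdiscr, complexQuadraticChar_apply, (quadraticChar_one_iff_isSquare
      (Algebra.discr_not_zero_of_basis K v)).2 (isSquare_discr_of_odd_finrank hodd v), Int.cast_one]
  have hprim : (e.compAddMonoidHom (Algebra.trace K L).toAddMonoidHom).IsPrimitive := by
    refine AddChar.IsPrimitive.of_ne_one fun h => he one_ne_zero ?_
    rw [AddChar.mulShift_one]
    ext x
    obtain ⟨y, rfl⟩ := Algebra.trace_surjective K L x
    exact DFunLike.congr_fun h y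
  have hone := sum_addChar_mul_sq hL hprim one_ne_zero
  simp only [one_mul, map_one] at hone
  rw [← hone, ← v.equivFun.symm.toEquiv.sum_comp]
  simp only [LinearEquiv.coe_toEquiv, Module.Basis.equivFun_symm_apply,
    AddChar.compAddMonoidHom_apply, LinearMap.toAddMonoidHom_coe, trace_sum_smul_sq hv,
    addChar_map_sum]
  rw [← Fintype.prod_sum fun i x => e (Algebra.trace K L (v i ^ 2) * x ^ 2),
    Finset.prod_congr rfl fun i _ => sum_addChar_mul_sq hK he (hne i), Finset.prod_mul_distrib,
    ← map_prod, hchar, one_mul, Finset.prod_const, Finset.card_univ, Fintype.card_fin]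

theorem gaussSum_complexQuadraticChar_traceAddChar {p f : ℕ} [Fact p.Prime] [Algebra (ZMod p) L]
    (hp : Odd p) (hf : Odd f) (hL : Fintype.card L = p ^ f) :
    gaussSum (complexQuadraticChar L) (traceAddChar p L) = sqrtPStar p ^ f := by
  obtain ⟨m, hm⟩ := hp
  have hfin : Module.finrank (ZMod p) L = f := by
    have hcard := Module.card_eq_pow_finrank (K := ZMod p) (V := L)
    rw [hL, ZMod.card] at hcard
    exact (Nat.pow_right_injective (Fact.out : p.Prime).two_le hcard).symm
  have htrace : traceAddChar p L =
      ZMod.stdAddChar.compAddMonoidHom (Algebra.trace (ZMod p) L).toAddMonoidHom := by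
    ext x
    rw [traceAddChar_apply, ← stdAddChar_natCast, ZMod.natCast_zmod_val]
    rfl
  rw [htrace, gaussSum_complexQuadraticChar_trace (by rw [ZMod.ringChar_zmod_n]; lia)
    (ZMod.isPrimitive_stdAddChar p) (hfin ▸ hf), gaussSum_complexQuadraticChar_stdAddChar hm, hfin]

end QuadraticGaussSumLift

section OddPart

theorem orderOf_pow_add_one_of_orderOf_eq_two_mul {G : Type*} [Monoid G] {x : G} {n : ℕ}
    (hn : Odd n) (hx : orderOf x = 2 * n) : orderOf (x ^ (n + 1)) = n := by
  obtain ⟨t, rfl⟩ := hn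
  rw [orderOf_pow' x (n := 2 * t + 1 + 1) (by lia), hx, show 2 * t + 1 + 1 = 2 * (t + 1) by ring,
    Nat.gcd_mul_left, show 2 * t + 1 = t + 1 + t by ring, Nat.gcd_comm, Nat.gcd_self_add_right]
  simp

theorem pow_add_one_mul_complexQuadraticChar {F : Type*} [Field F] [Fintype F] [DecidableEq F]
    (hF : ringChar F ≠ 2) {χ : MulChar F ℂ} {n : ℕ} (hn : n ≠ 0) (hχ : orderOf χ = 2 * n) :
    χ ^ (n + 1) * complexQuadraticChar F = χ := by
  have hquad : χ ^ n = complexQuadraticChar F :=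
    eq_complexQuadraticChar_of_orderOf_eq_two hF <| by
      rw [orderOf_pow_of_dvd hn (hχ ▸ dvd_mul_left n 2), hχ,
        Nat.mul_div_cancel _ (Nat.pos_of_ne_zero hn)]
  rw [← hquad, ← pow_add, show n + 1 + n = 2 * n + 1 by ring, ← hχ, pow_succ, pow_orderOf_eq_one,
    one_mul]

theorem exists_eq_mul_complexQuadraticChar_of_orderOf_eq_two_mul {F : Type*} [Field F] [Fintype F]
    [DecidableEq F] (hF : ringChar F ≠ 2) {χ : MulChar F ℂ} {n : ℕ} (hn : Odd n)
    (hχ : orderOf χ = 2 * n) : ∃ ψ : MulChar F ℂ, orderOf ψ = n ∧ χ = ψ * complexQuadraticChar F :=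
  ⟨χ ^ (n + 1), orderOf_pow_add_one_of_orderOf_eq_two_mul hn hχ,
    (pow_add_one_mul_complexQuadraticChar hF hn.pos.ne' hχ).symm⟩

theorem orderOf_natCast_zmod_two_mul {p n : ℕ} (hp : Odd p) (hn : Odd n) :
    orderOf (p : ZMod (2 * n)) = orderOf (p : ZMod n) := by
  refine orderOf_eq_orderOf_iff.2 fun k => ?_
  have hmod (M : ℕ) : (p : ZMod M) ^ k = 1 ↔ p ^ k ≡ 1 [MOD M] := by
    rw [← ZMod.natCast_eq_natCast_iff, Nat.cast_pow, Nat.cast_one]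
  rw [hmod, hmod, ← Nat.modEq_and_modEq_iff_modEq_mul (Nat.coprime_two_left.2 hn)]
  exact and_iff_right (Nat.odd_iff.1 hp.pow)

end OddPart

section Parity

theorem half_pow_mul_sub_one_modEq {l g : ℕ} (hl : l % 4 = 3) (hg : Odd g) (k : ℕ) :
    (l ^ k * g - 1) / 2 ≡ (g - 1) / 2 + k [MOD 2] := by
  induction k with
  | zero => rw [pow_zero, one_mul, add_zero]
  | succ k ih =>
    have hodd : l ^ k * g % 2 = 1 :=
      Nat.odd_iff.1 (((Nat.odd_iff.2 (by lia) : Odd l).pow).mul hg)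
    have hmod : l ^ (k + 1) * g % 4 = 3 * (l ^ k * g % 4) % 4 := by
      rw [pow_succ', mul_assoc, Nat.mul_mod, hl]
    rw [Nat.ModEq] at ih ⊢
    lia

theorem sqrtPStar_pow {p f k : ℕ} (hp : Odd p) (hf : Odd f) (hk : (f - 1) / 2 ≡ k [MOD 2]) :
    sqrtPStar p ^ f = (-1) ^ (k * ((p - 1) / 2)) * sqrtPStar p * (p : ℂ) ^ ((f - 1) / 2) := by
  obtain ⟨m, hm⟩ := hp
  obtain ⟨g, rfl⟩ := hf
  rw [show (2 * g + 1 - 1) / 2 = g by lia] at hk ⊢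
  have hsign : ((-1 : ℂ) ^ m) ^ g = (-1) ^ (k * m) := by
    rw [← pow_mul, mul_comm, neg_one_pow_eq_pow_mod_two, hk.mul_right m,
      ← neg_one_pow_eq_pow_mod_two]
  rw [pow_succ, pow_mul, sqrtPStar_sq hm, mul_pow, hsign, show (p - 1) / 2 = m by lia]
  ring

end Parity

section IndexTwoTwicePrimePow

variable {l r f : ℕ} [Fact l.Prime] (hr : r ≠ 0) (hf : 2 * f = (l ^ r).totient)

include hr hf

theorem half_sub_one_modEq (hl : l % 4 = 3) : (f - 1) / 2 ≡ r + (l + 1) / 4 [MOD 2] := by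
  have hmod := half_pow_mul_sub_one_modEq hl (g := (l - 1) / 2) (Nat.odd_iff.2 (by lia)) (r - 1)
  rw [← eq_pow_mul_half_of_two_mul_eq_totient_pow (Nat.odd_iff.2 (by lia)) hf hr] at hmod
  obtain ⟨t, rfl⟩ : ∃ t, l = 4 * t + 3 := ⟨l / 4, by lia⟩
  rw [show ((4 * t + 3 - 1) / 2 - 1) / 2 = t by lia] at hmod
  rw [show (4 * t + 3 + 1) / 4 = t + 1 by lia]
  rw [Nat.ModEq] at hmod ⊢
  lia

theorem half_sub_one_modEq_of_mod_eight_eq_seven (hl : l % 8 = 7) : (f - 1) / 2 ≡ r [MOD 2] := by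
  have h := half_sub_one_modEq hr hf (by lia)
  rw [Nat.ModEq] at h ⊢
  lia

theorem half_sub_one_modEq_of_mod_eight_eq_three (hl : l % 8 = 3) :
    (f - 1) / 2 ≡ r + 1 [MOD 2] := by
  have h := half_sub_one_modEq hr hf (by lia)
  rw [Nat.ModEq] at h ⊢
  lia

theorem exists_eq_two_mul_add_classNumSqrtNeg (hl : l % 4 = 3) (hl3 : 3 < l) :
    ∃ e, f = 2 * e + classNumSqrtNeg l := by
  obtain ⟨a, ha⟩ := odd_of_two_mul_eq_totient_pow hl hf hr
  obtain ⟨b, hb⟩ := odd_classNumSqrtNeg hl hl3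
  have hbound := two_mul_classNumSqrtNeg_le hl hl3
  have hle : (l - 1) / 2 ≤ f := by
    rw [eq_pow_mul_half_of_two_mul_eq_totient_pow (Nat.odd_iff.2 (by lia)) hf hr]
    exact Nat.le_mul_of_pos_left _ (pow_pos (by lia) _)
  exact ⟨a - b, by lia⟩

end IndexTwoTwicePrimePow

section ExponentArithmetic

theorem zpow_half_sub_eq_div {x : ℂ} (hx : x ≠ 0) {f : ℕ} (hf : f ≠ 0) (h : ℕ) :
    x ^ (((f : ℤ) - 1) / 2 - (h : ℤ)) = x ^ ((f - 1) / 2) / x ^ h := by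
  rw [show ((f : ℤ) - 1) / 2 = ((f - 1) / 2 : ℕ) by lia, zpow_sub₀ hx, zpow_natCast, zpow_natCast]

theorem two_mul_eq_totient_of_eq_totient_two_mul_div {n f : ℕ} (hn : Odd n) (hn2 : 2 < n)
    (hf : f = (2 * n).totient / 2) : 2 * f = n.totient := by
  rw [hf, Nat.totient_two_mul_of_odd hn, Nat.mul_div_cancel' (Nat.totient_even hn2).two_dvd]

end ExponentArithmetic

section SignNormalization

variable {l : ℕ} [Fact l.Prime]

theorem modEq_or_neg_modEq_of_four_mul_pow_eq {p h : ℕ} (hl : l % 4 = 3) (hh : Odd h)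
    (hp : legendreSym l p = 1) {a b : ℤ} (hab : 4 * (p : ℤ) ^ h = a ^ 2 + l * b ^ 2) :
    a ≡ -2 * (p : ℤ) ^ ((l - 1 + 2 * h) / 4) [ZMOD l] ∨
      -a ≡ -2 * (p : ℤ) ^ ((l - 1 + 2 * h) / 4) [ZMOD l] := by
  obtain ⟨k, rfl⟩ := hh
  have heuler : (p : ZMod l) ^ (l / 2) = 1 := by
    have := legendreSym.eq_pow l p
    rw [hp] at this
    exact_mod_cast this.symm
  have hsq : (a : ZMod l) ^ 2 = (2 * (p : ZMod l) ^ ((l - 1 + 2 * (2 * k + 1)) / 4)) ^ 2 := by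
    have hab' := congrArg (Int.cast : ℤ → ZMod l) hab
    push_cast at hab'
    rw [CharP.cast_eq_zero (ZMod l) l] at hab'
    rw [mul_pow, ← pow_mul, show (l - 1 + 2 * (2 * k + 1)) / 4 * 2 = l / 2 + (2 * k + 1) by lia,
      pow_add, heuler]
    linear_combination -hab'
  simp only [← ZMod.intCast_eq_intCast_iff]
  push_cast
  rcases sq_eq_sq_iff_eq_or_eq_neg.1 hsq with h | h
  · exact Or.inr (by rw [h, neg_mul])
  · exact Or.inl (by rw [h, neg_mul])

theorem legendreSym_two_of_mod_eight_eq_seven (hl : l % 8 = 7) : legendreSym l 2 = 1 := by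
  rw [legendreSym.at_two (by lia), ZMod.χ₈_nat_eq_if_mod_eight]
  lia

theorem legendreSym_two_of_mod_eight_eq_three (hl : l % 8 = 3) : legendreSym l 2 = -1 := by
  rw [legendreSym.at_two (by lia), ZMod.χ₈_nat_eq_if_mod_eight]
  lia

theorem half_add_mul_half_sub_sqrtNeg {m : ℕ} {q a b : ℤ} (h : 4 * q = a ^ 2 + m * b ^ 2) :
    ((a : ℂ) + b * sqrtNeg m) / 2 * (((a : ℂ) - b * sqrtNeg m) / 2) = q := by
  have h' := congrArg (Int.cast : ℤ → ℂ) h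
  push_cast at h'
  linear_combination (-1 / 4 : ℂ) * h' - (b : ℂ) ^ 2 / 4 * sqrtNeg_sq m

end SignNormalization

section TwicePrimePow

theorem ringChar_ne_two_of_odd {p : ℕ} [Fact p.Prime] (hp : Odd p) {F : Type*} [Field F]
    [Algebra (ZMod p) F] : ringChar F ≠ 2 := by
  have : CharP F p := charP_of_injective_algebraMap (algebraMap (ZMod p) F).injective p
  rw [ringChar.eq F p]
  exact hp.ne_two_of_dvd_nat dvd_rfl

variable {l r f p : ℕ} [Fact l.Prime] (hl3 : 3 < l) (hr : r ≠ 0)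
  [Fact p.Prime] (hp2 : Odd p) (hp : orderOf (p : ZMod (l ^ r)) = f)
  (hf : 2 * f = (l ^ r).totient) {F : Type*} [Field F] [Fintype F] [DecidableEq F]
  [Algebra (ZMod p) F] (hF : Fintype.card F = p ^ f) {ψ : MulChar F ℂ} (hψ : orderOf ψ = l ^ r)

include hl3 hr hp2 hp hf hF hψ

theorem gaussSum_mul_complexQuadraticChar_mul_gaussSum_of_orderOf_eq_pow (hl : l % 4 = 3) :
    gaussSum (ψ * complexQuadraticChar F) (traceAddChar p F) * gaussSum ψ (traceAddChar p F) =
      sqrtPStar p ^ f * gaussSum (ψ ^ 2) (traceAddChar p F) := by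
  have hl0 : 2 < l ^ r := (by lia : 2 < l).trans_le (Nat.le_self_pow hr l)
  have hsq : ψ ^ 2 ≠ 1 := fun h => by
    have := Nat.le_of_dvd two_pos (orderOf_dvd_of_pow_eq_one h)
    lia
  have h4 : ψ 4 = 1 := by
    exact_mod_cast apply_natCast_eq_one_of_coprime hl hr hp hf hl3 (hψ ▸ pow_orderOf_eq_one ψ)
      (c := 2 ^ 2) ((Nat.coprime_two_left.2 hp2).pow_left 2)
  have hne : ψ * complexQuadraticChar F ≠ 1 := fun h => hsq <| by
    have hquad : complexQuadraticChar F ^ 2 = 1 := isQuadratic_complexQuadraticChar.sq_eq_one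
    rw [← mul_one (ψ ^ 2), ← hquad, ← mul_pow, h, one_pow, hquad]
  rw [gaussSum_mul_complexQuadraticChar_mul_gaussSum (ringChar_ne_two_of_odd hp2)
      isPrimitive_traceAddChar hsq hne h4,
    gaussSum_complexQuadraticChar_traceAddChar hp2 (odd_of_two_mul_eq_totient_pow hl hf hr) hF]

theorem gaussSum_mul_complexQuadraticChar_of_mod_eight_eq_seven (hl : l % 8 = 7) :
    gaussSum (ψ * complexQuadraticChar F) (traceAddChar p F) = sqrtPStar p ^ f := by
  have hmul := gaussSum_mul_complexQuadraticChar_mul_gaussSum_of_orderOf_eq_pow hl3 hr hp2 hp hf hF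
    hψ (by lia)
  have htwo : legendreSym l (2 : ℕ) = 1 := legendreSym_two_of_mod_eight_eq_seven hl
  have hψ1 : ψ ≠ 1 := by
    rw [Ne, ← orderOf_eq_one_iff, hψ]
    exact (Nat.one_lt_pow hr (by lia)).ne'
  obtain ⟨-, hsq⟩ | ⟨hneg, -⟩ := gaussSum_pow_eq_or (by lia) hr hp hf
    (hψ ▸ pow_orderOf_eq_one ψ) (c := 2) (Nat.coprime_two_left.2 (Nat.odd_iff.2 (by lia)))
  · rw [hsq] at hmul
    exact mul_right_cancel₀
      (gaussSum_ne_zero_of_nontrivial (by simp) hψ1 isPrimitive_traceAddChar) hmul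
  · lia

theorem gaussSum_mul_complexQuadraticChar_mul_gaussSum_of_mod_eight_eq_three (hl : l % 8 = 3) :
    gaussSum (ψ * complexQuadraticChar F) (traceAddChar p F) * gaussSum ψ (traceAddChar p F) =
      sqrtPStar p ^ f * starRingEnd ℂ (gaussSum ψ (traceAddChar p F)) := by
  have hpow : ψ ^ l ^ r = 1 := hψ ▸ pow_orderOf_eq_one ψ
  have hneg : ψ (-1) = 1 :=
    MulChar.val_neg_one_eq_one_of_odd_order (Nat.odd_iff.2 (by lia) : Odd l).pow hpow
  have htwo : legendreSym l (2 : ℕ) = -1 := legendreSym_two_of_mod_eight_eq_three hl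
  rw [gaussSum_mul_complexQuadraticChar_mul_gaussSum_of_orderOf_eq_pow hl3 hr hp2 hp hf hF
    hψ (by lia), conj_gaussSum_of_apply_neg_one _ hneg]
  obtain ⟨hone, -⟩ | ⟨-, hsq⟩ := gaussSum_pow_eq_or (by lia) hr hp hf hpow (c := 2)
    (Nat.coprime_two_left.2 (Nat.odd_iff.2 (by lia)))
  · lia
  · rw [hsq]

theorem exists_gaussSum_mul_complexQuadraticChar_eq_of_mod_eight_eq_three (hl : l % 8 = 3) :
    ∃ a b : ℤ, 4 * (p : ℤ) ^ classNumSqrtNeg l = a ^ 2 + l * b ^ 2 ∧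
      gaussSum (ψ * complexQuadraticChar F) (traceAddChar p F) =
        sqrtPStar p ^ f * (((a + b * sqrtNeg l) / 2) ^ 2 / (p : ℂ) ^ classNumSqrtNeg l) := by
  have hl4 : l % 4 = 3 := by lia
  obtain ⟨e, he⟩ := exists_eq_two_mul_add_classNumSqrtNeg hr hf hl4 hl3
  obtain ⟨a, b, hab, hG⟩ := exists_gaussSum_eq_pow_mul_half hl4 hr hp hf hl3 he hF hψ
  have hmul := gaussSum_mul_complexQuadraticChar_mul_gaussSum_of_mod_eight_eq_three hl3 hr hp2 hp
    hf hF hψ hl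
  have hnorm := half_add_mul_half_sub_sqrtNeg hab
  have hp0 : (p : ℂ) ≠ 0 := Nat.cast_ne_zero.2 (NeZero.ne p)
  have hconj : starRingEnd ℂ (gaussSum ψ (traceAddChar p F)) =
      (p : ℂ) ^ e * ((a - b * sqrtNeg l) / 2) := by
    have hs := conj_eq_neg_of_sq_eq_neg (NeZero.ne l) (sqrtNeg_sq l)
    simp only [hG, map_mul, map_pow, map_div₀, map_add, map_natCast, map_intCast, map_ofNat, hs]
    ring
  rw [hconj, hG] at hmul
  rw [Int.cast_pow, Int.cast_natCast] at hnorm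
  obtain ⟨hu, hw⟩ := mul_ne_zero_iff.1 (hnorm ▸ pow_ne_zero (classNumSqrtNeg l) hp0)
  refine ⟨a, -b, by rwa [neg_sq], mul_right_cancel₀ (mul_ne_zero (pow_ne_zero e hp0) hu) ?_⟩
  rw [hmul, ← hnorm, Int.cast_neg, neg_mul, ← sub_eq_add_neg]
  generalize ((a : ℂ) + b * sqrtNeg l) / 2 = u at hu ⊢
  generalize ((a : ℂ) - b * sqrtNeg l) / 2 = w at hw ⊢
  field_simp

theorem exists_modEq_and_gaussSum_mul_complexQuadraticChar_eq_of_mod_eight_eq_three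
    (hl : l % 8 = 3) :
    ∃ a b : ℤ, 4 * (p : ℤ) ^ classNumSqrtNeg l = a ^ 2 + l * b ^ 2 ∧
      a ≡ -2 * (p : ℤ) ^ ((l - 1 + 2 * classNumSqrtNeg l) / 4) [ZMOD l] ∧
      gaussSum (ψ * complexQuadraticChar F) (traceAddChar p F) =
        sqrtPStar p ^ f * (((a + b * sqrtNeg l) / 2) ^ 2 / (p : ℂ) ^ classNumSqrtNeg l) := by
  have hl4 : l % 4 = 3 := by lia
  have hlp : legendreSym l p = 1 :=
    legendreSym_eq_one_of_pow_eq_one hr (odd_of_two_mul_eq_totient_pow hl4 hf hr)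
      (by rw [Int.cast_natCast, ← hp, pow_orderOf_eq_one])
  obtain ⟨a, b, hab, hG⟩ := exists_gaussSum_mul_complexQuadraticChar_eq_of_mod_eight_eq_three
    hl3 hr hp2 hp hf hF hψ hl
  rcases modEq_or_neg_modEq_of_four_mul_pow_eq hl4 (odd_classNumSqrtNeg hl4 hl3) hlp hab with h | h
  · exact ⟨a, b, hab, h, hG⟩
  · refine ⟨-a, -b, by rwa [neg_sq, neg_sq], h, ?_⟩
    rw [hG]
    push_cast
    ring

end TwicePrimePow

theorem statement8 (p l r N f : ℕ) (hp : p.Prime) (hl : l.Prime) (hl4 : l % 4 = 3)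
    (hl3 : 3 < l) (hr : 1 ≤ r) (hN : N = 2 * l ^ r) (hNp : Nat.gcd N p = 1)
    (hf : orderOf (p : ZMod N) = f) (hind : f = Nat.totient N / 2)
    (F : Type) [Field F] [Fintype F] [Algebra (ZMod p) F]
    (hcard : Fintype.card F = p ^ f)
    (χ : MulChar F ℂ) (hχord : orderOf χ = N) :
    (l % 8 = 7 →
      gaussSumN p χ 1 =
        (-1 : ℂ) ^ (r * ((p - 1) / 2)) * sqrtPStar p * (p : ℂ) ^ (((f - 1) / 2 : ℕ))) ∧
    (l % 8 = 3 →
      ∃ a b : ℤ,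
        4 * (p : ℤ) ^ classNumSqrtNeg l = a ^ 2 + (l : ℤ) * b ^ 2 ∧
        a ≡ -2 * (p : ℤ) ^ ((l - 1 + 2 * classNumSqrtNeg l) / 4) [ZMOD (l : ℤ)] ∧
        gaussSumN p χ 1 =
          (-1 : ℂ) ^ ((r + 1) * ((p - 1) / 2)) * sqrtPStar p *
            (p : ℂ) ^ (((f : ℤ) - 1) / 2 - (classNumSqrtNeg l : ℤ)) *
            (((a : ℂ) + (b : ℂ) * sqrtNeg l) / 2) ^ 2) := by
  classical
  have := Fact.mk hp
  have := Fact.mk hl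
  subst hN
  have hr0 : r ≠ 0 := by lia
  have hlodd : Odd (l ^ r) := (Nat.odd_iff.2 (by lia) : Odd l).pow
  have hp2 : Odd p := Nat.coprime_two_left.1 (Nat.Coprime.coprime_mul_right hNp)
  rw [orderOf_natCast_zmod_two_mul hp2 hlodd] at hf
  have htot : 2 * f = (l ^ r).totient := two_mul_eq_totient_of_eq_totient_two_mul_div hlodd
    ((by lia : 2 < l).trans_le (Nat.le_self_pow hr0 l)) hind
  have hfodd := odd_of_two_mul_eq_totient_pow hl4 htot hr0
  obtain ⟨ψ, hψ, rfl⟩ := exists_eq_mul_complexQuadraticChar_of_orderOf_eq_two_mul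
    (ringChar_ne_two_of_odd hp2) hlodd hχord
  rw [gaussSumN_one]
  refine ⟨fun h7 => ?_, fun h3 => ?_⟩
  · rw [gaussSum_mul_complexQuadraticChar_of_mod_eight_eq_seven hl3 hr0 hp2 hf htot hcard hψ h7,
      sqrtPStar_pow hp2 hfodd (half_sub_one_modEq_of_mod_eight_eq_seven hr0 htot h7)]
  · obtain ⟨a, b, hab, hmod, hG⟩ :=
      exists_modEq_and_gaussSum_mul_complexQuadraticChar_eq_of_mod_eight_eq_three
        hl3 hr0 hp2 hf htot hcard hψ h3
    refine ⟨a, b, hab, hmod, ?_⟩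
    rw [hG, sqrtPStar_pow hp2 hfodd (half_sub_one_modEq_of_mod_eight_eq_three hr0 htot h3),
      zpow_half_sub_eq_div (Nat.cast_ne_zero.2 hp.ne_zero) hfodd.pos.ne']
    ring
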